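/- arXiv:1709.06945 — 5 statements merged into one kernel-verified Lean document; each statement's English description precedes it below -/
import Mathlib

section
/- Let k be an algebraically closed field of characteristic zero and let B = ⊕_{m≥0} B_m be an approximable graded algebra over k. Then the homogeneous fraction field K^hom(B) is a finitely generated field extension of k, and its transcendence degree over k equals the dimension d(B) of B. -/
open Filter

/-- A graded algebra over a field `k`, presented as a family of `k`-subspaces
`ℬ m` of a commutative domain `A` (the pieces of the grading), is *approximable* if:
(0) `ℬ 0 = k` and the family is multiplicative (so `⊕ ℬ m` is a graded algebra,
    which is an integral domain since `A` is);
(1) every graded piece is finite dimensional over `k`;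
(2) `ℬ m ≠ 0` for all sufficiently large `m`;
(3) for every `ε > 0` there is `p₀` such that for all `p ≥ p₀`,
    `liminf_n dim (S^n(ℬ p)) / dim (ℬ (n p)) > 1 - ε`, where `S^n(ℬ p) = (ℬ p)^n`
    is the image of `Sym^n (ℬ p) → ℬ (n p)`. -/
def IsApproximable (k : Type*) {A : Type*} [Field k] [CommRing A] [IsDomain A]
    [Algebra k A] (ℬ : ℕ → Submodule k A) : Prop :=
  ℬ 0 = 1 ∧
  (∀ m n : ℕ, ℬ m * ℬ n ≤ ℬ (m + n)) ∧
  (∀ m : ℕ, FiniteDimensional k (ℬ m)) ∧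
  (∀ᶠ m in atTop, ℬ m ≠ ⊥) ∧
  (∀ ε : ℝ, 0 < ε → ∃ p₀ : ℕ, ∀ p ≥ p₀,
    1 - ε < liminf (fun n : ℕ =>
      (Module.finrank k ((ℬ p) ^ n : Submodule k A) : ℝ) /
        (Module.finrank k (ℬ (n * p)) : ℝ)) atTop)


/-- The homogeneous fraction field `K^hom(B)` of a graded algebra `B = ⊕ ℬ m ⊆ A`,
viewed inside a fraction field `F` of `A`: the subfield of `F` generated over `k` by all
fractions `b₁ / b₂` with `b₁, b₂ ∈ ℬ m` for some common `m` and `b₂ ≠ 0`. -/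
noncomputable def homogeneousFractionField (k : Type*) {A F : Type*} [Field k] [CommRing A]
    [IsDomain A] [Algebra k A] [Field F] [Algebra A F] [IsFractionRing A F] [Algebra k F]
    [IsScalarTower k A F] (ℬ : ℕ → Submodule k A) : IntermediateField k F :=
  IntermediateField.adjoin k
    {x : F | ∃ m : ℕ, ∃ b₁ ∈ ℬ m, ∃ b₂ ∈ ℬ m, b₂ ≠ 0 ∧
      x = algebraMap A F b₁ / algebraMap A F b₂}


theorem ringKrullDim_eq_of_integral_inj {R S : Type*} [CommRing R] [CommRing S] [Algebra R S]
    [Algebra.IsIntegral R S] (hinj : Function.Injective (algebraMap R S)) :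
    ringKrullDim R = ringKrullDim S := by
  have : FaithfulSMul R S := (faithfulSMul_iff_algebraMap_injective R S).mpr hinj
  apply le_antisymm
  · refine iSup_le fun l => ?_
    obtain ⟨Q, hQ⟩ := (Ideal.nonempty_primesOver (S := S) l.head.asIdeal)
    have := hQ.1
    have := hQ.2
    obtain ⟨L, hL, -⟩ := Ideal.exists_ltSeries_of_hasGoingUp l Q
    rw [← hL]
    exact le_iSup (fun p : LTSeries (PrimeSpectrum S) => (p.length : WithBot ℕ∞)) L
  · refine Order.krullDim_le_of_strictMono (PrimeSpectrum.comap (algebraMap R S)) ?_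
    intro I J h
    exact Ideal.IsIntegral.comap_lt_comap (R := R) (I := I.asIdeal) (J := J.asIdeal) h

theorem trdeg_eq_of_ringKrullDim_eq (k R : Type*) [Field k] [CommRing R] [IsDomain R] [Algebra k R]
    [Algebra.FiniteType k R] (a : ℕ) (h : ringKrullDim R = a) : Algebra.trdeg k R = a := by
  obtain ⟨s, g, hg, hi⟩ := exists_integral_inj_algHom_of_fg k R
  algebraize [g.toRingHom]
  have hinj : Function.Injective (algebraMap (MvPolynomial (Fin s) k) R) := hg
  have : FaithfulSMul (MvPolynomial (Fin s) k) R := (faithfulSMul_iff_algebraMap_injective _ R).mpr hinj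
  have h1 := ringKrullDim_eq_of_integral_inj hinj
  rw [MvPolynomial.ringKrullDim_of_isNoetherianRing, h, ringKrullDim_eq_zero_of_field] at h1
  have hs : s = a := by
    simp at h1
    exact_mod_cast h1
  have h2 := lift_trdeg_add_eq k (MvPolynomial (Fin s) k) R
  rw [trdeg_eq_zero (R := MvPolynomial (Fin s) k) (A := R),
    MvPolynomial.trdeg_of_isDomain] at h2
  simp [hs] at h2
  exact h2.symm


theorem exists_finrank_pow_le {k A : Type*} [Field k] [CommRing A] [Algebra k A]
    (V : Submodule k A) [hV : FiniteDimensional k V] :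
    ∃ d : ℕ, ∀ n : ℕ, Module.finrank k (V ^ n : Submodule k A) ≤ (n + 1) ^ d := by
  classical
  obtain ⟨S, hS⟩ := (Submodule.fg_iff_finiteDimensional V).mpr hV
  refine ⟨S.card, fun n => ?_⟩
  let T : Finset A := Finset.univ.image
    (fun g : (S → Fin (n + 1)) => ∏ s : S, (s : A) ^ (g s : ℕ))
  have hT : T.card ≤ (n + 1) ^ S.card := by
    refine Finset.card_image_le.trans ?_
    simp
  have hle : V ^ n ≤ Submodule.span k (T : Set A) := by
    rw [← hS, Submodule.span_pow]
    apply Submodule.span_mono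
    intro x hx
    obtain ⟨f, rfl⟩ := Set.mem_pow.mp hx
    simp only [T, Finset.coe_image, Finset.coe_univ, Set.image_univ, Set.mem_range]
    refine ⟨fun s => ⟨(Finset.univ.filter (fun i => f i = s)).card, ?_⟩, ?_⟩
    · refine Nat.lt_succ_of_le ((Finset.card_filter_le _ _).trans ?_)
      simp
    · rw [List.prod_ofFn]
      simp_rw [← Finset.prod_const]
      exact Finset.prod_fiberwise' Finset.univ f (fun s => (s : A))
  exact (Submodule.finrank_mono hle).trans ((finrank_span_finset_le_card T).trans hT)

theorem not_exp_growth (h : ℕ → ℝ) (c : ℝ) (hc : 1 < c) (r d : ℕ) (h1 : ∀ n, 1 ≤ h n)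
    (hd : ∀ n, h n ≤ ((n : ℝ) + 1) ^ d) (hg : ∀ᶠ n in atTop, c * h n ≤ h (n + r)) : False := by
  obtain ⟨N, hN⟩ := eventually_atTop.mp hg
  have key : ∀ j : ℕ, c ^ j ≤ h (N + j * r) := by
    intro j
    induction j with
    | zero => simpa using h1 N
    | succ j ih =>
      have := hN (N + j * r) (by omega)
      rw [show N + (j + 1) * r = N + j * r + r by ring, pow_succ']
      exact (mul_le_mul_of_nonneg_left ih (by linarith)).trans this
  have ht := tendsto_pow_const_div_const_pow_of_one_lt d hc
  set M : ℝ := ((N : ℝ) + r + 1) ^ d with hM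
  have hMpos : 0 < M := by positivity
  have ev := ht.eventually (gt_mem_nhds (show (0 : ℝ) < 1 / M by positivity))
  obtain ⟨j, hj, hj1⟩ := (ev.and (eventually_ge_atTop 1)).exists
  have hcj : 0 < c ^ j := by positivity
  rw [div_lt_div_iff₀ hcj hMpos] at hj
  have hj1' : (1 : ℝ) ≤ j := by exact_mod_cast hj1
  have h2 := (key j).trans (hd _)
  have h3 : ((N + j * r : ℕ) : ℝ) + 1 ≤ j * ((N : ℝ) + r + 1) := by
    push_cast
    have : (0 : ℝ) ≤ N := by positivity
    nlinarith
  have h4 : (((N + j * r : ℕ) : ℝ) + 1) ^ d ≤ (j * ((N : ℝ) + r + 1)) ^ d := by gcongr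
  rw [mul_pow] at h4
  linarith


theorem graded_pow_le {k A : Type*} [Field k] [CommRing A] [Algebra k A]
    (ℬ : ℕ → Submodule k A) (h0 : ℬ 0 = 1) (hm : ∀ m n : ℕ, ℬ m * ℬ n ≤ ℬ (m + n)) (p n : ℕ) :
    (ℬ p) ^ n ≤ ℬ (n * p) := by
  induction n with
  | zero => simp [h0]
  | succ n ih =>
    rw [pow_succ, add_mul, one_mul]
    exact (mul_le_mul' ih le_rfl).trans (hm _ _)

theorem pow_div_mem {k A F : Type*} [Field k] [CommRing A]
    [Algebra k A] [Field F] [Algebra A F] [Algebra k F]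
    [IsScalarTower k A F] (V : Submodule k A) (b₀ : A)
    (L : IntermediateField k F)
    (hL : ∀ b ∈ V, algebraMap A F b / algebraMap A F b₀ ∈ L) (n : ℕ) :
    ∀ s ∈ V ^ n, algebraMap A F s / algebraMap A F b₀ ^ n ∈ L := by
  induction n with
  | zero =>
    intro s hs
    rw [pow_zero, Submodule.mem_one] at hs
    obtain ⟨c, rfl⟩ := hs
    rw [pow_zero, div_one, ← IsScalarTower.algebraMap_apply]
    exact L.algebraMap_mem c
  | succ n ih =>
    intro s hs
    rw [pow_succ] at hs
    induction hs using Submodule.mul_induction_on' with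
    | mem_mul_mem x hx y hy =>
      rw [map_mul, pow_succ, mul_div_mul_comm]
      exact L.mul_mem (ih x hx) (hL y hy)
    | add x _ y _ hx hy =>
      rw [map_add, add_div]
      exact L.add_mem hx hy

theorem two_mul_finrank_le {k A F : Type*} [Field k] [CommRing A] [IsDomain A]
    [Algebra k A] [Field F] [Algebra A F] [IsFractionRing A F] [Algebra k F]
    [IsScalarTower k A F] (V W : Submodule k A) [FiniteDimensional k V] [FiniteDimensional k W]
    (L : IntermediateField k F) (u v : A) (hv : v ≠ 0)
    (hL : ∀ s ∈ V, ∀ t ∈ V, algebraMap A F s / algebraMap A F t ∈ L)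
    (huv : algebraMap A F u / algebraMap A F v ∉ L)
    (hu' : ∀ s ∈ V, u * s ∈ W) (hv' : ∀ s ∈ V, v * s ∈ W) :
    2 * Module.finrank k V ≤ Module.finrank k W := by
  have hinj := IsFractionRing.injective A F
  let f : (V × V) →ₗ[k] A := (LinearMap.mulLeft k v ∘ₗ V.subtype).coprod
    (LinearMap.mulLeft k u ∘ₗ V.subtype)
  have hf : ∀ x : V × V, f x = v * x.1 + u * x.2 := fun x => rfl
  let g : (V × V) →ₗ[k] W := f.codRestrict W (fun x => by
    rw [hf]; exact W.add_mem (hv' _ x.1.2) (hu' _ x.2.2))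
  have hg : Function.Injective g := by
    rw [← LinearMap.ker_eq_bot, LinearMap.ker_eq_bot']
    rintro ⟨s, t⟩ hst
    have h1 : v * (s : A) + u * t = 0 := by
      have := congrArg Subtype.val hst
      simpa [g, hf] using this
    have hφv : algebraMap A F v ≠ 0 := by simpa using hv
    by_cases ht : (t : A) = 0
    · have : (s : A) = 0 := by simpa [ht, hv] using h1
      ext <;> simp [ht, this]
    · exfalso
      apply huv
      have hφt : algebraMap A F t ≠ 0 := by simpa using ht
      have h2 := congrArg (algebraMap A F) h1
      simp only [map_add, map_mul, map_zero] at h2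
      have : algebraMap A F u / algebraMap A F v = -(algebraMap A F s / algebraMap A F t) := by
        field_simp
        linear_combination h2
      rw [this]
      exact L.neg_mem (hL _ s.2 _ t.2)
  have := LinearMap.finrank_le_finrank_of_injective hg
  rw [Module.finrank_prod] at this
  omega


theorem field_eq_of_approximable (k : Type*) {A F : Type*} [Field k]
    [CommRing A] [IsDomain A] [Algebra k A]
    [Field F] [Algebra A F] [IsFractionRing A F] [Algebra k F] [IsScalarTower k A F]
    (ℬ : ℕ → Submodule k A) (hB : IsApproximable k ℬ) :
    ∃ p₀ : ℕ, ∀ p ≥ p₀, 0 < p → ∀ b₀ ∈ ℬ p, b₀ ≠ 0 → ∀ L : IntermediateField k F,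
      (∀ b ∈ ℬ p, algebraMap A F b / algebraMap A F b₀ ∈ L) →
      homogeneousFractionField k ℬ ≤ L := by
  obtain ⟨h0, hm, hfin, hne, happ⟩ := hB
  obtain ⟨p₀, hp₀⟩ := happ (1 / 4) (by norm_num)
  refine ⟨p₀, fun p hp hp1 b₀ hb₀ hb₀ne L hL => ?_⟩
  rw [homogeneousFractionField, IntermediateField.adjoin_le_iff]
  rintro _ ⟨m, u, hu, v, hv, hvne, rfl⟩
  by_contra huv
  change algebraMap A F u / algebraMap A F v ∉ L at huv
  obtain ⟨N, hN⟩ := eventually_atTop.mp hne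
  obtain ⟨e, he⟩ : ∃ e, (m + N) * p = m + e := ⟨(m + N) * p - m, by
    have : m + N ≤ (m + N) * p := Nat.le_mul_of_pos_right _ hp1
    omega⟩
  have heN : N ≤ e := by
    have : m + N ≤ (m + N) * p := Nat.le_mul_of_pos_right _ hp1
    omega
  obtain ⟨w, hw, hwne⟩ := (Submodule.ne_bot_iff _).mp (hN e heN)
  have hφw : algebraMap A F w ≠ 0 := by simpa using hwne
  have hφb₀ : algebraMap A F b₀ ≠ 0 := by simpa using hb₀ne
  have hpow := graded_pow_le ℬ h0 hm p
  have hfinpow : ∀ n, FiniteDimensional k ((ℬ p) ^ n : Submodule k A) := fun n =>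
    Submodule.finiteDimensional_of_le (hpow n)
  obtain ⟨d, hd⟩ := exists_finrank_pow_le (ℬ p)
  have hev := eventually_lt_of_lt_liminf (hp₀ p hp)
    (isBoundedUnder_of ⟨0, fun n => by positivity⟩)
  refine not_exp_growth (fun n => (Module.finrank k ((ℬ p) ^ n : Submodule k A) : ℝ)) (3 / 2)
    (by norm_num) (m + N) d ?_ ?_ ?_
  · intro n
    have : 0 < Module.finrank k ((ℬ p) ^ n : Submodule k A) := by
      rw [Module.finrank_pos_iff]
      exact ⟨⟨b₀ ^ n, Submodule.pow_mem_pow _ hb₀ n⟩, 0, by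
        simpa [Subtype.ext_iff] using fun h => absurd h hb₀ne⟩
    exact_mod_cast this
  · intro n
    exact_mod_cast hd n
  · have hev' := (tendsto_add_atTop_nat (m + N)).eventually hev
    filter_upwards [hev'] with n hn
    have h2 : 2 * Module.finrank k ((ℬ p) ^ n : Submodule k A) ≤
        Module.finrank k (ℬ ((n + (m + N)) * p)) := by
      have hmem : ∀ x ∈ ℬ m, ∀ s ∈ (ℬ p) ^ n, (x * w) * s ∈ ℬ ((n + (m + N)) * p) := by
        intro x hx s hs
        have h1 := hm _ _ (Submodule.mul_mem_mul hx hw)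
        have h2 := hm _ _ (Submodule.mul_mem_mul h1 (hpow n hs))
        rwa [← he, ← add_mul, add_comm] at h2
      refine two_mul_finrank_le (F := F) _ _ L (u * w) (v * w) (mul_ne_zero hvne hwne) ?_ ?_
        (hmem u hu) (hmem v hv)
      · intro s hs t ht
        have h1 := L.div_mem (pow_div_mem (ℬ p) b₀ L hL n s hs) (pow_div_mem (ℬ p) b₀ L hL n t ht)
        rwa [div_div_div_cancel_right₀ (pow_ne_zero n hφb₀)] at h1
      · rwa [map_mul, map_mul, mul_div_mul_right _ _ hφw]
    have h2' : 2 * (Module.finrank k ((ℬ p) ^ n : Submodule k A) : ℝ) ≤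
        Module.finrank k (ℬ ((n + (m + N)) * p)) := by exact_mod_cast h2
    have hpos : (0 : ℝ) < Module.finrank k (ℬ ((n + (m + N)) * p)) := by
      rcases (Nat.cast_nonneg (α := ℝ) (Module.finrank k (ℬ ((n + (m + N)) * p)))).lt_or_eq with h | h
      · exact h
      · rw [← h] at hn
        norm_num at hn
    rw [lt_div_iff₀ hpos] at hn
    show 3 / 2 * (Module.finrank k ((ℬ p) ^ n : Submodule k A) : ℝ) ≤ _
    linarith

theorem exists_hom_fraction (k : Type*) {A F : Type*} [Field k]
    [CommRing A] [IsDomain A] [Algebra k A]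
    [Field F] [Algebra A F] [IsFractionRing A F] [Algebra k F] [IsScalarTower k A F]
    (ℬ : ℕ → Submodule k A) (h0 : ℬ 0 = 1) (hm : ∀ m n : ℕ, ℬ m * ℬ n ≤ ℬ (m + n))
    (x : F) (hx : x ∈ homogeneousFractionField k ℬ) :
    ∃ m : ℕ, ∃ s ∈ ℬ m, ∃ t ∈ ℬ m, t ≠ 0 ∧ x = algebraMap A F s / algebraMap A F t := by
  have hmul : ∀ {m n : ℕ} {x y : A}, x ∈ ℬ m → y ∈ ℬ n → x * y ∈ ℬ (m + n) :=
    fun hx hy => hm _ _ (Submodule.mul_mem_mul hx hy)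
  have hφ : ∀ {t : A}, t ≠ 0 → algebraMap A F t ≠ 0 := fun ht => by simpa using ht
  rw [homogeneousFractionField] at hx
  induction hx using IntermediateField.adjoin_induction with
  | mem x hx =>
    exact hx
  | algebraMap c =>
    refine ⟨0, algebraMap k A c, ?_, 1, ?_, one_ne_zero, ?_⟩
    · rw [h0]; exact Submodule.algebraMap_mem c
    · rw [h0]; exact Submodule.one_le.mp le_rfl
    · rw [map_one, div_one, ← IsScalarTower.algebraMap_apply]
  | add x y _ _ hx hy =>
    obtain ⟨m, s, hs, t, ht, htn, rfl⟩ := hx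
    obtain ⟨m', s', hs', t', ht', htn', rfl⟩ := hy
    refine ⟨m + m', s * t' + t * s', (ℬ _).add_mem (hmul hs ht') (hmul ht hs'), t * t',
      hmul ht ht', mul_ne_zero htn htn', ?_⟩
    rw [div_add_div _ _ (hφ htn) (hφ htn')]
    simp
  | inv x _ hx =>
    obtain ⟨m, s, hs, t, ht, htn, rfl⟩ := hx
    by_cases hsn : s = 0
    · exact ⟨m, 0, (ℬ m).zero_mem, t, ht, htn, by simp [hsn]⟩
    · exact ⟨m, t, ht, s, hs, hsn, by rw [inv_div]⟩
  | mul x y _ _ hx hy =>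
    obtain ⟨m, s, hs, t, ht, htn, rfl⟩ := hx
    obtain ⟨m', s', hs', t', ht', htn', rfl⟩ := hy
    exact ⟨m + m', s * s', hmul hs hs', t * t', hmul ht ht', mul_ne_zero htn htn', by
      rw [div_mul_div_comm]; simp⟩

theorem exists_common_denom (k : Type*) {A F : Type*} [Field k]
    [CommRing A] [IsDomain A] [Algebra k A]
    [Field F] [Algebra A F] [IsFractionRing A F] [Algebra k F] [IsScalarTower k A F]
    (ℬ : ℕ → Submodule k A) (h0 : ℬ 0 = 1) (hm : ∀ m n : ℕ, ℬ m * ℬ n ≤ ℬ (m + n))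
    (q : ℕ → F) (hq : ∀ i, q i ∈ homogeneousFractionField k ℬ) (n : ℕ) :
    ∃ m : ℕ, ∃ t ∈ ℬ m, t ≠ 0 ∧ ∀ i < n, ∃ s ∈ ℬ m, q i * algebraMap A F t = algebraMap A F s := by
  have hmul : ∀ {m n : ℕ} {x y : A}, x ∈ ℬ m → y ∈ ℬ n → x * y ∈ ℬ (m + n) :=
    fun hx hy => hm _ _ (Submodule.mul_mem_mul hx hy)
  induction n with
  | zero => exact ⟨0, 1, by rw [h0]; exact Submodule.one_le.mp le_rfl, one_ne_zero, by simp⟩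
  | succ n ih =>
    obtain ⟨m, t, ht, htn, h⟩ := ih
    obtain ⟨m', s', hs', t', ht', htn', hq'⟩ := exists_hom_fraction k ℬ h0 hm (q n) (hq n)
    refine ⟨m + m', t * t', hmul ht ht', mul_ne_zero htn htn', fun i hi => ?_⟩
    have hφ : algebraMap A F t' ≠ 0 := by simpa using htn'
    rcases Nat.lt_succ_iff_lt_or_eq.mp hi with hi | rfl
    · obtain ⟨s, hs, he⟩ := h i hi
      exact ⟨s * t', hmul hs ht', by rw [map_mul, map_mul, ← he]; ring⟩
    · refine ⟨t * s', hmul ht hs', ?_⟩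
      rw [hq', map_mul, map_mul]
      field_simp

theorem transcendental_of_homogeneous (k : Type*) {A F : Type*} [Field k]
    [CommRing A] [IsDomain A] [Algebra k A]
    [Field F] [Algebra A F] [IsFractionRing A F] [Algebra k F] [IsScalarTower k A F]
    (ℬ : ℕ → Submodule k A) [GradedAlgebra ℬ]
    (h0 : ℬ 0 = 1) (hm : ∀ m n : ℕ, ℬ m * ℬ n ≤ ℬ (m + n))
    (p : ℕ) (hp : 0 < p) (b : A) (hb : b ∈ ℬ p) (hbn : b ≠ 0) :
    Transcendental (homogeneousFractionField k ℬ : IntermediateField k F) (algebraMap A F b) := by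
  rw [transcendental_iff]
  intro P hP
  obtain ⟨m, t, ht, htn, h⟩ := exists_common_denom k ℬ h0 hm (fun i => (P.coeff i : F))
    (fun i => (P.coeff i).2) (P.natDegree + 1)
  choose! s hs he using h
  have hφt : algebraMap A F t ≠ 0 := by simpa using htn
  have hsum : ∑ i ∈ Finset.range (P.natDegree + 1), s i * b ^ i = 0 := by
    apply IsFractionRing.injective A F
    rw [map_zero, map_sum]
    rw [Polynomial.aeval_eq_sum_range] at hP
    have := congrArg (· * algebraMap A F t) hP
    simp only [zero_mul, Finset.sum_mul] at this
    rw [← this]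
    refine Finset.sum_congr rfl fun i hi => ?_
    rw [map_mul, map_pow, ← he i (Finset.mem_range.mp hi)]
    rw [Algebra.smul_def]
    show _ = (P.coeff i : F) * _ * _
    ring
  ext i
  by_cases hi : i < P.natDegree + 1
  · have hmem : ∀ j < P.natDegree + 1, s j * b ^ j ∈ ℬ (m + j * p) := fun j hj =>
      hm _ _ (Submodule.mul_mem_mul (hs j hj)
        (graded_pow_le ℬ h0 hm p j (Submodule.pow_mem_pow _ hb j)))
    have h1 := congrArg (fun x => (DirectSum.decompose ℬ x (m + i * p) : A)) hsum
    simp only [DirectSum.decompose_sum, DirectSum.decompose_zero, DirectSum.sum_apply,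
      AddSubmonoidClass.coe_finsetSum, DirectSum.zero_apply, ZeroMemClass.coe_zero] at h1
    rw [Finset.sum_eq_single_of_mem i (Finset.mem_range.mpr hi),
      DirectSum.decompose_of_mem_same _ (hmem i hi)] at h1
    · have hsi : s i = 0 := by
        rcases mul_eq_zero.mp h1 with h | h
        · exact h
        · exact absurd h (pow_ne_zero _ hbn)
      have := he i hi
      rw [hsi, map_zero] at this
      simpa [hφt] using this
    · intro j hj hji
      refine DirectSum.decompose_of_mem_ne _ (hmem j (Finset.mem_range.mp hj)) ?_
      intro h
      exact hji (Nat.eq_of_mul_eq_mul_right hp (by omega))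
  · rw [Polynomial.coeff_eq_zero_of_natDegree_lt (by omega)]
    simp

open IntermediateField.algebraAdjoinAdjoin in
theorem trdeg_adjoin_simple {K F : Type*} [Field K] [Field F] [Algebra K F] (x : F)
    (hx : Transcendental K x) : Algebra.trdeg K (IntermediateField.adjoin K {x}) = 1 := by
  have h1 : Algebra.trdeg K (Algebra.adjoin K {x}) = 1 := by
    have := (Polynomial.algEquivOfTranscendental K x hx).lift_trdeg_eq
    rw [Polynomial.trdeg_of_isDomain] at this
    simpa using this.symm
  have h2 := trdeg_add_eq K (Algebra.adjoin K {x}) (A := IntermediateField.adjoin K {x})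
  rw [h1, trdeg_eq_zero (R := Algebra.adjoin K {x}), add_zero] at h2
  exact h2.symm

open IntermediateField.algebraAdjoinAdjoin in
theorem trdeg_adjoin_image {k A F : Type*} [Field k] [CommRing A] [IsDomain A] [Algebra k A]
    [Field F] [Algebra A F] [IsFractionRing A F] [Algebra k F] [IsScalarTower k A F]
    (V : Submodule k A) [hV : FiniteDimensional k V] (a : ℕ)
    (h : ringKrullDim (Algebra.adjoin k (V : Set A)) = a) :
    Algebra.trdeg k (IntermediateField.adjoin k (algebraMap A F '' V)) = a := by
  have hft : Algebra.FiniteType k (Algebra.adjoin k (V : Set A)) := by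
    obtain ⟨S, hS⟩ := (Submodule.fg_iff_finiteDimensional V).mpr hV
    rw [← Subalgebra.fg_iff_finiteType]
    exact ⟨S, by rw [← hS, Algebra.adjoin_span]⟩
  have h1 := trdeg_eq_of_ringKrullDim_eq k _ a h
  have hinj : Function.Injective (IsScalarTower.toAlgHom k A F) := IsFractionRing.injective A F
  let e := (Algebra.adjoin k (V : Set A)).equivMapOfInjective (IsScalarTower.toAlgHom k A F) hinj
  have hmap : (Algebra.adjoin k (V : Set A)).map (IsScalarTower.toAlgHom k A F) =
      Algebra.adjoin k (algebraMap A F '' V) := by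
    rw [AlgHom.map_adjoin]; rfl
  have h3 : Algebra.trdeg k (Algebra.adjoin k (algebraMap A F '' V)) = a := by
    rw [← hmap]
    have := e.lift_trdeg_eq
    rw [h1] at this
    simpa using this.symm
  have h2 := trdeg_add_eq k (Algebra.adjoin k (algebraMap A F '' V))
    (A := IntermediateField.adjoin k (algebraMap A F '' V))
  rw [h3, trdeg_eq_zero (R := Algebra.adjoin k (algebraMap A F '' V)), add_zero] at h2
  exact h2.symm

/-- Let `k` be an algebraically closed field of characteristic zero and `B = ⊕ B_m` an
approximable graded algebra over `k`.  Then the homogeneous fraction field `K^hom(B)` is a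
finitely generated field extension of `k`, and its transcendence degree over `k` equals the
dimension `d(B) = a - 1` of `B`, where `a` is the common Krull dimension of the subalgebras
`⟨B_p⟩` for all sufficiently large `p` (transcendence degree `= a - 1` is expressed by the
existence of a finite transcendence basis of cardinality `a - 1`). -/
theorem homogeneousFractionField_finitelyGenerated_and_trdeg
    (k : Type*) {A F : Type*} [Field k] [IsAlgClosed k] [CharZero k]
    [CommRing A] [IsDomain A] [Algebra k A]
    [Field F] [Algebra A F] [IsFractionRing A F] [Algebra k F] [IsScalarTower k A F]
    (𝒜 : ℕ → Submodule k A) [GradedAlgebra 𝒜]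
    (hB : IsApproximable k 𝒜)
    (a : ℕ) (ha : 0 < a)
    (hdim : ∀ᶠ p in atTop, ringKrullDim (Algebra.adjoin k (𝒜 p : Set A)) = a) :
    (homogeneousFractionField k 𝒜 : IntermediateField k F).FG ∧
      ∃ s : Finset (homogeneousFractionField k 𝒜 : IntermediateField k F),
        IsTranscendenceBasis k
          (fun x : (s : Set (homogeneousFractionField k 𝒜 : IntermediateField k F)) =>
            (x : (homogeneousFractionField k 𝒜 : IntermediateField k F))) ∧
        s.card = a - 1 := by
  obtain ⟨p₀, hp₀⟩ := field_eq_of_approximable (F := F) k 𝒜 hB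
  obtain ⟨h0, hm, hfin, hne, -⟩ := hB
  obtain ⟨p, hdp, hnep, hpp, hp1⟩ :=
    (hdim.and (hne.and ((eventually_ge_atTop p₀).and (eventually_gt_atTop 0)))).exists
  obtain ⟨b₀, hb₀, hb₀n⟩ := (Submodule.ne_bot_iff _).mp hnep
  have hφ : algebraMap A F b₀ ≠ 0 := by simpa using hb₀n
  have hle := hp₀ p hpp hp1 b₀ hb₀ hb₀n
  have htr := transcendental_of_homogeneous (F := F) k 𝒜 h0 hm p hp1 b₀ hb₀ hb₀n
  have hmemK : ∀ b ∈ 𝒜 p, algebraMap A F b / algebraMap A F b₀ ∈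
      (homogeneousFractionField k 𝒜 : IntermediateField k F) := fun b hb =>
    IntermediateField.subset_adjoin _ _ ⟨p, b, hb, b₀, hb₀, hb₀n, rfl⟩
  have hfg : (homogeneousFractionField k 𝒜 : IntermediateField k F).FG := by
    have := hfin p
    obtain ⟨S, hS⟩ := (Submodule.fg_iff_finiteDimensional (𝒜 p)).mpr this
    classical
    refine ⟨S.image (fun b => algebraMap A F b / algebraMap A F b₀), le_antisymm ?_ (hle _ ?_)⟩
    · rw [IntermediateField.adjoin_le_iff]
      intro x hx
      simp only [Finset.coe_image, Set.mem_image, Finset.mem_coe] at hx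
      obtain ⟨b, hb, rfl⟩ := hx
      exact hmemK b (hS ▸ Submodule.subset_span hb)
    · intro b hb
      rw [← hS] at hb
      induction hb using Submodule.span_induction with
      | mem x hx =>
        exact IntermediateField.subset_adjoin _ _ (by simpa using ⟨x, hx, rfl⟩)
      | zero => simp
      | add x y _ _ hx hy =>
        rw [map_add, add_div]
        exact IntermediateField.add_mem _ hx hy
      | smul c x _ hx =>
        rw [Algebra.smul_def, map_mul, mul_div_assoc, ← IsScalarTower.algebraMap_apply]
        exact IntermediateField.mul_mem _ (IntermediateField.algebraMap_mem _ c) hx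
  refine ⟨hfg, ?_⟩
  have := hfin p
  have hL := trdeg_adjoin_image (F := F) (𝒜 p) a hdp
  set K : IntermediateField k F := homogeneousFractionField k 𝒜 with hK
  let E : IntermediateField K F := IntermediateField.adjoin K {algebraMap A F b₀}
  have hE1 : Algebra.trdeg K E = 1 := trdeg_adjoin_simple _ htr
  have hEL : E.restrictScalars k = IntermediateField.adjoin k (algebraMap A F '' (𝒜 p : Set A)) := by
    have hb₀L : algebraMap A F b₀ ∈ IntermediateField.adjoin k (algebraMap A F '' (𝒜 p : Set A)) :=
      IntermediateField.subset_adjoin _ _ ⟨b₀, hb₀, rfl⟩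
    apply le_antisymm
    · have hKL : K ≤ IntermediateField.adjoin k (algebraMap A F '' (𝒜 p : Set A)) :=
        hle _ fun b hb => IntermediateField.div_mem _
          (IntermediateField.subset_adjoin _ _ ⟨b, hb, rfl⟩) hb₀L
      have : E ≤ IntermediateField.extendScalars hKL := by
        rw [IntermediateField.adjoin_le_iff]
        rintro _ rfl
        exact hb₀L
      exact fun x hx => this hx
    · rw [IntermediateField.adjoin_le_iff]
      rintro _ ⟨b, hb, rfl⟩
      have h1 : algebraMap A F b / algebraMap A F b₀ ∈ E :=
        E.algebraMap_mem ⟨_, hmemK b hb⟩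
      have h2 : algebraMap A F b₀ ∈ E := IntermediateField.subset_adjoin _ _ rfl
      have := E.mul_mem h1 h2
      rwa [div_mul_cancel₀ _ hφ] at this
  have hE2 : Algebra.trdeg k E = a := by
    rw [← hL, ← hEL]
    rfl
  have : FaithfulSMul K E := (faithfulSMul_iff_algebraMap_injective K E).mpr
    (algebraMap K E).injective
  have hadd := trdeg_add_eq k K (A := E)
  rw [hE1, hE2] at hadd
  obtain ⟨a', rfl⟩ : ∃ a', a = a' + 1 := ⟨a - 1, by omega⟩
  have hKtr : Algebra.trdeg k K = (a' : Cardinal) := by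
    push_cast at hadd
    exact Cardinal.add_one_inj.mp hadd
  obtain ⟨s, hs⟩ := exists_isTranscendenceBasis k K
  have hcard := hs.cardinalMk_eq_trdeg
  rw [hKtr] at hcard
  have hsfin : s.Finite := by
    rw [← Cardinal.lt_aleph0_iff_set_finite, hcard]
    exact Cardinal.natCast_lt_aleph0
  obtain ⟨t, rfl⟩ := hsfin.exists_finset_coe
  refine ⟨t, hs, ?_⟩
  simpa using hcard
end

section
/- Let k be an algebraically closed field of characteristic zero, let C = ⊕_{m≥0} C_m be an approximable graded algebra over k of dimension d(C), and let B = ⊕_{m≥0} B_m be a graded k-subalgebra of C (so B_m ⊆ C_m for all m) such that B_n ≠ 0 for all sufficiently large n and the sequence dim_k(B_m)/m^{d(C)} does not converge to 0. Then B is an approximable graded algebra. -/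
open Filter

/-- the `n`-fold sumset -/
def sumN {W : Type*} [AddCommMonoid W] (S : Set W) : ℕ → Set W
  | 0 => {0}
  | n + 1 => Set.image2 (fun x y => x + y) (sumN S n) S

section sumN
variable {W : Type*}

lemma sumN_add [AddCommMonoid W] {S : Set W} {m n : ℕ} {x y : W} (hx : x ∈ sumN S m)
    (hy : y ∈ sumN S n) : x + y ∈ sumN S (m + n) := by
  induction n generalizing y with
  | zero =>
    have : y = 0 := hy
    subst this; simpa using hx
  | succ n ih =>
    obtain ⟨a, ha, b, hb, rfl⟩ := hy
    exact ⟨x + a, ih ha, b, hb, by simp [add_assoc]⟩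

lemma sumN_one [AddCommMonoid W] {S : Set W} {x : W} (hx : x ∈ S) : x ∈ sumN S 1 :=
  ⟨0, rfl, x, hx, by simp⟩

lemma sumN_nsmul [AddCommMonoid W] {S : Set W} {x : W} (hx : x ∈ S) (n : ℕ) : n • x ∈ sumN S n := by
  induction n with
  | zero => simp [sumN]
  | succ n ih => exact ⟨n • x, ih, x, hx, by simp [succ_nsmul]⟩

lemma sumN_finite [AddCommMonoid W] {S : Set W} (hS : S.Finite) (n : ℕ) : (sumN S n).Finite := by
  induction n with
  | zero => exact Set.finite_singleton 0
  | succ n ih => exact ih.image2 _ hS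

lemma sumN_sum [AddCommMonoid W] {S : Set W} {ι : Type*} (s : Finset ι) (c : ι → ℕ) (f : ι → W)
    (hf : ∀ i ∈ s, f i ∈ S) : ∑ i ∈ s, c i • f i ∈ sumN S (∑ i ∈ s, c i) := by
  classical
  induction s using Finset.induction_on with
  | empty => simp [sumN]
  | insert a s ha ih =>
    rw [Finset.sum_insert ha, Finset.sum_insert ha]
    exact sumN_add (sumN_nsmul (hf a (by simp)) _) (ih fun i hi => hf i (by simp [hi]))

lemma sumN_box [AddCommGroup W] {S : Set W} {ι : Type*} [Fintype ι] (w : W) (z : ι → W)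
    (hw : w ∈ S) (hz : ∀ i, w + z i ∈ S) (α : ι → ℕ) (n : ℕ) (hn : ∑ i, α i ≤ n) :
    n • w + ∑ i, α i • z i ∈ sumN S n := by
  have h1 := sumN_sum (S := S) Finset.univ α (fun i => w + z i) (fun i _ => hz i)
  have h2 := sumN_add h1 (sumN_nsmul hw (n - ∑ i, α i))
  rw [Nat.add_sub_cancel' hn] at h2
  convert h2 using 1
  simp only [smul_add, Finset.sum_add_distrib, ← Finset.sum_smul]
  nth_rewrite 1 [← Nat.add_sub_cancel' hn]
  rw [add_smul]; abel

lemma sumN_sub [AddCommMonoid W] {Γ : ℕ → Set W} (h0 : (0 : W) ∈ Γ 0)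
    (hadd : ∀ m n x y, x ∈ Γ m → y ∈ Γ n → x + y ∈ Γ (m + n)) (p n : ℕ) :
    sumN (Γ p) n ⊆ Γ (n * p) := by
  induction n with
  | zero => intro x hx; have : x = 0 := hx; subst this; simpa using h0
  | succ n ih =>
    rintro _ ⟨a, ha, b, hb, rfl⟩
    rw [Nat.succ_mul]
    exact hadd _ _ _ _ (ih ha) hb

lemma common_level [AddCommGroup W] {Γ : ℕ → Set W} (h0 : (0 : W) ∈ Γ 0)
    (hadd : ∀ m n x y, x ∈ Γ m → y ∈ Γ n → x + y ∈ Γ (m + n)) {ι : Type*} [Finite ι] (z : ι → W)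
    (hz : ∀ i, ∃ m, ∃ x ∈ Γ m, ∃ y ∈ Γ m, x - y = z i) :
    ∃ q, ∃ w ∈ Γ q, ∀ i, w + z i ∈ Γ q := by
  classical
  have := Fintype.ofFinite ι
  suffices H : ∀ s : Finset ι, ∃ q, ∃ w ∈ Γ q, ∀ i ∈ s, w + z i ∈ Γ q by
    obtain ⟨q, w, hw, h⟩ := H Finset.univ
    exact ⟨q, w, hw, fun i => h i (by simp)⟩
  intro s
  induction s using Finset.induction_on with
  | empty => exact ⟨0, 0, h0, by simp⟩
  | insert a s ha ih =>
    obtain ⟨q, w, hw, h⟩ := ih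
    obtain ⟨m, x, hx, y, hy, hxy⟩ := hz a
    refine ⟨q + m, w + y, hadd _ _ _ _ hw hy, ?_⟩
    intro i hi
    rcases Finset.mem_insert.1 hi with rfl | hi
    · rw [← hxy]
      have := hadd _ _ _ _ hw hx
      convert this using 1; abel
    · have := hadd _ _ _ _ (h i hi) hy
      convert this using 1; abel
end sumN

/-- coercion of integral vectors -/
def toR {d : ℕ} (z : Fin d → ℤ) : Fin d → ℝ := fun i => (z i : ℝ)

lemma toR_injective {d : ℕ} : Function.Injective (toR (d := d)) := by
  intro x y h; funext i; have := congrFun h i; simpa [toR] using this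

lemma toR_add {d : ℕ} (x y : Fin d → ℤ) : toR (x + y) = toR x + toR y := by
  funext i; simp [toR]

lemma toR_nsmul {d : ℕ} (n : ℕ) (y : Fin d → ℤ) : toR (n • y) = (n : ℝ) • toR y := by
  funext i; simp [toR]

open scoped Pointwise in
lemma lattice_bij {d : ℕ} (s : Set (Fin d → ℝ)) (n : ℕ) (hn : 0 < n) :
    (fun z => (n : ℝ)⁻¹ • toR z) '' {z : Fin d → ℤ | (n : ℝ)⁻¹ • toR z ∈ s} =
     (s ∩ (n : ℝ)⁻¹ • (Submodule.span ℤ (Set.range (Pi.basisFun ℝ (Fin d))) : Set (Fin d → ℝ))) := by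
  have : NeZero n := ⟨hn.ne'⟩
  have hn' : (n : ℝ) ≠ 0 := by positivity
  ext x
  constructor
  · rintro ⟨z, hz, rfl⟩
    refine ⟨hz, ?_⟩
    apply (BoxIntegral.unitPartition.mem_smul_span_iff (n := n)).2
    intro i
    refine ⟨z i, ?_⟩
    simp [toR]
    field_simp
  · rintro ⟨hx, hx2⟩
    have h2 := (BoxIntegral.unitPartition.mem_smul_span_iff (n := n)).1 hx2
    choose z hz using h2
    have : (n : ℝ)⁻¹ • toR z = x := by
      funext i
      have := hz i
      simp at this
      simp [toR, this]
      field_simp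
    exact ⟨z, by simpa [this] using hx, this⟩

lemma scale_inj {d : ℕ} (n : ℕ) (hn : 0 < n) :
    Function.Injective (fun z : Fin d → ℤ => (n : ℝ)⁻¹ • toR z) := by
  have hn' : (n : ℝ)⁻¹ ≠ 0 := by positivity
  intro x y h
  exact toR_injective (smul_right_injective _ hn' h)

open scoped Pointwise in
lemma lattice_finite {d : ℕ} (s : Set (Fin d → ℝ)) (hs : Bornology.IsBounded s) (n : ℕ)
    (hn : 0 < n) : {z : Fin d → ℤ | (n : ℝ)⁻¹ • toR z ∈ s}.Finite := by
  have hn' : (n : ℝ) ≠ 0 := by positivity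
  have h := ZSpan.setFinite_inter (Pi.basisFun ℝ (Fin d)) (s := (n : ℝ) • s) (hs.smul₀ _)
  refine Set.Finite.of_injOn (f := toR) ?_ toR_injective.injOn h
  intro z hz
  refine ⟨⟨_, hz, by simp [smul_smul, hn']⟩, ?_⟩
  have := (BoxIntegral.unitPartition.mem_smul_span_iff (n := 1) (v := toR z)).2
    (fun i => ⟨z i, by simp [toR]⟩)
  simpa using this

open MeasureTheory in
lemma lattice_count {d : ℕ} (s : Set (Fin d → ℝ)) (hs : Bornology.IsBounded s)
    (hm : MeasurableSet s) (hc : Convex ℝ s) :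
    Tendsto (fun n : ℕ => (({z : Fin d → ℤ | (n : ℝ)⁻¹ • toR z ∈ s}.ncard : ℕ) : ℝ) / (n : ℝ) ^ d)
      atTop (nhds (volume.real s)) := by
  have h := tendsto_card_div_pow_atTop_volume s hs hm (hc.addHaar_frontier volume)
  refine h.congr' ?_
  filter_upwards [eventually_gt_atTop 0] with n hn
  rw [← lattice_bij s n hn, Nat.card_coe_set_eq, Set.ncard_image_of_injective _ (scale_inj n hn)]
  simp

lemma sum_single_int {d : ℕ} (α : Fin d → ℕ) :
    ∑ i, α i • (Pi.single i (1 : ℤ) : Fin d → ℤ) = fun i => (α i : ℤ) := by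
  funext j
  simp [Finset.sum_apply, Pi.single_apply]

lemma hull_to_sumset {d : ℕ} (S : Set (Fin d → ℤ)) (hS : S.Finite) (w : Fin d → ℤ) (hw : w ∈ S)
    (he : ∀ i, w + Pi.single i 1 ∈ S) :
    ∃ (N : ℕ) (u : Fin d → ℤ), ∀ n : ℕ, 0 < n → ∀ z : Fin d → ℤ,
      (n : ℝ)⁻¹ • toR z ∈ convexHull ℝ (toR '' S) → z + u ∈ sumN S (n + N) := by
  classical
  obtain ⟨T, rfl⟩ := hS.exists_finset_coe
  -- the bound
  set D : ℕ := (∑ s ∈ T, ∑ i, (s i).natAbs) + T.card * ∑ i, (w i).natAbs with hD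
  refine ⟨2 * d * D, (2 * d * D) • w + fun _ => (D : ℤ), ?_⟩
  intro n hn z hz
  have hn' : (n : ℝ) ≠ 0 := by positivity
  rw [← Finset.coe_image, Finset.mem_convexHull'] at hz
  obtain ⟨l, hl0, hl1, hlz⟩ := hz
  rw [Finset.sum_image (fun a _ b _ h => toR_injective h)] at hl1 hlz
  have hl0' : ∀ s ∈ T, 0 ≤ l (toR s) := fun s hs => hl0 _ (Finset.mem_image_of_mem _ hs)
  set lam : (Fin d → ℤ) → ℝ := fun s => n * l (toR s) with hlam
  have lam0 : ∀ s ∈ T, 0 ≤ lam s := fun s hs => mul_nonneg (by positivity) (hl0' s hs)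
  have lam1 : ∑ s ∈ T, lam s = n := by
    simp only [hlam, ← Finset.mul_sum, hl1, mul_one]
  have lamz : ∀ i, ∑ s ∈ T, lam s * (s i : ℝ) = z i := by
    intro i
    have := congrFun hlz i
    simp only [Finset.sum_apply, Pi.smul_apply, smul_eq_mul, toR] at this
    simp only [hlam, mul_assoc, ← Finset.mul_sum]
    rw [this]; field_simp
  set mu : (Fin d → ℤ) → ℕ := fun s => ⌊lam s⌋₊ with hmu
  have mu1 : ∀ s ∈ T, 0 ≤ lam s - mu s := fun s hs => sub_nonneg.2 (Nat.floor_le (lam0 s hs))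
  have mu2 : ∀ s ∈ T, lam s - mu s ≤ 1 := fun s hs => by
    have := Nat.lt_floor_add_one (lam s); simp only [hmu]; linarith
  have hmun : ∑ s ∈ T, mu s ≤ n := by
    have : ((∑ s ∈ T, mu s : ℕ) : ℝ) ≤ n := by
      rw [← lam1]; push_cast
      exact Finset.sum_le_sum fun s hs => by linarith [mu1 s hs]
    exact_mod_cast this
  obtain ⟨k, hk⟩ := Nat.exists_eq_add_of_le hmun
  have hkT : k ≤ T.card := by
    have : (k : ℝ) = ∑ s ∈ T, (lam s - mu s) := by
      rw [Finset.sum_sub_distrib, lam1]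
      have : (n : ℝ) = ((∑ s ∈ T, mu s : ℕ) : ℝ) + k := by exact_mod_cast hk
      rw [this]; push_cast; ring
    have h2 : (k : ℝ) ≤ T.card := by
      rw [this]
      calc _ ≤ ∑ s ∈ T, (1 : ℝ) := Finset.sum_le_sum mu2
        _ = _ := by simp
    exact_mod_cast h2
  set r : Fin d → ℤ := z - ∑ s ∈ T, mu s • s with hr
  have hri : ∀ i, |r i| ≤ (∑ s ∈ T, ∑ i, (s i).natAbs : ℕ) := by
    intro i
    have e : ((r i : ℤ) : ℝ) = ∑ s ∈ T, (lam s - mu s) * (s i : ℝ) := by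
      simp only [hr, Pi.sub_apply, Finset.sum_apply, Pi.smul_apply, sub_mul,
        Finset.sum_sub_distrib, lamz]
      push_cast
      simp
    have : |((r i : ℤ) : ℝ)| ≤ ((∑ s ∈ T, ∑ i, (s i).natAbs : ℕ) : ℝ) := by
      rw [e]; push_cast
      refine (Finset.abs_sum_le_sum_abs _ _).trans (Finset.sum_le_sum fun s hs => ?_)
      rw [abs_mul, abs_of_nonneg (mu1 s hs)]
      calc _ ≤ 1 * |(s i : ℝ)| := by gcongr; exact mu2 s hs
        _ = ((s i).natAbs : ℝ) := by rw [one_mul, Nat.cast_natAbs, Int.cast_abs]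
        _ ≤ _ := Finset.single_le_sum (f := fun i => (((s i).natAbs : ℕ) : ℝ))
            (fun _ _ => by positivity) (Finset.mem_univ i)
    rw [← Int.cast_abs, ← Int.cast_natCast, Int.cast_le] at this
    exact this
  have hci : ∀ i, |r i - k * w i| ≤ D := by
    intro i
    have h1 : |(k : ℤ) * w i| ≤ (T.card * ∑ i, (w i).natAbs : ℕ) := by
      rw [abs_mul, Nat.abs_cast, Int.abs_eq_natAbs]
      have : (w i).natAbs ≤ ∑ i, (w i).natAbs :=
        Finset.single_le_sum (f := fun i => (w i).natAbs) (fun _ _ => by positivity) (Finset.mem_univ i)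
      exact_mod_cast Nat.mul_le_mul hkT this
    calc _ ≤ |r i| + |(k : ℤ) * w i| := abs_sub _ _
      _ ≤ _ := by rw [hD]; push_cast; have := hri i; push_cast at *; linarith
  set α : Fin d → ℕ := fun i => (r i - k * w i + D).toNat with hα
  have hα1 : ∀ i, (α i : ℤ) = r i - k * w i + D := fun i => by
    have := abs_le.1 (hci i)
    simp only [hα]; rw [Int.toNat_of_nonneg (by linarith)]
  have hα2 : ∑ i, α i ≤ k + 2 * d * D := by
    calc ∑ i, α i ≤ ∑ i : Fin d, 2 * D := Finset.sum_le_sum fun i _ => by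
          have := abs_le.1 (hci i); have := hα1 i; omega
      _ = d * (2 * D) := by simp
      _ ≤ _ := by nlinarith
  have h1 := sumN_box w (fun i => Pi.single i 1) hw he α _ hα2
  have h2 := sumN_add (sumN_sum (S := (T : Set (Fin d → ℤ))) T mu id (fun i hi => hi)) h1
  rw [sum_single_int] at h2
  rw [hk, add_assoc]
  convert h2 using 1
  have : z = r + ∑ s ∈ T, mu s • s := by simp [hr]
  funext i
  have hz := congrFun this i
  simp only [Pi.add_apply, Finset.sum_apply, Pi.smul_apply, id, hα1] at hz ⊢
  rw [hz]
  simp only [nsmul_eq_mul]; push_cast; ring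

lemma level_bounded {d : ℕ} {Γ : ℕ → Set (Fin d → ℤ)} (h0 : 0 ∈ Γ 0)
    (hfin : ∀ m, (Γ m).Finite)
    (hadd : ∀ m n x y, x ∈ Γ m → y ∈ Γ n → x + y ∈ Γ (m + n)) (c : ℝ)
    (hgrow : ∀ m : ℕ, 1 ≤ m → ((Γ m).ncard : ℝ) ≤ c * (m : ℝ) ^ d)
    (q : ℕ) (hq : 1 ≤ q) (w : Fin d → ℤ) (hw : w ∈ Γ q) (he : ∀ i, w + Pi.single i 1 ∈ Γ q) :
    ∃ C : ℝ, ∀ m : ℕ, 1 ≤ m → ∀ γ ∈ Γ m, ∀ i, |(γ i : ℝ)| ≤ C * m := by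
  classical
  set K : ℝ := c * (((2 + d) * q : ℕ) : ℝ) ^ d with hK
  refine ⟨max K 1 + ∑ i, |(w i : ℝ)|, ?_⟩
  intro m hm γ hγ i0
  set δ : Fin d → ℤ := q • γ - m • w with hδ
  set n : ℕ := (δ i0).natAbs with hn
  have key : (n : ℝ) ≤ max K 1 * m := by
    by_cases hnm : n < m
    · have : (n : ℝ) ≤ m := by exact_mod_cast hnm.le
      have h1 : (1 : ℝ) * m ≤ max K 1 * m := by gcongr; exact le_max_right _ _
      linarith
    push Not at hnm
    have hn0 : 0 < n := by omega
    set J := n / m + 1 with hJ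
    have hJm : J * m ≤ 2 * n := by
      have := Nat.div_mul_le_self n m
      rw [hJ, Nat.succ_mul]; omega
    have hJn : n < J * m := by
      rw [hJ, mul_comm]; exact Nat.lt_mul_div_succ n hm
    let f : Fin J × (Fin d → Fin n) → (Fin d → ℤ) := fun x =>
      (x.1 : ℕ) • (q • γ) + (J - (x.1 : ℕ)) • (m • w) +
        ((d * n) • w + ∑ i, ((x.2 i : ℕ)) • (Pi.single i (1 : ℤ) : Fin d → ℤ))
    have hf : ∀ x i, f x i = ((J * m + d * n : ℕ) : ℤ) * w i + (x.1 : ℕ) * δ i + (x.2 i : ℕ) := by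
      intro x i
      have e1 := congrFun (sum_single_int (fun i => (x.2 i : ℕ))) i
      simp only [f, hδ, Pi.add_apply, e1]
      simp only [Pi.smul_apply, Pi.sub_apply]
      simp only [nsmul_eq_mul]
      rw [Nat.cast_sub x.1.2.le]; push_cast; ring
    have hfmem : ∀ x, f x ∈ Γ (J * m * q + d * n * q) := by
      intro x
      apply hadd
      · have h1 : (x.1 : ℕ) • (q • γ) ∈ Γ ((x.1 : ℕ) * (q * m)) := by
          apply sumN_sub h0 hadd; apply sumN_nsmul
          apply sumN_sub h0 hadd; exact sumN_nsmul hγ _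
        have h2 : (J - (x.1 : ℕ)) • (m • w) ∈ Γ ((J - (x.1 : ℕ)) * (m * q)) := by
          apply sumN_sub h0 hadd; apply sumN_nsmul
          apply sumN_sub h0 hadd; exact sumN_nsmul hw _
        convert hadd _ _ _ _ h1 h2 using 2
        rw [mul_comm q m, ← add_mul, Nat.add_sub_cancel' x.1.2.le, mul_assoc]
      · apply sumN_sub h0 hadd
        apply sumN_box _ _ hw he
        calc _ ≤ ∑ i : Fin d, n := Finset.sum_le_sum fun i _ => (x.2 i).2.le
          _ = _ := by simp
    have hfinj : Function.Injective f := by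
      intro x y hxy
      have hc : ∀ i, ((x.1 : ℕ) : ℤ) * δ i + (x.2 i : ℕ) = ((y.1 : ℕ) : ℤ) * δ i + (y.2 i : ℕ) := by
        intro i
        have := congrFun hxy i
        rw [hf, hf] at this
        linarith
      have h1 : ((x.1 : ℕ) : ℤ) = ((y.1 : ℕ) : ℤ) := by
        have h3 := hc i0
        have hx := (x.2 i0).2
        have hy := (y.2 i0).2
        have hab : |(((x.1 : ℕ) : ℤ) - (y.1 : ℕ)) * δ i0| < n := by
          have : (((x.1 : ℕ) : ℤ) - (y.1 : ℕ)) * δ i0 = (y.2 i0 : ℕ) - (x.2 i0 : ℕ) := by linarith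
          rw [this, abs_lt]; constructor <;> omega
        rw [abs_mul, Int.abs_eq_natAbs (δ i0), ← hn] at hab
        have : |(((x.1 : ℕ) : ℤ) - (y.1 : ℕ))| < 1 := by
          by_contra hcon
          push Not at hcon
          nlinarith
        have := Int.abs_lt_one_iff.1 this
        linarith
      apply Prod.ext
      · exact Fin.ext (by exact_mod_cast h1)
      · funext i
        have := hc i
        rw [h1] at this
        exact Fin.ext (by exact_mod_cast add_left_cancel this)
    have hcard : J * n ^ d ≤ (Γ (J * m * q + d * n * q)).ncard := by
      have h1 : (Set.range f).ncard = J * n ^ d := by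
        rw [← Set.image_univ, Set.ncard_image_of_injective _ hfinj, Set.ncard_univ]
        simp
      rw [← h1]
      apply Set.ncard_le_ncard _ (hfin _)
      rintro _ ⟨x, rfl⟩; exact hfmem x
    have hg := hgrow (J * m * q + d * n * q) (by
      have : 1 ≤ J * m * q := Nat.mul_pos (Nat.mul_pos (Nat.succ_pos _) hm) hq
      omega)
    have hc0 : 0 ≤ c := by
      have := hgrow 1 le_rfl
      simp at this
      exact le_trans (by positivity) this
    have h2 : ((J * m * q + d * n * q : ℕ) : ℝ) ≤ (((2 + d) * q : ℕ) : ℝ) * n := by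
      have : J * m * q + d * n * q ≤ (2 + d) * q * n := by nlinarith
      exact_mod_cast this
    have h3 : (J : ℝ) * (n : ℝ) ^ d ≤ K * (n : ℝ) ^ d := by
      calc (J : ℝ) * (n : ℝ) ^ d = ((J * n ^ d : ℕ) : ℝ) := by push_cast; ring
        _ ≤ ((Γ (J * m * q + d * n * q)).ncard : ℝ) := by exact_mod_cast hcard
        _ ≤ _ := hg
        _ ≤ c * ((((2 + d) * q : ℕ) : ℝ) * n) ^ d := by gcongr
        _ = _ := by rw [hK, mul_pow]; ring
    have h4 : (J : ℝ) ≤ K := le_of_mul_le_mul_right h3 (by positivity)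
    calc (n : ℝ) ≤ J * m := by exact_mod_cast hJn.le
      _ ≤ max K 1 * m := by gcongr; exact h4.trans (le_max_left _ _)
  have e : (q : ℝ) * γ i0 = δ i0 + m * w i0 := by
    have : (q : ℤ) * γ i0 = δ i0 + m * w i0 := by simp [hδ]
    exact_mod_cast this
  have hq' : (1 : ℝ) ≤ q := by exact_mod_cast hq
  have hw' : |(w i0 : ℝ)| ≤ ∑ i, |(w i : ℝ)| :=
    Finset.single_le_sum (f := fun i => |(w i : ℝ)|) (fun _ _ => abs_nonneg _) (Finset.mem_univ i0)
  have hδn : |(δ i0 : ℝ)| = n := by rw [hn, Nat.cast_natAbs, Int.cast_abs]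
  calc |(γ i0 : ℝ)| ≤ q * |(γ i0 : ℝ)| := by nlinarith [abs_nonneg (γ i0 : ℝ)]
    _ = |(q : ℝ) * γ i0| := by rw [abs_mul, Nat.abs_cast]
    _ ≤ |(δ i0 : ℝ)| + |m * (w i0 : ℝ)| := by rw [e]; exact abs_add_le _ _
    _ ≤ max K 1 * m + m * ∑ i, |(w i : ℝ)| := by
        rw [abs_mul, Nat.abs_cast, hδn]; gcongr
    _ = _ := by ring

section
open Filter MeasureTheory
open scoped Pointwise

/-- hull of a level -/
def hullQ {d : ℕ} (Γ : ℕ → Set (Fin d → ℤ)) (m : ℕ) : Set (Fin d → ℝ) := convexHull ℝ (toR '' Γ m)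

section hull
variable {d : ℕ} {Γ : ℕ → Set (Fin d → ℤ)}

lemma hullQ_compact (hfin : ∀ m, (Γ m).Finite) (m : ℕ) : IsCompact (hullQ Γ m) :=
  ((hfin m).image toR).isCompact_convexHull ℝ

lemma hullQ_smul (h0 : 0 ∈ Γ 0)
    (hadd : ∀ m n x y, x ∈ Γ m → y ∈ Γ n → x + y ∈ Γ (m + n)) (j m : ℕ) :
    (j : ℝ) • hullQ Γ m ⊆ hullQ Γ (j * m) := by
  unfold hullQ
  rw [← convexHull_smul]
  apply convexHull_mono
  rintro _ ⟨_, ⟨γ, hγ, rfl⟩, rfl⟩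
  exact ⟨j • γ, sumN_sub h0 hadd _ _ (sumN_nsmul hγ _), toR_nsmul _ _⟩

lemma hullQ_vadd
    (hadd : ∀ m n x y, x ∈ Γ m → y ∈ Γ n → x + y ∈ Γ (m + n)) (r m : ℕ) (g : Fin d → ℤ)
    (hg : g ∈ Γ r) : toR g +ᵥ hullQ Γ m ⊆ hullQ Γ (r + m) := by
  unfold hullQ
  rw [← convexHull_vadd]
  apply convexHull_mono
  rintro _ ⟨_, ⟨γ, hγ, rfl⟩, rfl⟩
  exact ⟨g + γ, hadd _ _ _ _ hg hγ, toR_add _ _⟩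

lemma vol_smul (r : ℝ) (hr : 0 ≤ r) (s : Set (Fin d → ℝ)) :
    volume.real (r • s) = r ^ d * volume.real s := by
  simp only [Measure.real, Measure.addHaar_smul, ENNReal.toReal_mul]
  simp [abs_of_nonneg hr, hr]

lemma vol_ineq (h0 : 0 ∈ Γ 0) (hfin : ∀ m, (Γ m).Finite)
    (hadd : ∀ m n x y, x ∈ Γ m → y ∈ Γ n → x + y ∈ Γ (m + n)) (r j m : ℕ)
    (hr : (Γ r).Nonempty) :
    (j : ℝ) ^ d * volume.real (hullQ Γ m) ≤ volume.real (hullQ Γ (r + j * m)) := by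
  obtain ⟨g, hg⟩ := hr
  rw [← vol_smul _ (by positivity)]
  have h1 : volume.real ((j : ℝ) • hullQ Γ m) = volume.real (toR g +ᵥ ((j : ℝ) • hullQ Γ m)) := by
    simp [Measure.real, measure_vadd]
  rw [h1]
  apply measureReal_mono _ (hullQ_compact hfin _).measure_lt_top.ne
  exact (Set.vadd_set_mono (hullQ_smul h0 hadd j m)).trans (hullQ_vadd hadd _ _ _ hg)

/-- the normalized hulls along factorials -/
def hullF {d : ℕ} (Γ : ℕ → Set (Fin d → ℤ)) (n : ℕ) : Set (Fin d → ℝ) :=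
  ((n.factorial : ℕ) : ℝ)⁻¹ • hullQ Γ n.factorial

lemma hull_dvd (h0 : 0 ∈ Γ 0)
    (hadd : ∀ m n x y, x ∈ Γ m → y ∈ Γ n → x + y ∈ Γ (m + n)) (m n : ℕ) (hn : n ≠ 0)
    (h : m ∣ n) : (m : ℝ)⁻¹ • hullQ Γ m ⊆ (n : ℝ)⁻¹ • hullQ Γ n := by
  obtain ⟨j, rfl⟩ := h
  have hm : (m : ℝ) ≠ 0 := by rintro h; simp_all
  have hj : (j : ℝ) ≠ 0 := by rintro h; simp_all
  have := hullQ_smul h0 hadd j m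
  have h2 := Set.smul_set_mono (a := ((m * j : ℕ) : ℝ)⁻¹) this
  rw [smul_smul, mul_comm j m] at h2
  convert h2 using 2
  push_cast; field_simp

lemma hullF_mono (h0 : 0 ∈ Γ 0)
    (hadd : ∀ m n x y, x ∈ Γ m → y ∈ Γ n → x + y ∈ Γ (m + n)) : Monotone (hullF Γ) := by
  intro a b hab
  exact hull_dvd h0 hadd _ _ (Nat.factorial_ne_zero _) (Nat.factorial_dvd_factorial hab)

lemma hullF_mem (h0 : 0 ∈ Γ 0)
    (hadd : ∀ m n x y, x ∈ Γ m → y ∈ Γ n → x + y ∈ Γ (m + n)) (m : ℕ) (hm : 1 ≤ m)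
    (γ : Fin d → ℤ) (hγ : γ ∈ Γ m) : (m : ℝ)⁻¹ • toR γ ∈ ⋃ n, hullF Γ n := by
  apply Set.mem_iUnion.2
  refine ⟨m, hull_dvd h0 hadd m _ (Nat.factorial_ne_zero _) (Nat.dvd_factorial hm le_rfl) ?_⟩
  exact Set.smul_mem_smul_set (subset_convexHull _ _ ⟨γ, hγ, rfl⟩)

lemma hullF_bdd (C : ℝ) (hC : ∀ m : ℕ, 1 ≤ m → ∀ γ ∈ Γ m, ∀ i, |(γ i : ℝ)| ≤ C * m) :
    Bornology.IsBounded (⋃ n, hullF Γ n) := by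
  have hb : Bornology.IsBounded (Metric.closedBall (0 : Fin d → ℝ) (max C 0)) :=
    Metric.isBounded_closedBall
  refine hb.subset (Set.iUnion_subset fun n => ?_)
  unfold hullF hullQ
  rw [← convexHull_smul]
  apply convexHull_min _ (convex_closedBall _ _)
  rintro _ ⟨_, ⟨γ, hγ, rfl⟩, rfl⟩
  have hn : (0 : ℝ) < (n.factorial : ℝ) := by exact_mod_cast Nat.factorial_pos n
  rw [mem_closedBall_zero_iff, pi_norm_le_iff_of_nonneg (le_max_right _ _)]
  intro i
  have := hC _ (Nat.factorial_pos n) γ hγ i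
  simp only [toR, Pi.smul_apply, smul_eq_mul, Real.norm_eq_abs, abs_mul, abs_inv, Nat.abs_cast]
  rw [inv_mul_le_iff₀ hn, mul_comm]
  refine this.trans ?_
  gcongr
  exact le_max_left _ _
end hull

theorem semigroup_fujita {d : ℕ} (Γ : ℕ → Set (Fin d → ℤ)) (h0 : 0 ∈ Γ 0)
    (hfin : ∀ m, (Γ m).Finite)
    (hadd : ∀ m n x y, x ∈ Γ m → y ∈ Γ n → x + y ∈ Γ (m + n)) (c : ℝ)
    (hgrow : ∀ m : ℕ, 1 ≤ m → ((Γ m).ncard : ℝ) ≤ c * (m : ℝ) ^ d)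
    (N0 : ℕ) (hne : ∀ m, N0 ≤ m → (Γ m).Nonempty)
    (hgen : ∀ z, ∃ m, ∃ x ∈ Γ m, ∃ y ∈ Γ m, x - y = z) (ε : ℝ) (hε : 0 < ε) :
    ∃ p₀, ∀ p ≥ p₀, ∀ᶠ n in atTop,
      (1 - ε) * ((Γ (n * p)).ncard : ℝ) ≤ ((sumN (Γ p) n).ncard : ℝ) := by
  -- simplices at all large levels
  obtain ⟨q, w, hw, hwe⟩ := common_level h0 hadd (fun i : Fin d => Pi.single i (1 : ℤ))
    (fun i => hgen _)
  have hsimp : ∀ p, q + N0 ≤ p → ∃ w ∈ Γ p, ∀ i, w + Pi.single i 1 ∈ Γ p := by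
    intro p hp
    obtain ⟨g, hg⟩ := hne (p - q) (by omega)
    have e : q + (p - q) = p := by omega
    refine ⟨w + g, e ▸ hadd _ _ _ _ hw hg, fun i => ?_⟩
    have := hadd _ _ _ _ (hwe i) hg
    rw [e] at this
    convert this using 1; abel
  obtain ⟨w1, hw1, hwe1⟩ := hsimp (q + N0 + 1) (by omega)
  obtain ⟨C, hC⟩ := level_bounded h0 hfin hadd c hgrow (q + N0 + 1) (by omega) w1 hw1 hwe1
  set Δ : Set (Fin d → ℝ) := ⋃ n, hullF Γ n with hΔ
  have hΔb : Bornology.IsBounded Δ := hullF_bdd C hC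
  have hFcomp : ∀ n, IsCompact (hullF Γ n) := fun n => (hullQ_compact hfin _).smul _
  have hΔm : MeasurableSet Δ := MeasurableSet.iUnion fun n => (hFcomp n).measurableSet
  have hΔc : Convex ℝ Δ := by
    apply Directed.convex_iUnion
    · exact (hullF_mono h0 hadd).directed_le
    · intro n; exact (convex_convexHull _ _).smul _
  have hΔfin : volume Δ ≠ ⊤ := hΔb.measure_lt_top.ne
  set V := volume.real Δ with hV
  have hVnn : 0 ≤ V := measureReal_nonneg
  -- upper bound
  have hup : ∀ V' > V, ∀ᶠ m : ℕ in atTop, ((Γ m).ncard : ℝ) ≤ V' * (m : ℝ) ^ d := by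
    intro V' hV'
    have h := (lattice_count Δ hΔb hΔm hΔc).eventually_lt_const hV'
    filter_upwards [h, eventually_gt_atTop 0] with m hm hm0
    have hm0' : (0 : ℝ) < (m : ℝ) ^ d := by positivity
    rw [div_lt_iff₀ hm0'] at hm
    refine le_trans ?_ hm.le
    have : (Γ m).ncard ≤ {z : Fin d → ℤ | (m : ℝ)⁻¹ • toR z ∈ Δ}.ncard :=
      Set.ncard_le_ncard (fun γ hγ => hullF_mem h0 hadd m hm0 γ hγ) (lattice_finite _ hΔb m hm0)
    exact_mod_cast this
  -- positivity
  have hVpos : 0 < V := by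
    set p := q + N0 + 1 with hp
    by_contra hcon
    have hV0 : V < (((d + 1) * p : ℕ) : ℝ)⁻¹ ^ d / 2 := lt_of_le_of_lt (not_lt.1 hcon) (by positivity)
    have h := hup _ hV0
    have h2 : Tendsto (fun n : ℕ => ((d + 1) * n) * p) atTop atTop := by
      apply tendsto_atTop_mono (f := id) _ tendsto_id
      intro n
      simp only [id]
      nlinarith [Nat.zero_le (d * n), Nat.zero_le ((q + N0) * ((d + 1) * n))]
    obtain ⟨n, hn, hn0⟩ := ((h2.eventually h).and (eventually_gt_atTop 0)).exists
    let f : (Fin d → Fin n) → (Fin d → ℤ) := fun α =>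
      ((d + 1) * n) • w1 + ∑ i, (α i : ℕ) • (Pi.single i (1 : ℤ) : Fin d → ℤ)
    have hfm : ∀ α, f α ∈ Γ (((d + 1) * n) * p) := by
      intro α
      apply sumN_sub h0 hadd
      apply sumN_box _ _ hw1 hwe1
      calc _ ≤ ∑ i : Fin d, n := Finset.sum_le_sum fun i _ => (α i).2.le
          _ = d * n := by simp
          _ ≤ _ := by nlinarith
    have hfi : Function.Injective f := by
      intro α β h
      have h := add_left_cancel h
      rw [sum_single_int (fun i => (α i : ℕ)), sum_single_int (fun i => (β i : ℕ))] at h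
      funext i
      have := congrFun h i
      exact Fin.ext (by exact_mod_cast this)
    have hcard : n ^ d ≤ (Γ (((d + 1) * n) * p)).ncard := by
      have h1 : (Set.range f).ncard = n ^ d := by
        rw [← Set.image_univ, Set.ncard_image_of_injective _ hfi, Set.ncard_univ]
        simp
      rw [← h1]
      apply Set.ncard_le_ncard _ (hfin _)
      rintro _ ⟨x, rfl⟩; exact hfm x
    have h5 : (n : ℝ) ^ d ≤ ((Γ (((d + 1) * n) * p)).ncard : ℝ) := by exact_mod_cast hcard
    have h6 := h5.trans hn
    have h7 : (((d + 1) * p : ℕ) : ℝ)⁻¹ ^ d / 2 * (((d + 1) * n * p : ℕ) : ℝ) ^ d = (n : ℝ) ^ d / 2 := by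
      have h8 : (((d + 1) * n * p : ℕ) : ℝ) = (((d + 1) * p : ℕ) : ℝ) * n := by push_cast; ring
      have h9 : (((d + 1) * p : ℕ) : ℝ) ≠ 0 := by positivity
      rw [h8, mul_pow, inv_pow]
      field_simp
    rw [h7] at h6
    have : (0 : ℝ) < (n : ℝ) ^ d := by positivity
    linarith
  -- choice of η
  obtain ⟨η, hη0, hη1, hη⟩ : ∃ η : ℝ, 0 < η ∧ η < 1 ∧ (1 - ε) * (1 + η) ≤ (1 - η) ^ (d + 3) := by
    have hcont : Continuous (fun η : ℝ => (1 - η) ^ (d + 3) - (1 - ε) * (1 + η)) := by fun_prop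
    have ht := hcont.tendsto 0
    have h1 : ∀ᶠ η in nhds (0 : ℝ), 0 < (1 - η) ^ (d + 3) - (1 - ε) * (1 + η) :=
      ht.eventually_const_lt (by simp; exact hε)
    have h2 : ∀ᶠ η in nhdsWithin (0 : ℝ) (Set.Ioi 0), 0 < (1 - η) ^ (d + 3) - (1 - ε) * (1 + η) :=
      h1.filter_mono nhdsWithin_le_nhds
    have h3 : ∀ᶠ η in nhdsWithin (0 : ℝ) (Set.Ioi 0), η < 1 :=
      (eventually_lt_nhds one_pos).filter_mono nhdsWithin_le_nhds
    obtain ⟨η, ha, hb, hc⟩ := (h2.and (h3.and self_mem_nhdsWithin)).exists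
    exact ⟨η, hc, hb, by linarith⟩
  have hη1' : 0 < 1 - η := by linarith
  -- choice of M
  obtain ⟨M, hM0, hMV⟩ : ∃ M : ℕ, 0 < M ∧ (1 - η) * V * (M : ℝ) ^ d ≤ volume.real (hullQ Γ M) := by
    have ht : Tendsto (fun n => volume (hullF Γ n)) atTop (nhds (volume Δ)) :=
      tendsto_measure_iUnion_atTop (hullF_mono h0 hadd)
    have ht' : Tendsto (fun n => volume.real (hullF Γ n)) atTop (nhds V) :=
      (ENNReal.tendsto_toReal hΔfin).comp ht
    obtain ⟨n, hn⟩ := (ht'.eventually_const_lt (show (1 - η) * V < V by nlinarith)).exists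
    refine ⟨n.factorial, Nat.factorial_pos n, ?_⟩
    unfold hullF at hn
    rw [vol_smul _ (by positivity), inv_pow] at hn
    have hpos : (0 : ℝ) < ((n.factorial : ℕ) : ℝ) ^ d := by
      have : (0 : ℝ) < (n.factorial : ℝ) := by exact_mod_cast Nat.factorial_pos n
      positivity
    rw [lt_inv_mul_iff₀ hpos] at hn
    linarith
  -- threshold
  obtain ⟨P, hP⟩ := exists_nat_gt ((M + N0 : ℕ) / η : ℝ)
  refine ⟨max (max P (q + N0)) (M + N0 + 1), ?_⟩
  intro p hp
  have hpP : P ≤ p := le_trans (le_max_left _ _) (le_trans (le_max_left _ _) hp)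
  have hpq : q + N0 ≤ p := le_trans (le_max_right _ _) (le_trans (le_max_left _ _) hp)
  have hpM : M + N0 + 1 ≤ p := le_trans (le_max_right _ _) hp
  have hp0 : (0 : ℝ) < p := by exact_mod_cast (by omega : 0 < p)
  have hvolp : (1 - η) ^ (d + 1) * V * (p : ℝ) ^ d ≤ volume.real (hullQ Γ p) := by
    set j := (p - N0) / M with hj
    set r := (p - N0) % M + N0 with hr
    have hrj : r + j * M = p := by
      have := Nat.mod_add_div (p - N0) M
      rw [hr, hj, mul_comm]; omega
    have hrM : r < M + N0 := by have := Nat.mod_lt (p - N0) hM0; omega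
    have h1 := vol_ineq h0 hfin hadd r j M (hne r (by omega))
    rw [hrj] at h1
    have h2 : (1 - η) * p ≤ (j * M : ℕ) := by
      have h3 : ((j * M : ℕ) : ℝ) = p - r := by
        have : ((r + j * M : ℕ) : ℝ) = p := by rw [hrj]
        push_cast at *; linarith
      rw [h3]
      have h4 : (r : ℝ) ≤ (M + N0 : ℕ) := by exact_mod_cast hrM.le
      have h5 : ((M + N0 : ℕ) : ℝ) < η * p := by
        rw [div_lt_iff₀ hη0] at hP
        have : (P : ℝ) ≤ p := by exact_mod_cast hpP
        nlinarith
      linarith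
    calc (1 - η) ^ (d + 1) * V * (p : ℝ) ^ d = (1 - η) * V * ((1 - η) * p) ^ d := by
          rw [mul_pow]; ring
      _ ≤ (1 - η) * V * ((j * M : ℕ) : ℝ) ^ d := by gcongr
      _ = (j : ℝ) ^ d * ((1 - η) * V * (M : ℝ) ^ d) := by push_cast; rw [mul_pow]; ring
      _ ≤ (j : ℝ) ^ d * volume.real (hullQ Γ M) := by gcongr
      _ ≤ _ := h1
  have hvolp0 : 0 < volume.real (hullQ Γ p) := lt_of_lt_of_le (by positivity) hvolp
  obtain ⟨wp, hwp, hwpe⟩ := hsimp p hpq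
  obtain ⟨N, u, hu⟩ := hull_to_sumset (Γ p) (hfin p) wp hwp hwpe
  have hQb := (hullQ_compact hfin p).isBounded
  have hlow := (lattice_count (hullQ Γ p) hQb (hullQ_compact hfin p).measurableSet
    (convex_convexHull _ _)).eventually_const_lt
      (show (1 - η) * volume.real (hullQ Γ p) < _ by nlinarith)
  have hlow2 : ∀ᶠ n : ℕ in atTop, (1 - η) * volume.real (hullQ Γ p) * (n : ℝ) ^ d ≤
      ((sumN (Γ p) (n + N)).ncard : ℝ) := by
    filter_upwards [hlow, eventually_gt_atTop 0] with n hn hn0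
    rw [lt_div_iff₀ (by positivity)] at hn
    refine hn.le.trans ?_
    have : {z : Fin d → ℤ | (n : ℝ)⁻¹ • toR z ∈ hullQ Γ p}.ncard ≤ (sumN (Γ p) (n + N)).ncard := by
      refine Set.ncard_le_ncard_of_injOn (fun z => z + u) ?_ ?_ (sumN_finite (hfin p) _)
      · intro z hz; exact hu n hn0 z hz
      · intro a _ b _ h; exact add_right_cancel h
    exact_mod_cast this
  have hratio : ∀ᶠ n : ℕ in atTop, (1 - η) * ((n + N : ℕ) : ℝ) ^ d ≤ (n : ℝ) ^ d := by
    have h1 : Tendsto (fun n : ℕ => ((n : ℝ) / ((n : ℝ) + N)) ^ d) atTop (nhds (1 ^ d)) := by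
      apply Tendsto.pow
      exact tendsto_natCast_div_add_atTop (N : ℝ)
    have h2 := h1.eventually_const_lt (show (1 - η) < 1 ^ d by simp; exact hη0)
    filter_upwards [h2, eventually_gt_atTop 0] with n hn hn0
    rw [div_pow, lt_div_iff₀ (by positivity)] at hn
    push_cast; exact hn.le
  have hfinal : ∀ᶠ n : ℕ in atTop, (1 - ε) * ((Γ ((n + N) * p)).ncard : ℝ) ≤
      ((sumN (Γ p) (n + N)).ncard : ℝ) := by
    have h2 : Tendsto (fun n : ℕ => (n + N) * p) atTop atTop := by
      apply tendsto_atTop_mono (f := id) _ tendsto_id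
      intro n
      simp only [id]
      nlinarith [Nat.zero_le N, Nat.zero_le ((n + N) * (p - 1)), (by omega : 1 ≤ p)]
    have h3 := h2.eventually (hup ((1 + η) * V) (by nlinarith))
    filter_upwards [hlow2, hratio, h3] with n ha hb hc
    by_cases hε1 : 1 ≤ ε
    · have : (1 - ε) * ((Γ ((n + N) * p)).ncard : ℝ) ≤ 0 :=
        mul_nonpos_of_nonpos_of_nonneg (by linarith) (by positivity)
      exact this.trans (by positivity)
    push Not at hε1
    have hε1' : 0 < 1 - ε := by linarith
    calc (1 - ε) * ((Γ ((n + N) * p)).ncard : ℝ)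
        ≤ (1 - ε) * ((1 + η) * V * (((n + N) * p : ℕ) : ℝ) ^ d) := by gcongr
      _ = ((1 - ε) * (1 + η)) * (V * (((n + N) * p : ℕ) : ℝ) ^ d) := by ring
      _ ≤ (1 - η) ^ (d + 3) * (V * (((n + N) * p : ℕ) : ℝ) ^ d) := by gcongr
      _ = (1 - η) * ((1 - η) ^ (d + 1) * V * (p : ℝ) ^ d) * ((1 - η) * ((n + N : ℕ) : ℝ) ^ d) := by
          push_cast; rw [mul_pow]; ring
      _ ≤ (1 - η) * volume.real (hullQ Γ p) * (n : ℝ) ^ d := by gcongr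
      _ ≤ _ := ha
  rw [← map_add_atTop_eq_nat N]
  exact hfinal

end

/-- differences of elements of equal level -/
def levelDiff {W : Type*} [AddCommGroup W] (Γ : ℕ → Set W) (h0 : (0 : W) ∈ Γ 0)
    (hadd : ∀ m n x y, x ∈ Γ m → y ∈ Γ n → x + y ∈ Γ (m + n)) : AddSubgroup W where
  carrier := {z | ∃ m, ∃ x ∈ Γ m, ∃ y ∈ Γ m, x - y = z}
  zero_mem' := ⟨0, 0, h0, 0, h0, by simp⟩
  add_mem' := by
    rintro a b ⟨m, x, hx, y, hy, rfl⟩ ⟨n, x', hx', y', hy', rfl⟩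
    exact ⟨m + n, x + x', hadd _ _ _ _ hx hx', y + y', hadd _ _ _ _ hy hy', by abel⟩
  neg_mem' := by
    rintro a ⟨m, x, hx, y, hy, rfl⟩
    exact ⟨m, y, hy, x, hx, by abel⟩

section
variable {W : Type*} [AddCommGroup W]

lemma multiple_mem {d : ℕ} {ΓB ΓC : ℕ → Set W} (h0 : (0 : W) ∈ ΓB 0) (hBC : ∀ m, ΓB m ⊆ ΓC m)
    (hfin : ∀ m, (ΓC m).Finite)
    (haddC : ∀ m n x y, x ∈ ΓC m → y ∈ ΓC n → x + y ∈ ΓC (m + n))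
    (haddB : ∀ m n x y, x ∈ ΓB m → y ∈ ΓB n → x + y ∈ ΓB (m + n)) (c : ℝ)
    (hgrow : ∀ m : ℕ, 1 ≤ m → ((ΓC m).ncard : ℝ) ≤ c * (m : ℝ) ^ d)
    (q : ℕ) (w e : W) (hw : w ∈ ΓC q) (he : w + e ∈ ΓC q)
    (hnz : ¬ Tendsto (fun m : ℕ => ((ΓB m).ncard : ℝ) / (m : ℝ) ^ d) atTop (nhds 0)) :
    ∃ M : ℕ, 0 < M ∧ M • e ∈ levelDiff ΓB h0 haddB := by
  by_contra hcon
  push Not at hcon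
  apply hnz
  have key : ∀ m : ℕ, 1 ≤ m → ((ΓB m).ncard : ℝ) / (m : ℝ) ^ d ≤ c * (1 + q : ℝ) ^ d / m := by
    intro m hm
    have hm0 : (0 : ℝ) < m := by exact_mod_cast hm
    let f : (ΓB m) × Fin m → W := fun x => (x.1 : W) + (m • w + (x.2 : ℕ) • e)
    have hfm : ∀ x, f x ∈ ΓC (m + m * q) := by
      intro x
      apply haddC _ _ _ _ (hBC m x.1.2)
      apply sumN_sub (hBC 0 h0) haddC
      have := sumN_box (ι := Fin 1) w (fun _ => e) hw (fun _ => he) (fun _ => (x.2 : ℕ)) m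
        (by simp [x.2.2.le])
      simpa using this
    have aux : ∀ a b : W, a ∈ ΓB m → b ∈ ΓB m → ∀ i j : ℕ, a + (m • w + i • e) = b + (m • w + j • e) →
        i ≤ j → i = j := by
      intro a b ha hb i j hab hij
      obtain ⟨k, rfl⟩ := Nat.exists_eq_add_of_le hij
      rcases Nat.eq_zero_or_pos k with rfl | hk
      · rfl
      exfalso
      apply hcon k hk
      refine ⟨m, a, ha, b, hb, ?_⟩
      rw [add_smul] at hab
      have : a = b + k • e := by
        have h3 : a + (m • w + i • e) = (b + k • e) + (m • w + i • e) := by rw [hab]; abel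
        exact add_right_cancel h3
      rw [this]; abel
    have hfi : Function.Injective f := by
      rintro ⟨⟨a, ha⟩, i⟩ ⟨⟨b, hb⟩, j⟩ hab
      have hij : (i : ℕ) = j := by
        rcases le_total (i : ℕ) j with h | h
        · exact aux a b ha hb i j hab h
        · exact (aux b a hb ha j i hab.symm h).symm
      have hij' : i = j := Fin.ext hij
      subst hij'
      have : a = b := add_right_cancel hab
      subst this; rfl
    have hcard : (ΓB m).ncard * m ≤ (ΓC (m + m * q)).ncard := by
      have h1 : (Set.range f).ncard = (ΓB m).ncard * m := by
        rw [← Set.image_univ, Set.ncard_image_of_injective _ hfi, Set.ncard_univ, Nat.card_prod]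
        simp
      rw [← h1]
      apply Set.ncard_le_ncard _ (hfin _)
      rintro _ ⟨x, rfl⟩; exact hfm x
    have h2 := hgrow (m + m * q) (by omega)
    have h3 : ((ΓB m).ncard : ℝ) * m ≤ ((ΓC (m + m * q)).ncard : ℝ) := by exact_mod_cast hcard
    rw [div_le_div_iff₀ (by positivity) hm0]
    refine (h3.trans h2).trans (le_of_eq ?_)
    have : ((m + m * q : ℕ) : ℝ) = (1 + q) * m := by push_cast; ring
    rw [this, mul_pow]; ring
  refine squeeze_zero' (g := fun m : ℕ => c * (1 + q : ℝ) ^ d / m) ?_ ?_ ?_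
  · exact Eventually.of_forall fun m => by positivity
  · filter_upwards [eventually_ge_atTop 1] with m hm using key m hm
  · exact tendsto_const_div_atTop_nhds_zero_nat _

lemma quot_finite {d : ℕ} {Γ : ℕ → Set W} (h0 : (0 : W) ∈ Γ 0)
    (hfin : ∀ m, (Γ m).Finite)
    (hadd : ∀ m n x y, x ∈ Γ m → y ∈ Γ n → x + y ∈ Γ (m + n)) (c : ℝ)
    (hgrow : ∀ m : ℕ, 1 ≤ m → ((Γ m).ncard : ℝ) ≤ c * (m : ℝ) ^ d)
    (q : ℕ) (hq : 1 ≤ q) (w : W) (e : Fin d → W) (hw : w ∈ Γ q) (he : ∀ i, w + e i ∈ Γ q)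
    (hli : LinearIndependent ℤ e) :
    Finite ((AddSubgroup.toIntSubmodule (levelDiff Γ h0 hadd)) ⧸
      (Submodule.span ℤ (Set.range e)).comap
        (AddSubgroup.toIntSubmodule (levelDiff Γ h0 hadd)).subtype) := by
  classical
  set H := AddSubgroup.toIntSubmodule (levelDiff Γ h0 hadd) with hH
  set N := (Submodule.span ℤ (Set.range e)).comap H.subtype with hN
  by_contra hinf
  rw [not_finite_iff_infinite] at hinf
  obtain ⟨K, hK⟩ := exists_nat_gt (c * ((1 + (d + 1) * q : ℕ) : ℝ) ^ d)
  obtain ⟨t, ht⟩ := Infinite.exists_subset_card_eq (H ⧸ N) K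
  let z : t → H := fun j => (j : H ⧸ N).out
  obtain ⟨r, u, hu, huz⟩ := common_level h0 hadd (fun j : t => ((z j : H) : W)) (fun j => (z j).2)
  set n := r + 1 with hn
  let f : t × (Fin d → Fin n) → W := fun x =>
    (u + z x.1) + (((d + 1) * n) • w + ∑ i, (x.2 i : ℕ) • e i)
  have hfm : ∀ x, f x ∈ Γ (r + (d + 1) * n * q) := by
    intro x
    apply hadd _ _ _ _ (huz x.1)
    apply sumN_sub h0 hadd
    apply sumN_box _ _ hw he
    have hs1 : ∑ i : Fin d, (x.2 i : ℕ) ≤ ∑ i : Fin d, n :=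
      Finset.sum_le_sum fun i _ => (x.2 i).2.le
    have hs2 : ∑ i : Fin d, n = d * n := by simp
    rw [hs2] at hs1
    exact hs1.trans (by nlinarith)
  have hfi : Function.Injective f := by
    rintro ⟨j, α⟩ ⟨l, β⟩ hab
    simp only [f] at hab
    have h1 : ((z j : H) : W) - z l = ∑ i, ((β i : ℤ) - (α i : ℤ)) • e i := by
      simp only [sub_smul, Finset.sum_sub_distrib, natCast_zsmul]
      have h2 : (z j : W) + ∑ i, (α i : ℕ) • e i = (z l : W) + ∑ i, (β i : ℕ) • e i := by
        have h3 : (z j : W) + ∑ i, (α i : ℕ) • e i + (u + ((d + 1) * n) • w) =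
          (z l : W) + ∑ i, (β i : ℕ) • e i + (u + ((d + 1) * n) • w) := by
          calc _ = u + z j + (((d + 1) * n) • w + ∑ i, (α i : ℕ) • e i) := by abel
            _ = _ := hab
            _ = _ := by abel
        exact add_right_cancel h3
      rw [sub_eq_sub_iff_add_eq_add, h2]; abel
    have hjl : j = l := by
      apply Subtype.ext
      rw [← Quotient.out_eq (j : H ⧸ N), ← Quotient.out_eq (l : H ⧸ N)]
      apply (Submodule.Quotient.eq N).2
      change ((z j : H) : W) - z l ∈ Submodule.span ℤ (Set.range e)
      rw [h1]
      exact Submodule.sum_mem _ fun i _ => Submodule.smul_mem _ _ (Submodule.subset_span ⟨i, rfl⟩)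
    subst hjl
    rw [sub_self] at h1
    have h2 := Fintype.linearIndependent_iff.1 hli _ h1.symm
    congr 1
    funext i
    have := h2 i
    exact Fin.ext (by omega)
  have hcard : K * n ^ d ≤ (Γ (r + (d + 1) * n * q)).ncard := by
    have h1 : (Set.range f).ncard = K * n ^ d := by
      rw [← Set.image_univ, Set.ncard_image_of_injective _ hfi, Set.ncard_univ, Nat.card_prod]
      simp [ht]
    rw [← h1]
    apply Set.ncard_le_ncard _ (hfin _)
    rintro _ ⟨x, rfl⟩; exact hfm x
  have hc0 : 0 ≤ c := by
    have := hgrow 1 le_rfl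
    simp at this
    exact le_trans (by positivity) this
  have h3 : (K : ℝ) * (n : ℝ) ^ d ≤ (c * ((1 + (d + 1) * q : ℕ) : ℝ) ^ d) * (n : ℝ) ^ d := by
    calc (K : ℝ) * (n : ℝ) ^ d = ((K * n ^ d : ℕ) : ℝ) := by push_cast; ring
      _ ≤ ((Γ (r + (d + 1) * n * q)).ncard : ℝ) := by exact_mod_cast hcard
      _ ≤ ((Γ (r + (d + 1) * n * q)).ncard : ℝ) := le_rfl
      _ ≤ c * ((1 + (d + 1) * q : ℕ) * (n : ℝ)) ^ d := by
        · have h : 1 ≤ r + (d + 1) * n * q := by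
            have : 0 < (d + 1) * n * q := by positivity
            omega
          refine (hgrow _ h).trans ?_
          gcongr
          have : r + (d + 1) * n * q ≤ (1 + (d + 1) * q) * n := by nlinarith
          exact_mod_cast this
      _ = _ := by rw [mul_pow]; ring
  have h4 := le_of_mul_le_mul_right h3 (by positivity)
  linarith
end

theorem group_fujita {W : Type*} [AddCommGroup W] [Module.IsTorsionFree ℤ W] {d : ℕ} {ΓB ΓC : ℕ → Set W} (h0 : (0 : W) ∈ ΓB 0)
    (hBC : ∀ m, ΓB m ⊆ ΓC m)
    (hfin : ∀ m, (ΓC m).Finite)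
    (haddC : ∀ m n x y, x ∈ ΓC m → y ∈ ΓC n → x + y ∈ ΓC (m + n))
    (haddB : ∀ m n x y, x ∈ ΓB m → y ∈ ΓB n → x + y ∈ ΓB (m + n)) (c : ℝ)
    (hgrow : ∀ m : ℕ, 1 ≤ m → ((ΓC m).ncard : ℝ) ≤ c * (m : ℝ) ^ d)
    (N0 : ℕ) (hne : ∀ m, N0 ≤ m → (ΓB m).Nonempty)
    (q : ℕ) (w : W) (e : Fin d → W) (hw : w ∈ ΓC q) (he : ∀ i, w + e i ∈ ΓC q)
    (hli : LinearIndependent ℤ e)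
    (hnz : ¬ Tendsto (fun m : ℕ => ((ΓB m).ncard : ℝ) / (m : ℝ) ^ d) atTop (nhds 0))
    (ε : ℝ) (hε : 0 < ε) :
    ∃ p₀ : ℕ, ∀ p ≥ p₀, ∀ᶠ n : ℕ in atTop,
      (1 - ε) * ((ΓB (n * p)).ncard : ℝ) ≤ ((sumN (ΓB p) n).ncard : ℝ) := by
  classical
  have hfinB : ∀ m, (ΓB m).Finite := fun m => (hfin m).subset (hBC m)
  have hgrowB : ∀ m : ℕ, 1 ≤ m → ((ΓB m).ncard : ℝ) ≤ c * (m : ℝ) ^ d := fun m hm =>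
    le_trans (by exact_mod_cast Set.ncard_le_ncard (hBC m) (hfin m)) (hgrow m hm)
  have hM := fun i => multiple_mem h0 hBC hfin haddC haddB c hgrow q w (e i) hw (he i) hnz
  choose M hM0 hM1 using hM
  let E : Fin d → W := fun i => M i • e i
  have hE : LinearIndependent ℤ E := by
    rw [Fintype.linearIndependent_iff] at hli ⊢
    intro g hg i
    have := hli (fun i => g i * M i) (by simpa [E, mul_smul, natCast_zsmul] using hg) i
    have h2 := hM0 i
    rcases mul_eq_zero.1 this with h | h
    · exact h
    · exfalso; norm_cast at h; omega
  obtain ⟨q1, w1, hw1, hE1⟩ := common_level h0 haddB E hM1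
  obtain ⟨x1, hx1⟩ := hne (N0 + 1) (by omega)
  obtain ⟨x0, hx0⟩ := hne N0 le_rfl
  have hQ := quot_finite (d := d) h0 hfinB haddB c hgrowB (q1 + (N0 + 1)) (by omega) (w1 + x1) E
    (haddB _ _ _ _ hw1 hx1) (fun i => by
      have := haddB _ _ _ _ (hE1 i) hx1
      rwa [add_right_comm] at this) hE
  set H := AddSubgroup.toIntSubmodule (levelDiff ΓB h0 haddB) with hH
  have hspan : Submodule.span ℤ (Set.range E) ≤ H := by
    rw [Submodule.span_le]
    rintro _ ⟨i, rfl⟩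
    exact hM1 i
  set N := (Submodule.span ℤ (Set.range E)).comap H.subtype with hN
  let eqv : N ≃ₗ[ℤ] Submodule.span ℤ (Set.range E) := Submodule.comapSubtypeEquivOfLe hspan
  have : Module.Finite ℤ (Submodule.span ℤ (Set.range E)) := Module.Finite.span_of_finite ℤ (Set.finite_range E)
  have : Module.Finite ℤ N := Module.Finite.equiv eqv.symm
  have : Module.Finite ℤ (H ⧸ N) := Module.Finite.of_finite
  have : Module.Finite ℤ H := Module.Finite.of_submodule_quotient N
  have : Module.Free ℤ H := inferInstance
  have hrank : Module.finrank ℤ H = d := by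
    have h1 := (Submodule.finiteQuotient_iff N).1 hQ
    rw [← h1, eqv.finrank_eq, finrank_span_eq_card hE, Fintype.card_fin]
  let φ : H ≃ₗ[ℤ] (Fin d → ℤ) := (Module.finBasisOfFinrankEq ℤ H hrank).equivFun
  set s : W := x1 - x0 with hs
  have hshift : ∀ m, ∀ γ ∈ ΓB m, γ - m • s ∈ H := by
    intro m γ hγ
    have hk : ∀ x r, x ∈ ΓB r → m • x ∈ ΓB (m * r) := fun x r hx =>
      sumN_sub h0 haddB r m (sumN_nsmul hx m)
    refine ⟨m * (N0 + 1), γ + m • x0, ?_, m • x1, hk _ _ hx1, ?_⟩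
    · have := haddB _ _ _ _ hγ (hk _ _ hx0)
      rwa [show m * (N0 + 1) = m + m * N0 by ring]
    · rw [hs, smul_sub]; abel
  let Γ' : ℕ → Set (Fin d → ℤ) := fun m => {z | ((φ.symm z : H) : W) + m • s ∈ ΓB m}
  let T : ℕ → (Fin d → ℤ) → W := fun m z => ((φ.symm z : H) : W) + m • s
  have hT : ∀ m, Function.Injective (T m) := by
    intro m x y hxy
    have : ((φ.symm x : H) : W) = φ.symm y := add_right_cancel hxy
    exact φ.symm.injective (Subtype.ext this)
  have hTadd : ∀ m n x y, T (m + n) (x + y) = T m x + T n y := by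
    intro m n x y
    simp only [T, map_add, Submodule.coe_add, add_smul]; abel
  have himg : ∀ m, T m '' Γ' m = ΓB m := by
    intro m
    apply Set.Subset.antisymm
    · rintro _ ⟨z, hz, rfl⟩; exact hz
    · intro γ hγ
      have hTz : T m (φ ⟨γ - m • s, hshift m γ hγ⟩) = γ := by simp [T]
      refine ⟨φ ⟨γ - m • s, hshift m γ hγ⟩, ?_, hTz⟩
      change T m _ ∈ ΓB m
      rwa [hTz]
  have hcard : ∀ m, (Γ' m).ncard = (ΓB m).ncard := fun m => by
    rw [← himg m, Set.ncard_image_of_injective _ (hT m)]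
  have hsum : ∀ p n, ∀ z ∈ sumN (Γ' p) n, T (n * p) z ∈ sumN (ΓB p) n := by
    intro p n
    induction n with
    | zero =>
      intro z hz
      have hz0 : z = 0 := hz
      subst hz0
      have : T (0 * p) 0 = 0 := by simp [T]
      rw [this]; rfl
    | succ n ih =>
      rintro _ ⟨x, hx, y, hy, rfl⟩
      rw [show (n + 1) * p = n * p + p by ring, hTadd]
      exact ⟨_, ih x hx, _, hy, rfl⟩
  have hadd' : ∀ m n x y, x ∈ Γ' m → y ∈ Γ' n → x + y ∈ Γ' (m + n) := by
    intro m n x y hx hy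
    change T (m + n) (x + y) ∈ ΓB (m + n)
    rw [hTadd]
    exact haddB _ _ _ _ hx hy
  obtain ⟨p₀, hp⟩ := semigroup_fujita Γ' (by change T 0 0 ∈ ΓB 0; simpa [T] using h0)
    (fun m => Set.Finite.of_finite_image (by rw [himg]; exact hfinB m) (hT m).injOn) hadd' c
    (fun m hm => by rw [hcard]; exact hgrowB m hm) N0
    (fun m hm => by
      have := hne m hm
      rw [← himg m] at this
      exact Set.image_nonempty.1 this)
    (by
      intro z
      obtain ⟨m, x, hx, y, hy, hxy⟩ := (φ.symm z).2
      rw [← himg m] at hx hy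
      obtain ⟨x', hx', rfl⟩ := hx
      obtain ⟨y', hy', rfl⟩ := hy
      refine ⟨m, x', hx', y', hy', ?_⟩
      apply φ.symm.injective
      apply Subtype.ext
      rw [← hxy]
      simp [T]) ε hε
  refine ⟨p₀, fun p hpp => ?_⟩
  filter_upwards [hp p hpp] with n hn
  rw [hcard] at hn
  refine hn.trans ?_
  have h2 : (sumN (Γ' p) n).ncard ≤ (sumN (ΓB p) n).ncard := by
    rw [← Set.ncard_image_of_injective _ (hT (n * p))]
    apply Set.ncard_le_ncard _ (sumN_finite (hfinB p) n)
    rintro _ ⟨z, hz, rfl⟩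
    exact hsum p n z hz
  exact_mod_cast h2

section val
variable {k L Γ₀ : Type*} [Field k] [Field L] [Algebra k L] [LinearOrderedCommGroupWithZero Γ₀]

lemma sum_ne_of_distinct (v : Valuation L Γ₀) {ι : Type*} (s : Finset ι) (t : ι → L)
    (ht : ∀ i ∈ s, t i ≠ 0) (hinj : ∀ i ∈ s, ∀ j ∈ s, v (t i) = v (t j) → i = j)
    (hs : s.Nonempty) : ∑ i ∈ s, t i ≠ 0 := by
  classical
  obtain ⟨i, hi, hmax⟩ := s.exists_max_image (fun i => v (t i)) hs
  rw [← Finset.add_sum_erase s t hi]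
  have h1 : v (∑ j ∈ s.erase i, t j) < v (t i) := by
    apply Valuation.map_sum_lt _ ((Valuation.ne_zero_iff v).2 (ht i hi))
    intro j hj
    rw [Finset.mem_erase] at hj
    exact lt_of_le_of_ne (hmax j hj.2) fun h => hj.1 (hinj j hj.2 i hi h)
  intro h
  have h2 := Valuation.map_add_eq_of_lt_left v h1
  rw [h, map_zero] at h2
  exact (Valuation.ne_zero_iff v).2 (ht i hi) h2.symm

/-- value set of a subspace -/
def valset (v : Valuation L Γ₀) (U : Submodule k L) : Set (Additive Γ₀ˣ) :=
  {γ | ∃ f ∈ U, v f = ((γ.toMul : Γ₀ˣ) : Γ₀)}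

lemma mem_valset (v : Valuation L Γ₀) (U : Submodule k L) {f : L} (hf : f ∈ U) (h0 : f ≠ 0) :
    Additive.ofMul (Units.mk0 (v f) ((Valuation.ne_zero_iff v).2 h0)) ∈ valset v U :=
  ⟨f, hf, rfl⟩

lemma valset_li (v : Valuation L Γ₀) (hk : ∀ c : k, c ≠ 0 → v (algebraMap k L c) = 1)
    (U : Submodule k L) :
    ∃ F : valset v U → U, LinearIndependent k F ∧ ∀ γ, v (F γ : L) = ((γ.1.toMul : Γ₀ˣ) : Γ₀) := by
  classical
  choose F hF hv using fun γ : valset v U => γ.2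
  refine ⟨fun γ => ⟨F γ, hF γ⟩, ?_, hv⟩
  have : LinearIndependent k F := by
    rw [linearIndependent_iff']
    intro s c hc
    by_contra hcon
    push Not at hcon
    obtain ⟨i, hi, hci⟩ := hcon
    have hF0 : ∀ γ, F γ ≠ 0 := fun γ h => by
      have := hv γ
      rw [h, map_zero] at this
      exact (Units.ne_zero _) this.symm
    have hvs : ∀ γ, c γ ≠ 0 → v (c γ • F γ) = ((γ.1.toMul : Γ₀ˣ) : Γ₀) := by
      intro γ hγ
      rw [Algebra.smul_def, map_mul, hk _ hγ, one_mul, hv]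
    refine sum_ne_of_distinct v (s.filter fun γ => c γ ≠ 0) (fun γ => c γ • F γ) ?_ ?_ ?_ ?_
    · intro γ hγ
      exact smul_ne_zero (Finset.mem_filter.1 hγ).2 (hF0 γ)
    · intro γ hγ δ hδ h
      rw [hvs _ (Finset.mem_filter.1 hγ).2, hvs _ (Finset.mem_filter.1 hδ).2] at h
      exact Subtype.ext (Additive.toMul.injective (Units.ext h))
    · exact ⟨i, by simp [hi, hci]⟩
    · rw [← hc]
      apply Finset.sum_subset (Finset.filter_subset _ _)
      intro x hx hx'
      have : c x = 0 := by
        by_contra h; exact hx' (Finset.mem_filter.2 ⟨hx, h⟩)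
      simp [this]
  exact LinearIndependent.of_comp U.subtype this

lemma valset_finite (v : Valuation L Γ₀) (hk : ∀ c : k, c ≠ 0 → v (algebraMap k L c) = 1)
    (U : Submodule k L) [FiniteDimensional k U] : (valset v U).Finite := by
  obtain ⟨F, hF, -⟩ := valset_li v hk U
  have := hF.finite
  exact Set.toFinite _

lemma valset_ncard_le (v : Valuation L Γ₀) (hk : ∀ c : k, c ≠ 0 → v (algebraMap k L c) = 1)
    (U : Submodule k L) [FiniteDimensional k U] : (valset v U).ncard ≤ Module.finrank k U := by
  obtain ⟨F, hF, -⟩ := valset_li v hk U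
  have := (valset_finite v hk U).fintype
  rw [← Nat.card_coe_set_eq, Nat.card_eq_fintype_card]
  exact hF.fintype_card_le_finrank

lemma finrank_le_valset (v : Valuation L Γ₀) (hk : ∀ c : k, c ≠ 0 → v (algebraMap k L c) = 1)
    (U : Submodule k L) [FiniteDimensional k U]
    (leaf : ∀ f ∈ U, ∀ g ∈ U, g ≠ 0 → v f = v g → ∃ c : k, v (f - c • g) < v g) :
    Module.finrank k U ≤ (valset v U).ncard := by
  obtain ⟨F, hF, hv⟩ := valset_li v hk U
  have hfin := valset_finite v hk U
  have := hfin.fintype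
  have hwf : (valset v U).IsWF := hfin.isWF
  have key : ∀ γ ∈ valset v U, ∀ f ∈ U, v f = ((γ.toMul : Γ₀ˣ) : Γ₀) →
      f ∈ Submodule.span k (Set.range fun γ => (F γ : L)) := by
    intro γ hγ
    apply Set.WellFoundedOn.induction hwf hγ
      (P := fun γ => ∀ f ∈ U, v f = ((γ.toMul : Γ₀ˣ) : Γ₀) →
        f ∈ Submodule.span k (Set.range fun γ => (F γ : L)))
    intro γ hγ ih f hf hvf
    have hg := hv ⟨γ, hγ⟩
    set g : L := ((F ⟨γ, hγ⟩ : U) : L) with hgdef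
    have hgs : g ∈ Submodule.span k (Set.range fun γ => (F γ : L)) :=
      Submodule.subset_span ⟨⟨γ, hγ⟩, rfl⟩
    have hg0 : g ≠ 0 := fun h => by
      rw [h, map_zero] at hg
      exact (Units.ne_zero _) hg.symm
    obtain ⟨c, hc⟩ := leaf f hf g (F _).2 hg0 (hvf.trans hg.symm)
    have hmem : f - c • g ∈ U := U.sub_mem hf (U.smul_mem _ (F _).2)
    have : f - c • g ∈ Submodule.span k (Set.range fun γ => (F γ : L)) := by
      by_cases h0 : f - c • g = 0
      · rw [h0]; exact Submodule.zero_mem _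
      · refine ih _ (mem_valset v U hmem h0) ?_ _ hmem rfl
        rw [hg] at hc
        exact hc
    have h3 := Submodule.add_mem _ this (Submodule.smul_mem _ c hgs)
    simpa using h3
  have hle : U ≤ Submodule.span k (Set.range fun γ => (F γ : L)) := by
    intro f hf
    by_cases h0 : f = 0
    · rw [h0]; exact Submodule.zero_mem _
    · exact key _ (mem_valset v U hf h0) f hf rfl
  have : FiniteDimensional k (Submodule.span k (Set.range fun γ => (F γ : L))) :=
    FiniteDimensional.span_of_finite k (Set.finite_range _)
  refine (Submodule.finrank_mono hle).trans ((finrank_range_le_card _).trans ?_)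
  rw [← Nat.card_coe_set_eq, Nat.card_eq_fintype_card]
end val

section laurent
variable {k L : Type*} [Field k] [Field L] [Algebra k L]

/-- Laurent monomials -/
noncomputable def lmon {ι : Type*} [Fintype ι] (y : ι → L) (β : ι → ℤ) : L := ∏ i, y i ^ β i

lemma lmon_add {ι : Type*} [Fintype ι] {y : ι → L} (h : ∀ i, y i ≠ 0) (α β : ι → ℤ) :
    lmon y (α + β) = lmon y α * lmon y β := by
  simp only [lmon, ← Finset.prod_mul_distrib, Pi.add_apply]
  exact Finset.prod_congr rfl fun i _ => zpow_add₀ (h i) _ _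

lemma lmon_zero {ι : Type*} [Fintype ι] (y : ι → L) : lmon y 0 = 1 := by simp [lmon]

lemma lmon_ne {ι : Type*} [Fintype ι] {y : ι → L} (h : ∀ i, y i ≠ 0) (α : ι → ℤ) :
    lmon y α ≠ 0 := Finset.prod_ne_zero_iff.2 fun i _ => zpow_ne_zero _ (h i)

lemma laurent_li {ι : Type*} [Fintype ι] (y : ι → L) (hy : AlgebraicIndependent k y) :
    LinearIndependent k (lmon y) := by
  classical
  have hy0 : ∀ i, y i ≠ 0 := fun i => hy.ne_zero i
  have hmono : LinearIndependent k (fun β : ι →₀ ℕ => ∏ i, y i ^ β i) := by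
    have h1 := (MvPolynomial.basisMonomials ι k).linearIndependent.map_injOn
      (MvPolynomial.aeval (R := k) y).toLinearMap (Function.Injective.injOn hy)
    have h2 : (fun β : ι →₀ ℕ => ∏ i, y i ^ β i) =
        (MvPolynomial.aeval (R := k) y).toLinearMap ∘ (MvPolynomial.basisMonomials ι k) := by
      funext β
      simp [MvPolynomial.aeval_monomial, Finsupp.prod_fintype]
    rw [h2]; exact h1
  rw [linearIndependent_iff']
  intro s c hc α hα
  let N : ι → ℤ := fun i => ∑ β ∈ s, |β i|
  have hN : ∀ β ∈ s, ∀ i, 0 ≤ β i + N i := by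
    intro β hβ i
    have : |β i| ≤ N i := Finset.single_le_sum (f := fun β : ι → ℤ => |β i|) (fun _ _ => abs_nonneg _) hβ
    have := neg_abs_le (β i)
    linarith
  let τ : (ι → ℤ) → (ι →₀ ℕ) := fun β => Finsupp.equivFunOnFinite.symm fun i => (β i + N i).toNat
  have hτ : ∀ β ∈ s, ∏ i, y i ^ (τ β i) = lmon y β * lmon y N := by
    intro β hβ
    rw [← lmon_add hy0]
    apply Finset.prod_congr rfl
    intro i _
    rw [← zpow_natCast]
    congr 1
    simp only [τ, Finsupp.equivFunOnFinite_symm_apply_apply, Pi.add_apply]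
    exact Int.toNat_of_nonneg (hN β hβ i)
  have hinj : Set.InjOn τ s := by
    intro β hβ γ hγ h
    funext i
    have h1 := DFunLike.congr_fun h i
    simp only [τ, Finsupp.equivFunOnFinite_symm_apply_apply] at h1
    have := hN β hβ i
    have := hN γ hγ i
    omega
  have hli : LinearIndependent k (fun β : s => ∏ i, y i ^ (τ β i)) :=
    hmono.comp (fun β : s => τ β) (fun a b h => Subtype.ext (hinj a.2 b.2 h))
  rw [Fintype.linearIndependent_iff] at hli
  refine hli (fun β => c β) ?_ ⟨α, hα⟩
  rw [← Finset.sum_coe_sort] at hc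
  calc _ = ∑ β : s, c β • (lmon y β * lmon y N) := by
        apply Finset.sum_congr rfl; intro β _; rw [hτ β β.2]
    _ = (∑ β : s, c β • lmon y β) * lmon y N := by
        rw [Finset.sum_mul]; apply Finset.sum_congr rfl; intro β _; rw [smul_mul_assoc]
    _ = 0 := by rw [hc, zero_mul]

lemma prod_zpow_eq_sum {ι : Type*} {z : L} (hz : z ≠ 0) (s : Finset ι) (α : ι → ℤ) :
    ∏ i ∈ s, z ^ α i = z ^ ∑ i ∈ s, α i := by
  classical
  induction s using Finset.induction_on with
  | empty => simp
  | insert a s ha ih => rw [Finset.prod_insert ha, Finset.sum_insert ha, ih, zpow_add₀ hz]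

/-- Laurent monomials in the ratios `f i / f 0` are linearly independent. -/
lemma laurent_ratio_li {d : ℕ} (f : Fin (d + 1) → L) (hf : AlgebraicIndependent k f) :
    LinearIndependent k (lmon (fun i : Fin d => f i.succ / f 0)) := by
  have hf0 : f 0 ≠ 0 := hf.ne_zero 0
  have h := (laurent_li f hf).comp
    (fun α : Fin d → ℤ => (Fin.cons (-∑ i, α i) α : Fin (d + 1) → ℤ)) (by
      intro a b h
      exact (Fin.cons_inj.1 h).2)
  convert h using 1
  funext α
  simp only [lmon, Function.comp, Fin.prod_univ_succ, Fin.cons_zero, Fin.cons_succ, div_zpow,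
    Finset.prod_div_distrib]
  rw [zpow_neg, div_eq_inv_mul]
  congr 2
  exact prod_zpow_eq_sum hf0 Finset.univ α

/-- existence of a valuation separating the Laurent monomials -/
lemma exists_valuation {d : ℕ} (x : Fin d → L) (hx0 : ∀ i, x i ≠ 0)
    (hx : LinearIndependent k (lmon x)) :
    ∃ B : ValuationSubring L, (∀ c : k, c ≠ 0 → B.valuation (algebraMap k L c) = 1) ∧
      ∀ α : Fin d → ℤ, α ≠ 0 → B.valuation (lmon x α) ≠ 1 := by
  classical
  let S : Submonoid L :=
    { carrier := {z | ∃ α : Fin d → ℤ, 0 ≤ toLex α ∧ lmon x α = z}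
      one_mem' := ⟨0, le_rfl, lmon_zero x⟩
      mul_mem' := by
        rintro _ _ ⟨α, hα, rfl⟩ ⟨β, hβ, rfl⟩
        exact ⟨α + β, add_nonneg hα hβ, lmon_add hx0 α β⟩ }
  let R := Algebra.adjoin k (S : Set L)
  let P : Submodule k L := Submodule.span k {z | ∃ α : Fin d → ℤ, 0 < toLex α ∧ lmon x α = z}
  have hR : Subalgebra.toSubmodule R = Submodule.span k (S : Set L) := by
    rw [Algebra.adjoin_eq_span, Submonoid.closure_eq]
  have hRP : ∀ a ∈ R, ∀ b ∈ P, a * b ∈ P := by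
    intro a ha b hb
    have ha' : a ∈ Submodule.span k (S : Set L) := by rw [← hR]; exact ha
    have : Submodule.span k (S : Set L) * P ≤ P := by
      rw [Submodule.span_mul_span, Submodule.span_le]
      rintro _ ⟨_, ⟨α, hα, rfl⟩, _, ⟨β, hβ, rfl⟩, rfl⟩
      exact Submodule.subset_span ⟨α + β, add_pos_of_nonneg_of_pos hα hβ, lmon_add hx0 α β⟩
    exact this (Submodule.mul_mem_mul ha' hb)
  have h1P : (1 : L) ∉ P := by
    intro h
    have h2 := hx.notMem_span_image (s := {α | 0 < toLex α}) (x := 0) (lt_irrefl (toLex (0 : Fin d → ℤ)))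
    apply h2
    rw [lmon_zero]
    exact h
  let I : Ideal R.toSubring :=
    { carrier := {r | (r : L) ∈ P}
      add_mem' := fun ha hb => P.add_mem ha hb
      zero_mem' := P.zero_mem
      smul_mem' := fun c r hr => hRP c c.2 r hr }
  have hI : I ≠ ⊤ := by
    intro h
    exact h1P ((Ideal.eq_top_iff_one I).1 h)
  obtain ⟨B, hRB, hIB⟩ := Ideal.image_subset_nonunits_valuationSubring I hI
  have hpos : ∀ α : Fin d → ℤ, 0 < toLex α → B.valuation (lmon x α) < 1 := by
    intro α hα
    rw [← B.mem_nonunits_iff]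
    apply hIB
    refine ⟨⟨lmon x α, Algebra.subset_adjoin ⟨α, hα.le, rfl⟩⟩, ?_, rfl⟩
    exact Submodule.subset_span ⟨α, hα, rfl⟩
  refine ⟨B, ?_, ?_⟩
  · have hle : ∀ c : k, B.valuation (algebraMap k L c) ≤ 1 := fun c =>
      (B.valuation_le_one_iff _).2 (hRB (R.algebraMap_mem c))
    intro c hc
    apply le_antisymm (hle c)
    have := hle c⁻¹
    rw [map_inv₀, map_inv₀] at this
    have h0 : B.valuation (algebraMap k L c) ≠ 0 := by simpa using hc
    exact (inv_le_one₀ (zero_lt_iff.2 h0)).1 this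
  · intro α hα h1
    rcases lt_trichotomy (toLex α) 0 with h | h | h
    · have h2 := hpos (-α) (by have h5 := neg_pos.2 h; exact h5)
      have h3 : lmon x α * lmon x (-α) = 1 := by rw [← lmon_add hx0]; simp [lmon_zero]
      have h4 := congrArg B.valuation h3
      rw [map_mul, h1, one_mul, map_one] at h4
      rw [h4] at h2
      exact lt_irrefl _ h2
    · exact hα h
    · exact (hpos α h).ne h1
end laurent

section leaf
variable {k L Γ₀ : Type*} [Field k] [Field L] [Algebra k L] [LinearOrderedCommGroupWithZero Γ₀]

lemma val_aeval [IsAlgClosed k] (v : Valuation L Γ₀)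
    (hk : ∀ c : k, c ≠ 0 → v (algebraMap k L c) = 1) (y : L)
    (hy : ∀ c : k, v (y - algebraMap k L c) = 1) (P : Polynomial k) (hP : P ≠ 0) :
    v (Polynomial.aeval y P) = 1 := by
  rw [(IsAlgClosed.splits P).eq_prod_roots, map_mul, map_mul, Polynomial.aeval_C,
    hk _ (Polynomial.leadingCoeff_ne_zero.2 hP), one_mul, map_multiset_prod, map_multiset_prod]
  apply Multiset.prod_eq_one
  intro z hz
  simp only [Multiset.map_map, Multiset.mem_map, Function.comp] at hz
  obtain ⟨c, -, rfl⟩ := hz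
  simpa using hy c

lemma leaf_lemma [IsAlgClosed k] (v : Valuation L Γ₀)
    (hk : ∀ c : k, c ≠ 0 → v (algebraMap k L c) = 1) {d : ℕ} (x : Fin d → L)
    (hx0 : ∀ i, x i ≠ 0) (hx : ∀ α : Fin d → ℤ, α ≠ 0 → v (lmon x α) ≠ 1) (y : L) (hy : v y = 1)
    (n : ℕ) (hn : ¬ LinearIndependent k (fun z : (Fin d → Fin n) × Fin n =>
      lmon x (fun i => ((z.1 i : ℕ) : ℤ)) * y ^ (z.2 : ℕ))) :
    ∃ c : k, v (y - algebraMap k L c) < 1 := by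
  classical
  by_contra hcon
  push Not at hcon
  have hy1 : ∀ c : k, v (y - algebraMap k L c) = 1 := by
    intro c
    apply le_antisymm _ (hcon c)
    refine (v.map_sub _ _).trans (max_le hy.le ?_)
    by_cases hc : c = 0
    · simp [hc]
    · exact (hk c hc).le
  rw [Fintype.not_linearIndependent_iff] at hn
  obtain ⟨g, hg, ⟨α0, j0⟩, hne⟩ := hn
  let P : (Fin d → Fin n) → Polynomial k := fun α => ∑ j : Fin n, Polynomial.monomial (j : ℕ) (g (α, j))
  have hP0 : P α0 ≠ 0 := by
    intro h
    have := congrArg (fun Q => Polynomial.coeff Q (j0 : ℕ)) h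
    simp only [P, Polynomial.finsetSum_coeff, Polynomial.coeff_monomial, Polynomial.coeff_zero] at this
    rw [Finset.sum_eq_single j0] at this
    · simp at this; exact hne this
    · intro b _ hb
      rw [if_neg]; intro h; exact hb (Fin.ext h)
    · simp
  let A : (Fin d → Fin n) → (Fin d → ℤ) := fun α i => ((α i : ℕ) : ℤ)
  have hsum : ∑ α, lmon x (A α) * Polynomial.aeval y (P α) = 0 := by
    rw [← hg, Fintype.sum_prod_type]
    apply Finset.sum_congr rfl
    intro α _
    simp only [P, map_sum, Polynomial.aeval_monomial, Finset.mul_sum]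
    apply Finset.sum_congr rfl
    intro j _
    rw [Algebra.smul_def]; simp only [A]; ring
  have hval : ∀ α, P α ≠ 0 → v (lmon x (A α) * Polynomial.aeval y (P α)) = v (lmon x (A α)) := by
    intro α h
    rw [map_mul, val_aeval v hk y hy1 _ h, mul_one]
  refine sum_ne_of_distinct v (Finset.univ.filter fun α => P α ≠ 0)
    (fun α => lmon x (A α) * Polynomial.aeval y (P α)) ?_ ?_ ⟨α0, by simp [hP0]⟩ ?_
  · intro α hα
    have := hval α (Finset.mem_filter.1 hα).2
    rw [← Valuation.ne_zero_iff v, this, Valuation.ne_zero_iff]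
    exact lmon_ne hx0 _
  · intro α hα β hβ h
    rw [hval α (Finset.mem_filter.1 hα).2, hval β (Finset.mem_filter.1 hβ).2] at h
    by_contra hab
    apply hx (A α - A β)
    · intro h0
      apply hab
      funext i
      have := congrFun h0 i
      simp only [A, Pi.sub_apply, Pi.zero_apply] at this
      exact Fin.ext (by omega)
    · have h1 : lmon x (A α - A β) * lmon x (A β) = lmon x (A α) := by
        rw [← lmon_add hx0]; simp
      have h2 := congrArg v h1
      rw [map_mul, h] at h2
      have h3 : v (lmon x (A β)) ≠ 0 := (Valuation.ne_zero_iff v).2 (lmon_ne hx0 _)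
      exact mul_right_cancel₀ h3 (h2.trans (one_mul _).symm)
  · rw [← hsum]
    apply Finset.sum_subset (Finset.filter_subset _ _)
    intro α _ hα
    have : P α = 0 := by
      by_contra h; exact hα (by simp [h])
    simp [this]

variable {𝒞 : ℕ → Submodule k L}

lemma pow_mem_level (h1 : (1 : L) ∈ 𝒞 0) (hmul : ∀ m n, 𝒞 m * 𝒞 n ≤ 𝒞 (m + n)) {f : L} {p : ℕ}
    (hf : f ∈ 𝒞 p) (n : ℕ) : f ^ n ∈ 𝒞 (n * p) := by
  induction n with
  | zero => simpa using h1
  | succ n ih =>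
    rw [pow_succ, add_mul, one_mul]
    exact hmul _ _ (Submodule.mul_mem_mul ih hf)

lemma prod_mem_level (h1 : (1 : L) ∈ 𝒞 0) (hmul : ∀ m n, 𝒞 m * 𝒞 n ≤ 𝒞 (m + n)) {ι : Type*}
    (s : Finset ι) (f : ι → L) {p : ℕ} (hf : ∀ i ∈ s, f i ∈ 𝒞 p) :
    ∏ i ∈ s, f i ∈ 𝒞 (s.card * p) := by
  classical
  induction s using Finset.induction_on with
  | empty => simpa using h1
  | insert a s ha ih =>
    rw [Finset.prod_insert ha, Finset.card_insert_of_notMem ha, add_mul, one_mul, add_comm]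
    exact hmul _ _ (Submodule.mul_mem_mul (hf a (by simp)) (ih fun i hi => hf i (by simp [hi])))

lemma growth_dep (h1 : (1 : L) ∈ 𝒞 0) (hmul : ∀ m n, 𝒞 m * 𝒞 n ≤ 𝒞 (m + n))
    (hfd : ∀ m, FiniteDimensional k (𝒞 m)) {d : ℕ} (c : ℝ)
    (hgrow : ∀ m : ℕ, 1 ≤ m → (Module.finrank k (𝒞 m) : ℝ) ≤ c * (m : ℝ) ^ d)
    (p : ℕ) (hp : 1 ≤ p) (f : Fin (d + 1) → L) (hf : ∀ i, f i ∈ 𝒞 p) (hf0 : f 0 ≠ 0)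
    (m : ℕ) (φ g : L) (hφ : φ ∈ 𝒞 m) (hg : g ∈ 𝒞 m) (hg0 : g ≠ 0) :
    ∃ n, ¬ LinearIndependent k (fun z : (Fin d → Fin n) × Fin n =>
      lmon (fun i : Fin d => f i.succ / f 0) (fun i => ((z.1 i : ℕ) : ℤ)) * (φ / g) ^ (z.2 : ℕ)) := by
  classical
  set q := (d + 1) * p + m with hq
  obtain ⟨n', hn'⟩ := exists_nat_gt (c * (q : ℝ) ^ d)
  set n := n' + 1 with hn
  refine ⟨n, fun hli => ?_⟩
  let D : L := f 0 ^ ((d + 1) * n) * g ^ n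
  have hD : D ≠ 0 := mul_ne_zero (pow_ne_zero _ hf0) (pow_ne_zero _ hg0)
  have hmem : ∀ z : (Fin d → Fin n) × Fin n, D *
      (lmon (fun i : Fin d => f i.succ / f 0) (fun i => ((z.1 i : ℕ) : ℤ)) * (φ / g) ^ (z.2 : ℕ)) ∈
      𝒞 (n * q) := by
    rintro ⟨α, j⟩
    have hA : ∀ i : Fin d, f i.succ ^ (α i : ℕ) * f 0 ^ (n - α i) ∈ 𝒞 (n * p) := by
      intro i
      have := hmul _ _ (Submodule.mul_mem_mul (pow_mem_level h1 hmul (hf i.succ) (α i))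
        (pow_mem_level h1 hmul (hf 0) (n - α i)))
      rwa [← add_mul, Nat.add_sub_cancel' (α i).2.le] at this
    have hB : φ ^ (j : ℕ) * g ^ (n - j) ∈ 𝒞 (n * m) := by
      have := hmul _ _ (Submodule.mul_mem_mul (pow_mem_level h1 hmul hφ j)
        (pow_mem_level h1 hmul hg (n - j)))
      rwa [← add_mul, Nat.add_sub_cancel' j.2.le] at this
    have hC := prod_mem_level h1 hmul Finset.univ _ (fun i _ => hA i)
    have hE := hmul _ _ (Submodule.mul_mem_mul (hmul _ _ (Submodule.mul_mem_mul
      (pow_mem_level h1 hmul (hf 0) n) hC)) hB)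
    have hlev : n * p + Finset.card (Finset.univ : Finset (Fin d)) * (n * p) + n * m = n * q := by
      rw [hq]; simp; ring
    rw [hlev] at hE
    convert hE using 1
    have e1 : ∏ i : Fin d, f i.succ ^ (α i : ℕ) * f 0 ^ (n - α i) =
        lmon (fun i : Fin d => f i.succ / f 0) (fun i => ((α i : ℕ) : ℤ)) * f 0 ^ (d * n) := by
      have : f 0 ^ (d * n) = ∏ i : Fin d, f 0 ^ n := by simp [← pow_mul, mul_comm]
      rw [this, lmon, ← Finset.prod_mul_distrib]
      apply Finset.prod_congr rfl
      intro i _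
      rw [zpow_natCast, div_pow, pow_sub₀ _ hf0 (α i).2.le]
      field_simp
    have e2 : φ ^ (j : ℕ) * g ^ (n - j) = (φ / g) ^ (j : ℕ) * g ^ n := by
      rw [div_pow, pow_sub₀ _ hg0 j.2.le]; field_simp
    rw [e1, e2]
    simp only [D]; ring
  have hli2 : LinearIndependent k (fun z : (Fin d → Fin n) × Fin n => (⟨_, hmem z⟩ : 𝒞 (n * q))) := by
    apply LinearIndependent.of_comp (𝒞 (n * q)).subtype
    have := hli.map_injOn (LinearMap.mulLeft k D) (fun a _ b _ h => mul_left_cancel₀ hD h)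
    exact this
  have hcard := hli2.fintype_card_le_finrank
  simp only [Fintype.card_prod, Fintype.card_fun, Fintype.card_fin] at hcard
  have hq1 : 1 ≤ q := by rw [hq]; nlinarith
  have h2 := hgrow (n * q) (Nat.mul_pos (by omega) hq1)
  have h3 : ((n : ℝ) ^ d) * n ≤ c * (q : ℝ) ^ d * (n : ℝ) ^ d := by
    calc ((n : ℝ) ^ d) * n = ((n ^ d * n : ℕ) : ℝ) := by push_cast; ring
      _ ≤ (Module.finrank k (𝒞 (n * q)) : ℝ) := by exact_mod_cast hcard
      _ ≤ _ := h2
      _ = _ := by push_cast; rw [mul_pow]; ring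
  have hnpos : (0 : ℝ) < n := by rw [hn]; positivity
  have h4 : (n : ℝ) ≤ c * (q : ℝ) ^ d := by
    have : 0 < (n : ℝ) ^ d := by positivity
    nlinarith
  have : (n' : ℝ) ≤ n := by rw [hn]; push_cast; linarith
  linarith
end leaf

section core
variable {k L : Type*} [Field k] [Field L] [Algebra k L]

lemma valset_add {Γ₀ : Type*} [LinearOrderedCommGroupWithZero Γ₀] (v : Valuation L Γ₀)
    {U V T : Submodule k L} (h : U * V ≤ T) {a b : Additive Γ₀ˣ} (ha : a ∈ valset v U)
    (hb : b ∈ valset v V) : a + b ∈ valset v T := by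
  obtain ⟨f, hf, hfa⟩ := ha
  obtain ⟨g, hg, hgb⟩ := hb
  refine ⟨f * g, h (Submodule.mul_mem_mul hf hg), ?_⟩
  rw [map_mul, hfa, hgb, toMul_add, Units.val_mul]

lemma sumN_valset {Γ₀ : Type*} [LinearOrderedCommGroupWithZero Γ₀] (v : Valuation L Γ₀)
    (U : Submodule k L) (n : ℕ) : sumN (valset v U) n ⊆ valset v (U ^ n) := by
  induction n with
  | zero =>
    intro x hx
    have : x = 0 := hx
    subst this
    exact ⟨1, by simp, by simp⟩
  | succ n ih =>
    rintro _ ⟨x, hx, y, hy, rfl⟩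
    exact valset_add v (le_of_eq (pow_succ U n).symm) (ih hx) hy

lemma pow_le_level {R : Type*} [CommRing R] [Algebra k R] {ℬ : ℕ → Submodule k R}
    (h1 : (1 : R) ∈ ℬ 0) (hmul : ∀ m n, ℬ m * ℬ n ≤ ℬ (m + n)) (p n : ℕ) :
    (ℬ p) ^ n ≤ ℬ (n * p) := by
  induction n with
  | zero => rw [pow_zero, zero_mul]; exact Submodule.one_le.2 h1
  | succ n ih =>
    rw [pow_succ, add_mul, one_mul]
    exact (mul_le_mul' ih le_rfl).trans (hmul _ _)

theorem core_fujita [IsAlgClosed k] {𝒞 ℬ : ℕ → Submodule k L} (h1 : (1 : L) ∈ ℬ 0)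
    (hBC : ∀ m, ℬ m ≤ 𝒞 m)
    (hmulC : ∀ m n, 𝒞 m * 𝒞 n ≤ 𝒞 (m + n)) (hmulB : ∀ m n, ℬ m * ℬ n ≤ ℬ (m + n))
    (hfd : ∀ m, FiniteDimensional k (𝒞 m)) {d : ℕ} (c : ℝ)
    (hgrow : ∀ m : ℕ, 1 ≤ m → (Module.finrank k (𝒞 m) : ℝ) ≤ c * (m : ℝ) ^ d)
    (p : ℕ) (hp : 1 ≤ p) (f : Fin (d + 1) → L) (hf : ∀ i, f i ∈ 𝒞 p)
    (hfi : AlgebraicIndependent k f) (N0 : ℕ) (hne : ∀ m, N0 ≤ m → ℬ m ≠ ⊥)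
    (hnz : ¬ Tendsto (fun m : ℕ => (Module.finrank k (ℬ m) : ℝ) / (m : ℝ) ^ d) atTop (nhds 0))
    (ε : ℝ) (hε : 0 < ε) :
    ∃ p₀ : ℕ, ∀ p ≥ p₀, ∀ᶠ n : ℕ in atTop,
      (1 - ε) * (Module.finrank k (ℬ (n * p)) : ℝ) ≤
        (Module.finrank k ((ℬ p) ^ n : Submodule k L) : ℝ) := by
  classical
  have hf0 : ∀ i, f i ≠ 0 := fun i => hfi.ne_zero i
  set x : Fin d → L := fun i => f i.succ / f 0 with hx
  have hx0 : ∀ i, x i ≠ 0 := fun i => div_ne_zero (hf0 _) (hf0 _)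
  obtain ⟨O, hk, hsep⟩ := exists_valuation x hx0 (laurent_ratio_li f hfi)
  set v := O.valuation with hv
  have hfdB : ∀ m, FiniteDimensional k (ℬ m) := fun m => Submodule.finiteDimensional_of_le (hBC m)
  have leaf : ∀ m, ∀ φ ∈ 𝒞 m, ∀ g ∈ 𝒞 m, g ≠ 0 → v φ = v g → ∃ c : k, v (φ - c • g) < v g := by
    intro m φ hφ g hg hg0 hvv
    have hvg : v g ≠ 0 := (Valuation.ne_zero_iff v).2 hg0
    obtain ⟨n, hn⟩ := growth_dep (hBC 0 h1) hmulC hfd c hgrow p hp f hf (hf0 0) m φ g hφ hg hg0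
    obtain ⟨c, hc⟩ := leaf_lemma v hk x hx0 hsep (φ / g)
      (by rw [map_div₀, hvv, div_self hvg]) n hn
    refine ⟨c, ?_⟩
    have : φ - c • g = (φ / g - algebraMap k L c) * g := by
      rw [Algebra.smul_def]; field_simp
    rw [this, map_mul]
    exact mul_lt_of_lt_one_left (zero_lt_iff.2 hvg) hc
  have hcardC : ∀ m, (valset v (𝒞 m)).ncard = Module.finrank k (𝒞 m) := fun m =>
    le_antisymm (valset_ncard_le v hk _) (finrank_le_valset v hk _ (leaf m))
  have hcardB : ∀ m, (valset v (ℬ m)).ncard = Module.finrank k (ℬ m) := fun m =>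
    le_antisymm (valset_ncard_le v hk _) (finrank_le_valset v hk _
      (fun φ hφ g hg => leaf m φ (hBC m hφ) g (hBC m hg)))
  let u : L → Additive (O.ValueGroup)ˣ := fun z =>
    if h : z ≠ 0 then Additive.ofMul (Units.mk0 (v z) ((Valuation.ne_zero_iff v).2 h)) else 0
  have hu : ∀ z, z ≠ 0 → (((u z).toMul : (O.ValueGroup)ˣ) : O.ValueGroup) = v z := by
    intro z hz
    simp [u, hz]
  have humul : ∀ a b, a ≠ 0 → b ≠ 0 → u (a * b) = u a + u b := by
    intro a b ha hb
    apply Additive.toMul.injective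
    apply Units.ext
    rw [toMul_add, Units.val_mul, hu _ (mul_ne_zero ha hb), hu _ ha, hu _ hb, map_mul]
  let e : Fin d → Additive (O.ValueGroup)ˣ := fun i => u (x i)
  have hlmon : ∀ α : Fin d → ℤ, (((∑ i, α i • e i).toMul : (O.ValueGroup)ˣ) : O.ValueGroup) = v (lmon x α) := by
    intro α
    rw [toMul_sum, Units.coe_prod, lmon, map_prod]
    apply Finset.prod_congr rfl
    intro i _
    rw [toMul_zsmul, Units.val_zpow_eq_zpow_val, hu _ (hx0 i), map_zpow₀]
  have hli : LinearIndependent ℤ e := by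
    rw [Fintype.linearIndependent_iff]
    intro α hα
    by_contra hcon
    push Not at hcon
    obtain ⟨i, hi⟩ := hcon
    apply hsep α (fun h => hi (by rw [h]; rfl))
    rw [← hlmon, hα]; rfl
  obtain ⟨p₀, hp₀⟩ := group_fujita (W := Additive (O.ValueGroup)ˣ)
    (ΓB := fun m => valset v (ℬ m)) (ΓC := fun m => valset v (𝒞 m)) (d := d)
    ⟨1, h1, by simp⟩
    (fun m => by rintro γ ⟨f, hf, h⟩; exact ⟨f, hBC m hf, h⟩)
    (fun m => valset_finite v hk _)
    (fun m n a b ha hb => valset_add v (hmulC m n) ha hb)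
    (fun m n a b ha hb => valset_add v (hmulB m n) ha hb) c
    (fun m hm => by rw [hcardC]; exact hgrow m hm) N0
    (fun m hm => by
      obtain ⟨z, hz, hz0⟩ := (Submodule.ne_bot_iff _).1 (hne m hm)
      exact ⟨_, mem_valset v _ hz hz0⟩)
    p (u (f 0)) e ⟨f 0, hf 0, (hu _ (hf0 0)).symm⟩
    (fun i => ⟨f i.succ, hf _, by
      have h2 : f i.succ = f 0 * x i := by
        rw [hx]; have := hf0 0; field_simp
      rw [← humul _ _ (hf0 0) (hx0 i), ← h2, hu _ (hf0 _)]⟩)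
    hli (by simpa only [hcardB] using hnz) ε hε
  refine ⟨p₀, fun p hp => ?_⟩
  filter_upwards [hp₀ p hp] with n hn
  rw [hcardB] at hn
  refine hn.trans ?_
  have : FiniteDimensional k ((ℬ p) ^ n : Submodule k L) :=
    Submodule.finiteDimensional_of_le (pow_le_level h1 hmulB p n)
  have h3 : (sumN (valset v (ℬ p)) n).ncard ≤ Module.finrank k ((ℬ p) ^ n : Submodule k L) :=
    (Set.ncard_le_ncard (sumN_valset v (ℬ p) n) (valset_finite v hk _)).trans
      (valset_ncard_le v hk _)
  exact_mod_cast h3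
end core

section krull
variable {k R : Type*} [Field k] [CommRing R] [IsDomain R] [Algebra k R]

lemma krull_eq {s : ℕ} (g : MvPolynomial (Fin s) k →ₐ[k] R) (hg : Function.Injective g)
    (hfin : g.Finite) : ringKrullDim R = s := by
  let P := MvPolynomial (Fin s) k
  let _ : Algebra P R := g.toRingHom.toAlgebra
  have : Module.Finite P R := hfin
  have hIntegral : Algebra.IsIntegral P R := inferInstance
  have hP : ringKrullDim P = s := by
    simp [P, MvPolynomial.ringKrullDim_of_isNoetherianRing]
  rw [← hP]
  apply le_antisymm
  · apply Order.krullDim_le_of_strictMono (PrimeSpectrum.comap (algebraMap P R))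
    intro I J hIJ
    exact Ideal.IsIntegral.comap_lt_comap (R := P) (I := I.asIdeal) (J := J.asIdeal) hIJ
  · refine iSup_le fun l => ?_
    have hinj : Function.Injective (algebraMap P R) := hg
    obtain ⟨Q, hQ, hQp⟩ := Ideal.exists_ideal_over_prime_of_isIntegral_of_isDomain (S := R)
      (RelSeries.head l).asIdeal (by
        rw [(RingHom.injective_iff_ker_eq_bot _).1 hinj]; exact bot_le)
    have : Q.LiesOver (RelSeries.head l).asIdeal := ⟨hQp.symm⟩
    obtain ⟨l', hl', -⟩ := Ideal.exists_ltSeries_of_hasGoingUp l Q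
    rw [← hl']
    exact le_iSup (fun l : LTSeries (PrimeSpectrum R) => (l.length : WithBot ℕ∞)) l'

lemma exists_alg_indep {s : ℕ} (g : MvPolynomial (Fin s) k →ₐ[k] R) (hg : Function.Injective g)
    (hfin : g.Finite) (S : Set R) (hS : Algebra.adjoin k S = ⊤) :
    ∃ f : Fin s → R, (∀ i, f i ∈ S) ∧ AlgebraicIndependent k f := by
  have hfaith : FaithfulSMul k R := inferInstance
  have hb : IsTranscendenceBasis k (fun i => g (MvPolynomial.X i)) := by
    rw [isTranscendenceBasis_iff_algebraicIndependent_isAlgebraic]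
    refine ⟨?_, ?_⟩
    · have := (MvPolynomial.algebraicIndependent_X (Fin s) k).map' hg
      exact this
    · have hrange : Algebra.adjoin k (Set.range fun i => g (MvPolynomial.X i)) = g.range := by
        rw [← Set.image_univ, ← Algebra.map_top, ← MvPolynomial.adjoin_range_X, AlgHom.map_adjoin]
        congr 1
        ext; simp
      rw [hrange]
      constructor
      intro r
      apply IsIntegral.isAlgebraic
      have hr := hfin.to_isIntegral r
      obtain ⟨q, hq, hq0⟩ := hr
      refine ⟨q.map g.rangeRestrict.toRingHom, hq.map _, ?_⟩
      rw [Polynomial.eval₂_map]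
      exact hq0
  have halg : Algebra.IsAlgebraic (Algebra.adjoin k S) R := by
    rw [hS]
    constructor
    intro r
    exact isAlgebraic_algebraMap (⟨r, trivial⟩ : (⊤ : Subalgebra k R))
  obtain ⟨t, htS, ht⟩ := exists_isTranscendenceBasis_subset (R := k) S
  have hc := hb.lift_cardinalMk_eq ht
  obtain ⟨e⟩ : Nonempty (Fin s ≃ t) := Cardinal.lift_mk_eq'.1 hc
  exact ⟨fun i => e i, fun i => htS (e i).2, ht.1.comp e e.injective⟩
end krull

section growth
variable {k : Type*} [Field k]

/-- span of monomial images with bounded exponents -/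
noncomputable def boxSpan {R : Type*} [CommRing R] [Algebra k R] {s : ℕ}
    (g : MvPolynomial (Fin s) k →ₐ[k] R) (D : ℕ) : Submodule k R :=
  Submodule.span k (Set.range fun α : Fin s → Fin (D + 1) => ∏ i, g (MvPolynomial.X i) ^ (α i : ℕ))

lemma boxSpan_mul {R : Type*} [CommRing R] [Algebra k R] {s : ℕ}
    (g : MvPolynomial (Fin s) k →ₐ[k] R) (D E : ℕ) :
    boxSpan g D * boxSpan g E ≤ boxSpan g (D + E) := by
  rw [boxSpan, boxSpan, Submodule.span_mul_span, Submodule.span_le]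
  rintro _ ⟨_, ⟨α, rfl⟩, _, ⟨β, rfl⟩, rfl⟩
  apply Submodule.subset_span
  refine ⟨fun i => ⟨α i + β i, by have := (α i).2; have := (β i).2; omega⟩, ?_⟩
  simp [pow_add, Finset.prod_mul_distrib]

lemma boxSpan_mono {R : Type*} [CommRing R] [Algebra k R] {s : ℕ}
    (g : MvPolynomial (Fin s) k →ₐ[k] R) {D E : ℕ} (h : D ≤ E) :
    boxSpan g D ≤ boxSpan g E := by
  rw [boxSpan, Submodule.span_le]
  rintro _ ⟨α, rfl⟩
  apply Submodule.subset_span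
  exact ⟨fun i => ⟨α i, by have := (α i).2; omega⟩, rfl⟩

lemma mem_boxSpan {R : Type*} [CommRing R] [Algebra k R] {s : ℕ}
    (g : MvPolynomial (Fin s) k →ₐ[k] R) (P : MvPolynomial (Fin s) k) :
    ∃ D, g P ∈ boxSpan g D := by
  induction P using MvPolynomial.induction_on' with
  | monomial u a =>
    refine ⟨∑ i, u i, ?_⟩
    have : g (MvPolynomial.monomial u a) = a • ∏ i, g (MvPolynomial.X i) ^ (u i) := by
      rw [MvPolynomial.monomial_eq, map_mul, Finsupp.prod_fintype _ _ (by simp), map_prod,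
        ← MvPolynomial.algebraMap_eq, AlgHom.commutes, Algebra.smul_def]
      simp
    rw [this]
    apply Submodule.smul_mem
    apply Submodule.subset_span
    refine ⟨fun i => ⟨u i, ?_⟩, rfl⟩
    exact Nat.lt_succ_of_le (Finset.single_le_sum (f := fun i => u i) (fun _ _ => Nat.zero_le _) (Finset.mem_univ i))
  | add p q hp hq =>
    obtain ⟨D, hD⟩ := hp
    obtain ⟨E, hE⟩ := hq
    refine ⟨max D E, ?_⟩
    rw [map_add]
    exact Submodule.add_mem _ (boxSpan_mono g (le_max_left _ _) hD) (boxSpan_mono g (le_max_right _ _) hE)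

lemma growth_noether {R : Type*} [CommRing R] [Algebra k R] {s : ℕ}
    (g : MvPolynomial (Fin s) k →ₐ[k] R) (hfin : g.Finite) (V : Submodule k R)
    (hV : V.FG) :
    ∃ C : ℕ, ∀ n, ∃ U : Submodule k R, FiniteDimensional k U ∧
      Module.finrank k U ≤ C * (n + 1) ^ s ∧ ∀ j ≤ n, V ^ j ≤ U := by
  classical
  obtain ⟨N, b, hb⟩ : ∃ (N : ℕ) (b : Fin N → R), ∀ r : R, ∃ q : Fin N → MvPolynomial (Fin s) k,
      ∑ j, g (q j) * b j = r := by
    let _ : Algebra (MvPolynomial (Fin s) k) R := g.toRingHom.toAlgebra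
    have : Module.Finite (MvPolynomial (Fin s) k) R := hfin
    obtain ⟨N, b, hb⟩ := Module.Finite.exists_fin (R := MvPolynomial (Fin s) k) (M := R)
    refine ⟨N, b, fun r => ?_⟩
    have hr : r ∈ Submodule.span (MvPolynomial (Fin s) k) (Set.range b) := by rw [hb]; trivial
    obtain ⟨q, hq⟩ := (Submodule.mem_span_range_iff_exists_fun _).1 hr
    exact ⟨q, hq⟩
  let T : Submodule k R := Submodule.span k (Set.range b)
  let M : ℕ → Submodule k R := fun D => boxSpan g D * T
  have hMmono : ∀ {D E}, D ≤ E → M D ≤ M E := fun h => mul_le_mul' (boxSpan_mono g h) le_rfl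
  have hMall : ∀ r : R, ∃ D, r ∈ M D := by
    intro r
    obtain ⟨q, rfl⟩ := hb r
    choose D hD using fun j => mem_boxSpan g (q j)
    refine ⟨∑ j, D j, Submodule.sum_mem _ fun j _ => ?_⟩
    refine hMmono (Finset.single_le_sum (f := D) (fun _ _ => Nat.zero_le _) (Finset.mem_univ j)) ?_
    exact Submodule.mul_mem_mul (hD j) (Submodule.subset_span ⟨j, rfl⟩)
  have hMfg : ∀ U : Submodule k R, U.FG → ∃ D, U ≤ M D := by
    rintro _ ⟨t, rfl⟩
    choose D hD using hMall
    refine ⟨∑ r ∈ t, D r, Submodule.span_le.2 fun r hr => ?_⟩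
    exact hMmono (Finset.single_le_sum (f := D) (fun _ _ => Nat.zero_le _) hr) (hD r)
  have hMfin : ∀ D, FiniteDimensional k (M D) ∧ Module.finrank k (M D) ≤ N * (D + 1) ^ s := by
    intro D
    have hM : M D = Submodule.span k (Set.range fun z : (Fin s → Fin (D + 1)) × Fin N =>
        (∏ i, g (MvPolynomial.X i) ^ (z.1 i : ℕ)) * b z.2) := by
      simp only [M, boxSpan, T]
      rw [Submodule.span_mul_span]
      congr 1
      ext r
      constructor
      · rintro ⟨_, ⟨α, rfl⟩, _, ⟨j, rfl⟩, rfl⟩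
        exact ⟨(α, j), rfl⟩
      · rintro ⟨⟨α, j⟩, rfl⟩
        exact ⟨_, ⟨α, rfl⟩, _, ⟨j, rfl⟩, rfl⟩
    rw [hM]
    refine ⟨FiniteDimensional.span_of_finite k (Set.finite_range _), (finrank_range_le_card _).trans ?_⟩
    simp [mul_comm]
  have hTfg : T.FG := ⟨Finset.univ.image b, by simp [T]⟩
  obtain ⟨D1, hD1⟩ := hMfg (V * T) (hV.mul hTfg)
  obtain ⟨D2, hD2⟩ := hMall 1
  set D0 := max D1 D2 with hD0
  have hVT : V * T ≤ M D0 := hD1.trans (hMmono (le_max_left _ _))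
  have h1M : (1 : Submodule k R) ≤ M D0 := Submodule.one_le.2 (hMmono (le_max_right _ _) hD2)
  have hstep : ∀ E, V * M E ≤ M (E + D0) := by
    intro E
    calc V * (boxSpan g E * T) = boxSpan g E * (V * T) := by ring
      _ ≤ boxSpan g E * (boxSpan g D0 * T) := mul_le_mul' le_rfl hVT
      _ = (boxSpan g E * boxSpan g D0) * T := by ring
      _ ≤ _ := mul_le_mul' (boxSpan_mul g E D0) le_rfl
  have hpow : ∀ n, V ^ n ≤ M ((n + 1) * D0) := by
    intro n
    induction n with
    | zero => simpa using h1M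
    | succ n ih =>
      rw [pow_succ']
      refine (mul_le_mul' le_rfl ih).trans ((hstep _).trans (le_of_eq ?_))
      congr 1; ring
  refine ⟨N * (D0 + 1) ^ s, fun n => ⟨M ((n + 1) * D0), (hMfin _).1, (hMfin _).2.trans ?_, ?_⟩⟩
  · rw [mul_assoc, ← mul_pow]
    gcongr
    nlinarith
  · intro j hj
    exact (hpow j).trans (hMmono (Nat.mul_le_mul_right _ (by omega)))

lemma sum_finrank_le {A : Type*} [CommRing A] [Algebra k A] (𝒜 : ℕ → Submodule k A)
    [GradedAlgebra 𝒜] (n : ℕ) (τ : Fin n → ℕ) (hτ : Function.Injective τ) (V : Fin n → Submodule k A)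
    (hV : ∀ i, V i ≤ 𝒜 (τ i)) (U : Submodule k A) [FiniteDimensional k U] (hU : ∀ i, V i ≤ U) :
    ∑ i, Module.finrank k (V i) ≤ Module.finrank k U := by
  classical
  have hfd : ∀ i, FiniteDimensional k (V i) := fun i => Submodule.finiteDimensional_of_le (hU i)
  rw [← Module.finrank_pi_fintype]
  let F : (Π i, V i) →ₗ[k] U := ∑ i, (Submodule.inclusion (hU i)) ∘ₗ (LinearMap.proj i)
  have hF : ∀ w, ((F w : U) : A) = ∑ i, (w i : A) := by
    intro w; simp [F]
  apply LinearMap.finrank_le_finrank_of_injective (f := F)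
  rw [← LinearMap.ker_eq_bot, LinearMap.ker_eq_bot']
  intro w hw
  have h0 : ∑ i, (w i : A) = 0 := by rw [← hF, hw]; rfl
  funext i
  apply Subtype.ext
  have h1 := congrArg (fun a => ((DirectSum.decompose 𝒜 a (τ i) : 𝒜 (τ i)) : A)) h0
  simp only [DirectSum.decompose_sum, DirectSum.decompose_zero] at h1
  rw [DFinsupp.finsetSum_apply] at h1
  simp only [AddSubmonoidClass.coe_finsetSum, DirectSum.zero_apply, ZeroMemClass.coe_zero] at h1
  rw [Finset.sum_eq_single i] at h1
  · rw [DirectSum.decompose_of_mem_same _ (hV i (w i).2)] at h1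
    simpa using h1
  · intro j _ hj
    exact DirectSum.decompose_of_mem_ne _ (hV j (w j).2) (fun h => hj (hτ h))
  · simp
end growth

section final
variable {k A : Type*} [Field k] [CommRing A] [IsDomain A] [Algebra k A]

lemma finrank_le_of_mul {U T : Submodule k A} [FiniteDimensional k T] {x : A} (hx : x ≠ 0)
    (h : ∀ u ∈ U, x * u ∈ T) : Module.finrank k U ≤ Module.finrank k T := by
  let F : U →ₗ[k] T := (LinearMap.mulLeft k x).restrict h
  apply LinearMap.finrank_le_finrank_of_injective (f := F)
  intro a b hab
  have : x * (a : A) = x * b := congrArg (fun z : T => (z : A)) hab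
  exact Subtype.ext (mul_left_cancel₀ hx this)

lemma pow_growth (𝒜 : ℕ → Submodule k A) [GradedAlgebra 𝒜] (h1 : (1 : A) ∈ 𝒜 0)
    (hmul : ∀ m n, 𝒜 m * 𝒜 n ≤ 𝒜 (m + n)) (hfd : ∀ m, FiniteDimensional k (𝒜 m))
    (p : ℕ) (hp : 1 ≤ p) (hne : 𝒜 p ≠ ⊥) (d : ℕ)
    (hdim : ringKrullDim (Algebra.adjoin k (𝒜 p : Set A)) = ((d + 1 : ℕ) : WithBot ℕ∞)) :
    (∃ C : ℕ, ∀ n, 1 ≤ n → Module.finrank k ((𝒜 p) ^ n : Submodule k A) ≤ C * n ^ d) ∧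
    ∃ f : Fin (d + 1) → A, (∀ i, f i ∈ 𝒜 p) ∧ AlgebraicIndependent k f := by
  classical
  set R := Algebra.adjoin k (𝒜 p : Set A) with hR
  have hRfg : R.FG := by
    obtain ⟨t, ht⟩ := (Module.Finite.iff_fg.1 (hfd p) : (𝒜 p).FG)
    refine ⟨t, ?_⟩
    rw [hR, ← ht, Algebra.adjoin_span]
  have : Algebra.FiniteType k R := (Subalgebra.fg_iff_finiteType R).1 hRfg
  obtain ⟨s, g, hg, hgfin⟩ := exists_finite_inj_algHom_of_fg k R
  have hs : s = d + 1 := by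
    have := (krull_eq g hg hgfin).symm.trans hdim
    exact_mod_cast this
  subst hs
  have hVR : 𝒜 p ≤ Subalgebra.toSubmodule R := Algebra.subset_adjoin
  let V' : Submodule k R := (𝒜 p).comap R.val.toLinearMap
  have hV' : V'.map R.val.toLinearMap = 𝒜 p := by
    rw [Submodule.map_comap_eq, inf_eq_right]
    intro z hz
    exact ⟨⟨z, hVR hz⟩, rfl⟩
  have hinj : Function.Injective R.val.toLinearMap := Subtype.val_injective
  have hV'fg : V'.FG := by
    apply Submodule.fg_of_fg_map_injective R.val.toLinearMap hinj
    rw [hV']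
    exact Module.Finite.iff_fg.1 (hfd p)
  constructor
  · obtain ⟨C, hC⟩ := growth_noether g hgfin V' hV'fg
    refine ⟨C * 3 ^ (d + 1), fun n hn => ?_⟩
    obtain ⟨U, hUfd, hUr, hU⟩ := hC (2 * n)
    have hUA : ∀ j ≤ 2 * n, (𝒜 p) ^ j ≤ U.map R.val.toLinearMap := by
      intro j hj
      have := Submodule.map_mono (f := R.val.toLinearMap) (hU j hj)
      have h2 : (V' ^ j).map R.val.toLinearMap = (𝒜 p) ^ j := by
        rw [Submodule.map_pow, hV']
      rwa [h2] at this
    have hUA' : Module.finrank k (U.map R.val.toLinearMap) ≤ C * (2 * n + 1) ^ (d + 1) :=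
      (Submodule.finrank_map_le _ _).trans hUr
    have hpfd : ∀ n, FiniteDimensional k ((𝒜 p) ^ n : Submodule k A) := fun n =>
      Submodule.finiteDimensional_of_le (pow_le_level h1 hmul p n)
    obtain ⟨x, hx, hx0⟩ := (Submodule.ne_bot_iff _).1 hne
    have hmono : Monotone fun n => Module.finrank k ((𝒜 p) ^ n : Submodule k A) := by
      apply monotone_nat_of_le_succ
      intro n
      apply finrank_le_of_mul hx0
      intro u hu
      rw [pow_succ']
      exact Submodule.mul_mem_mul hx hu
    have hsum := sum_finrank_le 𝒜 n (fun j => (n + j) * p)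
      (fun a b h => Fin.ext (by
        have := Nat.eq_of_mul_eq_mul_right hp h
        omega))
      (fun j => (𝒜 p) ^ (n + j : ℕ)) (fun j => pow_le_level h1 hmul p _)
      (U.map R.val.toLinearMap) (fun j => hUA _ (by have := j.2; omega))
    have hlow : n * Module.finrank k ((𝒜 p) ^ n : Submodule k A) ≤
        ∑ j : Fin n, Module.finrank k ((𝒜 p) ^ (n + j : ℕ) : Submodule k A) := by
      have := Finset.card_nsmul_le_sum (Finset.univ : Finset (Fin n))
        (fun j => Module.finrank k ((𝒜 p) ^ (n + j : ℕ) : Submodule k A))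
        (Module.finrank k ((𝒜 p) ^ n : Submodule k A)) (fun j _ => hmono (by omega))
      simpa using this
    have htot : n * Module.finrank k ((𝒜 p) ^ n : Submodule k A) ≤ n * (C * 3 ^ (d + 1) * n ^ d) := by
      refine (hlow.trans (hsum.trans hUA')).trans ?_
      calc C * (2 * n + 1) ^ (d + 1) ≤ C * (3 * n) ^ (d + 1) := by gcongr; omega
        _ = _ := by rw [mul_pow, pow_succ n]; ring
    exact Nat.le_of_mul_le_mul_left htot (by omega)
  · have hS : Algebra.adjoin k (V' : Set R) = ⊤ := by
      have h := Algebra.adjoin_adjoin_coe_preimage (R := k) (s := (𝒜 p : Set A))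
      exact h
    obtain ⟨f, hf, hfi⟩ := exists_alg_indep g hg hgfin (V' : Set R) hS
    exact ⟨fun i => (f i : A), fun i => hf i, hfi.map' (f := R.val) Subtype.val_injective⟩

theorem full_growth (𝒜 : ℕ → Submodule k A) [GradedAlgebra 𝒜] (hC : IsApproximable k 𝒜) (d : ℕ)
    (hdim : ∀ᶠ p in atTop, ringKrullDim (Algebra.adjoin k (𝒜 p : Set A)) = ((d + 1 : ℕ) : WithBot ℕ∞)) :
    (∃ c : ℝ, ∀ m : ℕ, 1 ≤ m → (Module.finrank k (𝒜 m) : ℝ) ≤ c * (m : ℝ) ^ d) ∧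
    ∃ p, 1 ≤ p ∧ ∃ f : Fin (d + 1) → A, (∀ i, f i ∈ 𝒜 p) ∧ AlgebraicIndependent k f := by
  obtain ⟨h0, hmul, hfd, hne, happ⟩ := hC
  have h1 : (1 : A) ∈ 𝒜 0 := SetLike.GradedOne.one_mem
  obtain ⟨p₀, hp₀⟩ := happ (1 / 2) (by norm_num)
  obtain ⟨p, hpd, hpne, hp1, hpp⟩ := (hdim.and (hne.and ((eventually_ge_atTop 1).and
    (eventually_ge_atTop p₀)))).exists
  obtain ⟨⟨C, hC⟩, hf⟩ := pow_growth 𝒜 h1 hmul hfd p hp1 hpne d hpd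
  refine ⟨?_, p, hp1, hf⟩
  have hlim := hp₀ p hpp
  have hev := eventually_lt_of_lt_liminf hlim
    (isBoundedUnder_of_eventually_ge (a := 0) (Eventually.of_forall fun n => by positivity))
  obtain ⟨n1, hn1⟩ := eventually_atTop.1 hev
  obtain ⟨N0, hN0⟩ := eventually_atTop.1 hne
  refine ⟨2 * C * (1 + (n1 + N0) : ℝ) ^ d, fun m hm => ?_⟩
  set n := m + n1 + N0 with hn
  have hnp : n ≤ n * p := Nat.le_mul_of_pos_right n hp1
  obtain ⟨l, hl⟩ : ∃ l, n * p = l + m := ⟨n * p - m, by omega⟩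
  obtain ⟨x, hx, hx0⟩ := (Submodule.ne_bot_iff _).1 (hN0 l (by omega))
  have hle : Module.finrank k (𝒜 m) ≤ Module.finrank k (𝒜 (n * p)) := by
    apply finrank_le_of_mul hx0
    intro u hu
    rw [hl]
    exact hmul _ _ (Submodule.mul_mem_mul hx hu)
  have hr := hn1 n (by omega)
  have hpos : (0 : ℝ) < Module.finrank k (𝒜 (n * p)) := by
    by_contra h
    have h' : (Module.finrank k (𝒜 (n * p)) : ℝ) = 0 := le_antisymm (not_lt.1 h) (by positivity)
    rw [h', div_zero] at hr
    norm_num at hr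
  rw [lt_div_iff₀ hpos] at hr
  have h2 : (Module.finrank k ((𝒜 p) ^ n : Submodule k A) : ℝ) ≤ C * (n : ℝ) ^ d := by
    exact_mod_cast hC n (by omega)
  have h3 : (n : ℝ) ≤ (1 + (n1 + N0)) * m := by
    have hm' : (1 : ℝ) ≤ m := by exact_mod_cast hm
    rw [hn]; push_cast
    nlinarith [mul_nonneg (Nat.cast_nonneg (α := ℝ) n1) (sub_nonneg.2 hm'),
      mul_nonneg (Nat.cast_nonneg (α := ℝ) N0) (sub_nonneg.2 hm')]
  have h4 : (n : ℝ) ^ d ≤ (1 + (n1 + N0) : ℝ) ^ d * (m : ℝ) ^ d := by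
    rw [← mul_pow]; gcongr
  have h5 : (Module.finrank k (𝒜 m) : ℝ) ≤ Module.finrank k (𝒜 (n * p)) := by exact_mod_cast hle
  have h6 : (C : ℝ) * (n : ℝ) ^ d ≤ C * ((1 + (n1 + N0) : ℝ) ^ d * (m : ℝ) ^ d) := by gcongr
  nlinarith
end final

theorem isApproximable_of_subalgebra
    (k : Type*) {A : Type*} [Field k] [IsAlgClosed k] [CharZero k]
    [CommRing A] [IsDomain A] [Algebra k A]
    (𝒜 : ℕ → Submodule k A) [GradedAlgebra 𝒜]
    (hC : IsApproximable k 𝒜)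
    (a : ℕ) (ha : 0 < a)
    (hdim : ∀ᶠ p in atTop, ringKrullDim (Algebra.adjoin k (𝒜 p : Set A)) = a)
    (ℬ : ℕ → Submodule k A)
    (hsub : ∀ m : ℕ, ℬ m ≤ 𝒜 m)
    (hone : ℬ 0 = 1)
    (hmul : ∀ m n : ℕ, ℬ m * ℬ n ≤ ℬ (m + n))
    (hne : ∀ᶠ n in atTop, ℬ n ≠ ⊥)
    (hnotzero : ¬ Tendsto (fun m : ℕ =>
      (Module.finrank k (ℬ m) : ℝ) / (m : ℝ) ^ (a - 1)) atTop (nhds 0)) :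
    IsApproximable k ℬ := by
  obtain ⟨d, rfl⟩ : ∃ d, a = d + 1 := ⟨a - 1, by omega⟩
  rw [Nat.add_sub_cancel] at hnotzero
  obtain ⟨⟨c, hgrow⟩, p, hp, f, hf, hfi⟩ := full_growth 𝒜 hC d hdim
  obtain ⟨-, hmulA, hfd, -, -⟩ := hC
  have hfdB : ∀ m, FiniteDimensional k (ℬ m) := fun m => Submodule.finiteDimensional_of_le (hsub m)
  have h1 : (1 : A) ∈ ℬ 0 := by rw [hone]; exact Submodule.one_le.1 le_rfl
  obtain ⟨N0, hN0⟩ := eventually_atTop.1 hne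
  let L := FractionRing A
  let ι : A →ₐ[k] L := IsScalarTower.toAlgHom k A L
  have hι : Function.Injective ι := IsFractionRing.injective A L
  have hrank : ∀ U : Submodule k A, Module.finrank k (U.map ι.toLinearMap) = Module.finrank k U :=
    fun U => (Submodule.equivMapOfInjective ι.toLinearMap hι U).finrank_eq.symm
  refine ⟨hone, hmul, hfdB, hne, fun ε hε => ?_⟩
  obtain ⟨p₀, hp₀⟩ := core_fujita (k := k) (L := L) (d := d)
    (𝒞 := fun m => (𝒜 m).map ι.toLinearMap) (ℬ := fun m => (ℬ m).map ι.toLinearMap)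
    ⟨1, h1, map_one ι⟩ (fun m => Submodule.map_mono (hsub m))
    (fun m n => by rw [← Submodule.map_mul]; exact Submodule.map_mono (hmulA m n))
    (fun m n => by rw [← Submodule.map_mul]; exact Submodule.map_mono (hmul m n))
    (fun m => inferInstance) c (fun m hm => by rw [hrank]; exact hgrow m hm)
    p hp (fun i => ι (f i)) (fun i => ⟨f i, hf i, rfl⟩) (hfi.map' hι) N0
    (fun m hm => by
      intro h
      exact hN0 m hm ((Submodule.map_injective_of_injective (f := ι.toLinearMap) hι) (h.trans (Submodule.map_bot _).symm)))
    (by simpa only [hrank] using hnotzero) (ε / 2) (by linarith)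
  refine ⟨max p₀ 1, fun p hp => ?_⟩
  have hev := hp₀ p (le_trans (le_max_left _ _) hp)
  have hp1 : 1 ≤ p := le_trans (le_max_right _ _) hp
  have hle1 : ∀ n : ℕ, (Module.finrank k ((ℬ p) ^ n : Submodule k A) : ℝ) /
        (Module.finrank k (ℬ (n * p)) : ℝ) ≤ 1 := by
    intro n
    apply div_le_one_of_le₀ _ (by positivity)
    exact_mod_cast Submodule.finrank_mono (pow_le_level h1 hmul p n)
  have hlow : ∀ᶠ n : ℕ in atTop, 1 - ε / 2 ≤ (Module.finrank k ((ℬ p) ^ n : Submodule k A) : ℝ) /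
        (Module.finrank k (ℬ (n * p)) : ℝ) := by
    filter_upwards [hev, eventually_ge_atTop N0] with n hn hnN
    have hnp : n ≤ n * p := Nat.le_mul_of_pos_right n hp1
    have hpos : 0 < Module.finrank k (ℬ (n * p)) := by
      have h2 := hN0 (n * p) (by omega)
      rw [Nat.pos_iff_ne_zero]
      intro h
      exact h2 (Submodule.finrank_eq_zero.1 h)
    rw [le_div_iff₀ (by exact_mod_cast hpos)]
    rw [← Submodule.map_pow, hrank, hrank] at hn
    exact hn
  have hcob : IsCoboundedUnder (· ≥ ·) atTop (fun n : ℕ =>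
      (Module.finrank k ((ℬ p) ^ n : Submodule k A) : ℝ) / (Module.finrank k (ℬ (n * p)) : ℝ)) :=
    (isBoundedUnder_of_eventually_le (a := 1) (Eventually.of_forall hle1)).isCoboundedUnder_ge
  have := le_liminf_of_le hcob hlow
  linarith
end

section
/- Let ν : K∖{0} → ℤ^d be a map satisfying: ν(λ) = 0 for every λ ∈ k∖{0}; ν(fg) = ν(f) + ν(g) for all nonzero f, g ∈ K; ν(f+g) ≥ min(ν(f), ν(g)) whenever f, g, f+g are all nonzero, with equality whenever ν(f) ≠ ν(g); and whenever f, g are nonzero with ν(f) = ν(g), there exists λ ∈ k with f + λg = 0 or ν(f + λg) > ν(f). Then for every finite-dimensional k-vector subspace V ⊆ K one has #ν(V∖{0}) = dim_k V. -/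
/-- The lexicographic linear order on `ℤ^d = Fin d → ℤ`. -/
noncomputable instance instLinearOrderLexFin (d : ℕ) : LinearOrder (Lex (Fin d → ℤ)) :=
  haveI : WellFoundedLT (Fin d) := inferInstance
  inferInstance

noncomputable instance instMinLexFin (d : ℕ) : Min (Lex (Fin d → ℤ)) :=
  (instLinearOrderLexFin d).toMin

theorem aux_ncard {k M Γ : Type*} [Field k] [AddCommGroup M] [Module k M] [LinearOrder Γ]
    (ν : M → Γ)
    (hsmul : ∀ (c : k) (x : M), c ≠ 0 → x ≠ 0 → ν (c • x) = ν x)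
    (hadd : ∀ f g : M, f ≠ 0 → g ≠ 0 → f + g ≠ 0 → ν f ≠ ν g →
      ν (f + g) = min (ν f) (ν g))
    (hcancel : ∀ f g : M, f ≠ 0 → g ≠ 0 → ν f = ν g →
      ∃ c : k, f + c • g = 0 ∨ ν f < ν (f + c • g))
    (V : Submodule k M) [FiniteDimensional k V] :
    (ν '' {x : M | x ∈ V ∧ x ≠ 0}).ncard = Module.finrank k V := by
  classical
  set T := ν '' {x : M | x ∈ V ∧ x ≠ 0} with hT
  have hex : ∀ t : T, ∃ x : V, (x : M) ≠ 0 ∧ ν x = t := by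
    rintro ⟨t, x, ⟨hxV, hx0⟩, rfl⟩
    exact ⟨⟨x, hxV⟩, hx0, rfl⟩
  choose g hg0 hgν using hex
  have key : ∀ (c : T → k) (s : Finset T), (∀ i ∈ s, c i ≠ 0) → s.Nonempty →
      (∑ i ∈ s, c i • (g i : M)) ≠ 0 ∧ ∃ i ∈ s, ν (∑ i ∈ s, c i • (g i : M)) = i := by
    intro c s
    induction s using Finset.induction_on with
    | empty => intro _ h; exact absurd h (by simp)
    | insert a s ha ih =>
      intro hc _
      have hca := hc a (Finset.mem_insert_self a s)
      have h1 : c a • (g a : M) ≠ 0 := smul_ne_zero hca (hg0 a)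
      have h2 : ν (c a • (g a : M)) = a := by rw [hsmul _ _ hca (hg0 a), hgν]
      rw [Finset.sum_insert ha]
      rcases s.eq_empty_or_nonempty with rfl | hs
      · rw [Finset.sum_empty, add_zero]
        exact ⟨h1, a, Finset.mem_insert_self a _, h2⟩
      · obtain ⟨hS0, i, his, hSi⟩ := ih (fun i hi => hc i (Finset.mem_insert_of_mem hi)) hs
        have hne : ν (c a • (g a : M)) ≠ ν (∑ i ∈ s, c i • (g i : M)) := by
          rw [h2, hSi]
          intro h
          exact ha (Subtype.ext h ▸ his)
        have hsum : c a • (g a : M) + ∑ i ∈ s, c i • (g i : M) ≠ 0 := by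
          intro h
          apply hne
          rw [eq_neg_of_add_eq_zero_left h, ← hsmul (-1 : k) _ (by simp) hS0, neg_one_smul]
        refine ⟨hsum, ?_⟩
        rw [hadd _ _ h1 hS0 hsum hne, h2, hSi]
        rcases min_choice (a : Γ) (i : Γ) with h | h
        · exact ⟨a, Finset.mem_insert_self a s, h⟩
        · exact ⟨i, Finset.mem_insert_of_mem his, h⟩
  have hli : LinearIndependent k g := by
    rw [linearIndependent_iff']
    intro s c hsum i hi
    by_contra hci
    refine (key c (s.filter fun j => c j ≠ 0) (by simp) ⟨i, by simp [hi, hci]⟩).1 ?_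
    have h3 := congrArg (Subtype.val : V → M) hsum
    rw [Finset.sum_filter]
    push_cast at h3
    refine Eq.trans ?_ h3
    refine Finset.sum_congr rfl fun j _ => ?_
    by_cases h : c j = 0 <;> simp [h]
  have hfin : Finite T := hli.finite
  have hspan : ⊤ ≤ Submodule.span k (Set.range g) := by
    by_contra hns
    set B : Set V := {x | x ∉ Submodule.span k (Set.range g)} with hB
    have hBne : B.Nonempty := by
      rw [SetLike.not_le_iff_exists] at hns
      obtain ⟨x, _, hx⟩ := hns
      exact ⟨x, hx⟩
    have hB0 : ∀ x ∈ B, (x : M) ≠ 0 := by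
      intro x hx h
      apply hx
      have : x = 0 := Subtype.ext h
      rw [this]
      exact Submodule.zero_mem _
    have hBT : ∀ x ∈ B, ν (x : M) ∈ T := fun x hx => ⟨x, ⟨x.2, hB0 x hx⟩, rfl⟩
    have hBfin : ((fun x : V => ν (x : M)) '' B).Finite :=
      (Set.toFinite T).subset (by rintro _ ⟨x, hx, rfl⟩; exact hBT x hx)
    obtain ⟨x, hxB, hmax⟩ := Set.exists_max_image _ id hBfin (hBne.image _)
    obtain ⟨x, hx, rfl⟩ := hxB
    set t : T := ⟨_, hBT x hx⟩ with ht
    obtain ⟨c, hc⟩ := hcancel x (g t) (hB0 x hx) (hg0 t) (by rw [hgν])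
    have hmem : x + c • g t ∈ B := by
      intro h
      apply hx
      have h4 := Submodule.sub_mem _ h
        (Submodule.smul_mem _ c (Submodule.subset_span (Set.mem_range_self t)))
      simpa using h4
    rcases hc with hc | hc
    · exact hB0 _ hmem (by simpa using hc)
    · have := hmax _ ⟨_, hmem, rfl⟩
      exact absurd hc (not_lt.mpr (by simpa using this))
  have := Module.finrank_eq_nat_card_basis (Module.Basis.mk hli hspan)
  rw [this]
  rfl

/-- Let `k ⊆ K` be a field extension and `ν : K∖{0} → ℤ^d` a map into `ℤ^d` with the
lexicographic order, satisfying: `ν(λ) = 0` for `λ ∈ k∖{0}`; `ν(fg) = ν(f) + ν(g)`;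
`ν(f+g) ≥ min(ν(f), ν(g))` whenever `f, g, f+g` are all nonzero, with equality whenever
`ν(f) ≠ ν(g)`; and whenever `ν(f) = ν(g)` for nonzero `f, g`, some `k`-combination
`f + λg` either vanishes or has strictly larger value.  Then for every finite-dimensional
`k`-subspace `V ⊆ K` one has `#ν(V∖{0}) = dim_k V`. -/
theorem ncard_multivaluation_image_eq_finrank
    (k K : Type*) [Field k] [Field K] [Algebra k K] (d : ℕ) (hd : 1 ≤ d)
    (ν : K → Lex (Fin d → ℤ))
    (hν_const : ∀ lam : k, lam ≠ 0 → ν (algebraMap k K lam) = 0)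
    (hν_mul : ∀ f g : K, f ≠ 0 → g ≠ 0 → ν (f * g) = ν f + ν g)
    (hν_add : ∀ f g : K, f ≠ 0 → g ≠ 0 → f + g ≠ 0 →
      min (ν f) (ν g) ≤ ν (f + g))
    (hν_add_eq : ∀ f g : K, f ≠ 0 → g ≠ 0 → f + g ≠ 0 → ν f ≠ ν g →
      ν (f + g) = min (ν f) (ν g))
    (hν_cancel : ∀ f g : K, f ≠ 0 → g ≠ 0 → ν f = ν g →
      ∃ lam : k, f + algebraMap k K lam * g = 0 ∨ ν f < ν (f + algebraMap k K lam * g)) :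
    ∀ V : Submodule k K, FiniteDimensional k V →
      (ν '' {x : K | x ∈ V ∧ x ≠ 0}).ncard = Module.finrank k V := by
  intro V hV
  refine aux_ncard (k := k) ν ?_ hν_add_eq ?_ V
  · intro c x hc hx
    rw [Algebra.smul_def, hν_mul _ _ (by simpa using hc) hx, hν_const c hc, zero_add]
  · intro f g hf hg h
    simp only [Algebra.smul_def]
    exact hν_cancel f g hf hg h
end

section
/- Let k be a field, K a field extension of k, and for each m ≥ 0 let B_m ⊆ K be a k-subspace with B_0 = k and B_m · B_{m'} ⊆ B_{m+m'} for all m, m'. Let v : K∖{0} → ℤ satisfy v(fg) = v(f) + v(g) for all nonzero f, g, v(λ) = 0 for λ ∈ k∖{0}, and v(f+g) ≥ min(v(f), v(g)) whenever f, g, f+g are nonzero. For m with B_m ≠ 0 and B_m finite-dimensional over k, set D_m(v) = sup_{b ∈ B_m∖{0}} max(0, −v(b)) (a finite natural number). Then for all positive integers m₁, m₂ with m₁ | m₂ and B_{m₁} ≠ 0, B_{m₂} ≠ 0 both finite-dimensional, one has D_{m₁}(v)/m₁ ≤ D_{m₂}(v)/m₂. -/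
theorem bdd_aux
    (k K : Type*) [Field k] [Field K] [Algebra k K] (V : Submodule k K)
    (v : K → ℤ)
    (hv_mul : ∀ f g : K, f ≠ 0 → g ≠ 0 → v (f * g) = v f + v g)
    (hv_const : ∀ lam : k, lam ≠ 0 → v (algebraMap k K lam) = 0)
    (hv_add : ∀ f g : K, f ≠ 0 → g ≠ 0 → f + g ≠ 0 → min (v f) (v g) ≤ v (f + g))
    (hfd : FiniteDimensional k V) :
    BddAbove {x : ℤ | ∃ b ∈ V, b ≠ 0 ∧ x = max 0 (-(v b))} := by
  obtain ⟨S, hS⟩ := (Submodule.fg_iff_finiteDimensional V).2 hfd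
  obtain ⟨N, hN⟩ := (S.image v).bddBelow
  have key : ∀ b ∈ Submodule.span k (S : Set K), b ≠ 0 → N ≤ v b := by
    intro b hb
    induction hb using Submodule.span_induction with
    | mem x hx =>
      intro _
      exact hN (Finset.mem_coe.2 (Finset.mem_image_of_mem v hx))
    | zero => intro h; exact absurd rfl h
    | add x y _ _ hx hy =>
      intro h
      by_cases h1 : x = 0
      · subst h1
        rw [zero_add] at h ⊢
        exact hy h
      by_cases h2 : y = 0
      · subst h2
        rw [add_zero] at h ⊢
        exact hx h
      exact le_trans (le_min (hx h1) (hy h2)) (hv_add x y h1 h2 h)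
    | smul a x _ hx =>
      intro h
      have ha : a ≠ 0 := by rintro rfl; simp at h
      have hx0 : x ≠ 0 := by rintro rfl; simp at h
      have ha' : algebraMap k K a ≠ 0 := by simpa using ha
      rw [Algebra.smul_def, hv_mul _ _ ha' hx0, hv_const a ha, zero_add]
      exact hx hx0
  refine ⟨max 0 (-N), ?_⟩
  rintro x ⟨b, hb, hb0, rfl⟩
  have := key b (hS ▸ hb) hb0
  exact max_le_max le_rfl (by omega)

/-- Monotonicity of the normalized pole divisors `D_m / m` along divisibility.
Let `k ⊆ K` be fields, `B_m ⊆ K` a multiplicative family of `k`-subspaces with `B_0 = k`,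
and `v : K∖{0} → ℤ` a valuation-like map (`v(fg) = v(f) + v(g)`, `v = 0` on `k∖{0}`,
`v(f+g) ≥ min(v(f), v(g))`).  For `m` with `B_m ≠ 0` finite-dimensional, the coefficient
`D_m(v) = sup_{b ∈ B_m∖{0}} max(0, −v(b))` is a finite (bounded above) quantity, and for
`m₁ ∣ m₂` one has `D_{m₁}(v)/m₁ ≤ D_{m₂}(v)/m₂`. -/
theorem poleDivisor_div_monotone
    (k K : Type*) [Field k] [Field K] [Algebra k K]
    (B : ℕ → Submodule k K)
    (hB0 : B 0 = 1)
    (hBmul : ∀ m m' : ℕ, B m * B m' ≤ B (m + m'))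
    (v : K → ℤ)
    (hv_mul : ∀ f g : K, f ≠ 0 → g ≠ 0 → v (f * g) = v f + v g)
    (hv_const : ∀ lam : k, lam ≠ 0 → v (algebraMap k K lam) = 0)
    (hv_add : ∀ f g : K, f ≠ 0 → g ≠ 0 → f + g ≠ 0 → min (v f) (v g) ≤ v (f + g))
    (m₁ m₂ : ℕ) (hm₁ : 0 < m₁) (hm₂ : 0 < m₂) (hdvd : m₁ ∣ m₂)
    (hne₁ : B m₁ ≠ ⊥) (hne₂ : B m₂ ≠ ⊥)
    (hfd₁ : FiniteDimensional k (B m₁)) (hfd₂ : FiniteDimensional k (B m₂)) :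
    BddAbove {x : ℤ | ∃ b ∈ B m₁, b ≠ 0 ∧ x = max 0 (-(v b))} ∧
    BddAbove {x : ℤ | ∃ b ∈ B m₂, b ≠ 0 ∧ x = max 0 (-(v b))} ∧
    ((sSup {x : ℤ | ∃ b ∈ B m₁, b ≠ 0 ∧ x = max 0 (-(v b))} : ℤ) : ℝ) / m₁ ≤
      ((sSup {x : ℤ | ∃ b ∈ B m₂, b ≠ 0 ∧ x = max 0 (-(v b))} : ℤ) : ℝ) / m₂ := by
  have hb₁ := bdd_aux k K (B m₁) v hv_mul hv_const hv_add hfd₁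
  have hb₂ := bdd_aux k K (B m₂) v hv_mul hv_const hv_add hfd₂
  refine ⟨hb₁, hb₂, ?_⟩
  obtain ⟨b₀, hb₀, hb₀'⟩ := (Submodule.ne_bot_iff _).1 hne₁
  have hmem := Int.csSup_mem (s := {x : ℤ | ∃ b ∈ B m₁, b ≠ 0 ∧ x = max 0 (-(v b))})
    ⟨_, b₀, hb₀, hb₀', rfl⟩ hb₁
  obtain ⟨b, hb, hb0, hbe⟩ := hmem
  obtain ⟨n, rfl⟩ := hdvd
  have hpow : ∀ n : ℕ, b ^ n ∈ B (m₁ * n) ∧ v (b ^ n) = n * v b := by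
    intro n
    induction n with
    | zero =>
      have h1 := hv_const 1 one_ne_zero
      rw [map_one] at h1
      refine ⟨?_, by simp [h1]⟩
      rw [mul_zero, hB0, pow_zero]
      exact Submodule.one_le.1 le_rfl
    | succ n ih =>
      refine ⟨?_, ?_⟩
      · rw [pow_succ, mul_add, mul_one]
        exact hBmul _ _ (Submodule.mul_mem_mul ih.1 hb)
      · rw [pow_succ, hv_mul _ _ (pow_ne_zero n hb0) hb0, ih.2]
        push_cast
        ring
  have hle := le_csSup hb₂ ⟨b ^ n, (hpow n).1, pow_ne_zero n hb0, rfl⟩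
  rw [(hpow n).2] at hle
  rw [hbe]
  have h3 : max 0 (-(n * v b)) = (n : ℤ) * max 0 (-(v b)) := by
    rw [mul_max_of_nonneg _ _ (Int.natCast_nonneg n), mul_zero, mul_neg]
  rw [h3] at hle
  have hn : 0 < n := Nat.pos_of_mul_pos_left hm₂
  have hle' : ((n : ℝ)) * ((max 0 (-(v b)) : ℤ) : ℝ) ≤
      ((sSup {x : ℤ | ∃ b ∈ B (m₁ * n), b ≠ 0 ∧ x = max 0 (-(v b))} : ℤ) : ℝ) := by
    exact_mod_cast hle
  have hm₁' : (0 : ℝ) < m₁ := by exact_mod_cast hm₁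
  have hm₂' : (0 : ℝ) < ((m₁ * n : ℕ) : ℝ) := by exact_mod_cast hm₂
  rw [div_le_div_iff₀ hm₁' hm₂']
  push_cast at hle' ⊢
  nlinarith [mul_le_mul_of_nonneg_left hle' hm₁'.le]
end

section
/- Let B = ⊕_{m≥0} B_m be an approximable graded algebra over a field k. Then for every fixed r ∈ ℕ, lim_{n→∞} dim_k(B_{n+r}) / dim_k(B_n) = 1. -/
open Filter

/-- Dimension of a span as the number of standard indices. -/
theorem finrank_span_standard {k E ι κ : Type*} [Field k] [AddCommGroup E] [Module k E]
    [LinearOrder κ] [DecidableEq ι] (v : ι → E) (o : ι → κ) (ho : Function.Injective o)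
    (S : Finset ι) (P : ι → Prop) [DecidablePred P]
    (hP : ∀ u ∈ S, P u ↔ v u ∉ Submodule.span k (v '' {w | w ∈ S ∧ o w < o u})) :
    Module.finrank k (Submodule.span k (v '' (S : Set ι))) = (S.filter P).card := by
  induction S using Finset.induction_on_max_value o with
  | empty => rw [Finset.coe_empty, Set.image_empty, Submodule.span_empty, finrank_bot]; simp
  | insert a s ha hmax ih =>
    have hlt : ∀ x ∈ s, o x < o a := fun x hx =>
      lt_of_le_of_ne (hmax x hx) (fun h => ha (ho h ▸ hx))
    have ih' := ih (by
      intro u hu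
      rw [hP u (Finset.mem_insert_of_mem hu)]
      have : {w | w ∈ insert a s ∧ o w < o u} = {w | w ∈ s ∧ o w < o u} := by
        ext w
        simp only [Finset.mem_insert, Set.mem_ofPred_eq]
        constructor
        · rintro ⟨rfl | h, h2⟩
          · exact absurd (hlt u hu) (not_lt.2 h2.le)
          · exact ⟨h, h2⟩
        · rintro ⟨h, h2⟩
          exact ⟨Or.inr h, h2⟩
      rw [this])
    have hPa := hP a (Finset.mem_insert_self a s)
    have hset : {w | w ∈ insert a s ∧ o w < o a} = (s : Set ι) := by
      ext w
      simp only [Finset.mem_insert, Set.mem_ofPred_eq, Finset.mem_coe]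
      constructor
      · rintro ⟨rfl | h, h2⟩
        · exact absurd h2 (lt_irrefl _)
        · exact h
      · intro h
        exact ⟨Or.inr h, hlt w h⟩
    rw [hset] at hPa
    rw [Finset.coe_insert, Set.image_insert_eq]
    by_cases h : P a
    · rw [Finset.filter_insert, if_pos h, Finset.card_insert_of_notMem (by simp [ha]), ← ih']
      have hn := hPa.1 h
      have : FiniteDimensional k (Submodule.span k (v '' (s : Set ι))) :=
        FiniteDimensional.span_of_finite k (s.finite_toSet.image v)
      rw [Submodule.span_insert, sup_comm]
      have h1 := Submodule.finrank_sup_add_finrank_inf_eq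
        (Submodule.span k (v '' (s : Set ι))) (Submodule.span k {v a})
      have hva : v a ≠ 0 := fun h0 => hn (h0 ▸ Submodule.zero_mem _)
      have h2 : Submodule.span k (v '' (s : Set ι)) ⊓ Submodule.span k {v a} = ⊥ := by
        rw [← disjoint_iff]
        exact (Submodule.disjoint_span_singleton' hva).2 hn
      rw [h2, finrank_bot, finrank_span_singleton hva] at h1
      simpa using h1
    · rw [Finset.filter_insert, if_neg h, ← ih']
      have hn := not_not.1 (fun h' => h (hPa.2 h'))
      rw [Submodule.span_insert_eq_span hn]

/-- Powers of a span are spanned by monomials. -/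
theorem span_pow_eq_monomials {k A : Type*} [Field k] [CommRing A] [Algebra k A] {d : ℕ}
    (f : Fin d → A) (n : ℕ) :
    (Submodule.span k (Set.range f)) ^ n = Submodule.span k
      ((fun u : Fin d → ℕ => ∏ i, f i ^ u i) ''
        ((Finset.piAntidiag Finset.univ n : Finset (Fin d → ℕ)) : Set (Fin d → ℕ))) := by
  apply le_antisymm
  · induction n with
    | zero =>
      rw [pow_zero, Submodule.one_eq_span]
      apply Submodule.span_mono
      rintro x rfl
      exact ⟨0, by simp, by simp⟩
    | succ n ih =>
      rw [pow_succ]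
      refine (mul_le_mul' ih le_rfl).trans ?_
      rw [Submodule.span_mul_span]
      apply Submodule.span_mono
      rintro x ⟨_, ⟨u, hu, rfl⟩, _, ⟨j, rfl⟩, rfl⟩
      refine ⟨u + Pi.single j 1, ?_, ?_⟩
      · simp only [Finset.mem_coe, Finset.mem_piAntidiag, Pi.add_apply, Finset.sum_add_distrib] at hu ⊢
        simp [hu.1]
      · simp only [Pi.add_apply, pow_add, Finset.prod_mul_distrib]
        simp [Pi.single_apply, pow_ite]
  · rw [Submodule.span_le]
    rintro x ⟨u, hu, rfl⟩
    simp only [Finset.mem_coe, Finset.mem_piAntidiag] at hu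
    rw [← hu.1]
    have : ∀ s : Finset (Fin d), ∏ i ∈ s, f i ^ u i ∈
        (Submodule.span k (Set.range f)) ^ (∑ i ∈ s, u i) := by
      intro s
      induction s using Finset.induction_on with
      | empty => simpa using ⟨1, map_one _⟩
      | insert a s ha ih =>
        rw [Finset.prod_insert ha, Finset.sum_insert ha, pow_add]
        exact Submodule.mul_mem_mul
          (Submodule.pow_mem_pow _ (Submodule.subset_span (Set.mem_range_self a)) _) ih
    exact this _

/-- Weak form of the Macaulay bound. -/
theorem macaulay_weak {k A : Type*} [Field k] [CommRing A] [Algebra k A] {d : ℕ}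
    (f : Fin d → A) (n : ℕ) :
    (n + 1) * Module.finrank k ((Submodule.span k (Set.range f)) ^ (n + 1) : Submodule k A) ≤
    (n + d) * Module.finrank k ((Submodule.span k (Set.range f)) ^ n : Submodule k A) := by
  classical
  set m : (Fin d → ℕ) → A := fun u => ∏ i, f i ^ u i with hm
  set S : ℕ → Finset (Fin d → ℕ) := fun n => Finset.piAntidiag Finset.univ n with hS
  have memS : ∀ n u, u ∈ S n ↔ ∑ i, u i = n := by
    intro n u; simp [hS, Finset.mem_piAntidiag]
  set P : ℕ → (Fin d → ℕ) → Prop := fun n u =>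
    m u ∉ Submodule.span k (m '' {w | w ∈ S n ∧ toLex w < toLex u}) with hP
  have key : ∀ n, Module.finrank k ((Submodule.span k (Set.range f)) ^ n : Submodule k A) =
      ((S n).filter (P n)).card := by
    intro n
    rw [span_pow_eq_monomials]
    exact finrank_span_standard m toLex toLex.injective (S n) (P n) (fun u _ => Iff.rfl)
  rw [key, key]
  have sumsingle : ∀ j : Fin d, ∑ i, (Pi.single j 1 : Fin d → ℕ) i = 1 := by
    intro j; simp
  have mulm : ∀ u (j : Fin d), m (u + Pi.single j 1) = f j * m u := by
    intro u j
    simp only [hm, Pi.add_apply, pow_add, Finset.prod_mul_distrib]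
    rw [mul_comm]
    simp [Pi.single_apply, pow_ite]
  have down : ∀ u (j : Fin d), P (n + 1) (u + Pi.single j 1) → P n u := by
    intro u j h hu
    apply h
    rw [mulm]
    have h1 : LinearMap.mulLeft k (f j) (m u) ∈
        (Submodule.span k (m '' {w | w ∈ S n ∧ toLex w < toLex u})).map
          (LinearMap.mulLeft k (f j)) := Submodule.mem_map_of_mem hu
    rw [Submodule.map_span] at h1
    refine Submodule.span_mono ?_ h1
    rintro _ ⟨_, ⟨w, ⟨hw, hlt⟩, rfl⟩, rfl⟩
    refine ⟨w + Pi.single j 1, ⟨?_, ?_⟩, ?_⟩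
    · rw [memS] at hw ⊢
      simp [Finset.sum_add_distrib, hw]
    · rw [toLex_add, toLex_add]
      exact add_lt_add_left hlt _
    · rw [mulm]; rfl
  calc (n + 1) * ((S (n + 1)).filter (P (n + 1))).card
      = ∑ u ∈ (S (n + 1)).filter (P (n + 1)), ∑ i, u i := by
        rw [mul_comm, ← smul_eq_mul, ← Finset.sum_const]
        apply Finset.sum_congr rfl
        intro u hu
        rw [Finset.mem_filter, memS] at hu
        exact hu.1.symm
    _ = ∑ i, ∑ u ∈ (S (n + 1)).filter (P (n + 1)), u i := Finset.sum_comm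
    _ ≤ ∑ i, ∑ u ∈ (S n).filter (P n), (u i + 1) := by
        apply Finset.sum_le_sum
        intro j _
        have e : ∑ u ∈ (S n).filter (P n), (u j + 1) =
            ∑ u ∈ ((S n).filter (P n)).image (fun u => u + Pi.single j 1), u j := by
          rw [Finset.sum_image (fun a _ b _ h => by simpa using h)]
          simp
        rw [e]
        apply Finset.sum_le_sum_of_ne_zero
        intro u hu hne
        rw [Finset.mem_filter, memS] at hu
        have hu' : u - Pi.single j 1 + Pi.single j 1 = u := by
          ext i
          by_cases hij : i = j
          · subst hij
            simp; omega
          · simp [hij]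
        rw [Finset.mem_image]
        refine ⟨u - Pi.single j 1, ?_, hu'⟩
        rw [Finset.mem_filter, memS]
        refine ⟨?_, down _ j (hu'.symm ▸ hu.2)⟩
        have := hu.1
        rw [← hu'] at this
        simp only [Pi.add_apply, Finset.sum_add_distrib, sumsingle] at this
        omega
    _ = ∑ u ∈ (S n).filter (P n), ∑ i, (u i + 1) := Finset.sum_comm
    _ = (n + d) * ((S n).filter (P n)).card := by
        rw [mul_comm, ← smul_eq_mul, ← Finset.sum_const]
        apply Finset.sum_congr rfl
        intro u hu
        rw [Finset.mem_filter, memS] at hu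
        simp [Finset.sum_add_distrib, hu.1]

theorem exists_macaulay {k A : Type*} [Field k] [CommRing A] [Algebra k A]
    (V : Submodule k A) [FiniteDimensional k V] : ∃ d : ℕ, ∀ n : ℕ,
    (n + 1) * Module.finrank k (V ^ (n + 1) : Submodule k A) ≤
    (n + d) * Module.finrank k (V ^ n : Submodule k A) := by
  obtain ⟨d, f, hf⟩ := Submodule.fg_iff_exists_fin_generating_family.1
    (Module.Finite.iff_fg.1 (inferInstance : Module.Finite k V))
  refine ⟨d, fun n => ?_⟩
  rw [← hf]
  exact macaulay_weak f n

theorem eventually_step {h : ℕ → ℕ} {d : ℕ} (hh : ∀ n, (n + 1) * h (n + 1) ≤ (n + d) * h n)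
    {x : ℝ} (hx : 0 < x) : ∀ᶠ n in atTop, (h (n + 4) : ℝ) ≤ (1 + x) ^ 4 * h n := by
  obtain ⟨N, hN⟩ := exists_nat_gt ((d : ℝ) / x)
  have step : ∀ n ≥ N, (h (n + 1) : ℝ) ≤ (1 + x) * h n := by
    intro n hn
    have h1 : ((n : ℝ) + 1) * h (n + 1) ≤ (n + d) * h n := by exact_mod_cast hh n
    have h2 : (d : ℝ) ≤ x * (n + 1) := by
      have : (N : ℝ) ≤ n := by exact_mod_cast hn
      rw [div_lt_iff₀ hx] at hN
      nlinarith
    have h3 : (0 : ℝ) ≤ h n := by positivity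
    have h4 : ((n : ℝ) + 1) * h (n + 1) ≤ (n + 1) * ((1 + x) * h n) := by nlinarith
    exact le_of_mul_le_mul_left h4 (by positivity)
  filter_upwards [eventually_ge_atTop N] with n hn
  have hx' : 0 ≤ 1 + x := by linarith
  calc (h (n + 4) : ℝ) ≤ (1 + x) * h (n + 3) := step (n + 3) (by omega)
    _ ≤ (1 + x) * ((1 + x) * h (n + 2)) := by gcongr; exact step (n + 2) (by omega)
    _ ≤ (1 + x) * ((1 + x) * ((1 + x) * h (n + 1))) := by gcongr; exact step (n + 1) (by omega)
    _ ≤ (1 + x) * ((1 + x) * ((1 + x) * ((1 + x) * h n))) := by gcongr; exact step n (by omega)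
    _ = _ := by ring

theorem finrank_mono_add {k A : Type*} [Field k] [CommRing A] [IsDomain A] [Algebra k A]
    {ℬ : ℕ → Submodule k A} (hmul : ∀ m n : ℕ, ℬ m * ℬ n ≤ ℬ (m + n))
    (hfin : ∀ m : ℕ, FiniteDimensional k (ℬ m)) (m j : ℕ) (hj : ℬ j ≠ ⊥) :
    Module.finrank k (ℬ m) ≤ Module.finrank k (ℬ (j + m)) := by
  obtain ⟨s, hs, hs0⟩ := Submodule.exists_mem_ne_zero_of_ne_bot hj
  have := hfin (j + m)
  have hinj : Function.Injective (LinearMap.mulLeft k s) := fun a b h =>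
    mul_left_cancel₀ hs0 h
  calc Module.finrank k (ℬ m)
      = Module.finrank k ((ℬ m).map (LinearMap.mulLeft k s)) :=
        (Submodule.equivMapOfInjective _ hinj (ℬ m)).finrank_eq
    _ ≤ _ := by
        apply Submodule.finrank_mono
        rintro _ ⟨y, hy, rfl⟩
        exact hmul j m (Submodule.mul_mem_mul hs hy)

/-- Let `B = ⊕ B_m` be an approximable graded algebra over a field `k`. Then for every
fixed `r ∈ ℕ`, `lim_{n → ∞} dim_k B_{n+r} / dim_k B_n = 1`. -/
theorem dim_ratio_tendsto_one
    (k : Type*) {A : Type*} [Field k] [CommRing A] [IsDomain A] [Algebra k A]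
    (𝒜 : ℕ → Submodule k A) [GradedAlgebra 𝒜]
    (hB : IsApproximable k 𝒜) (r : ℕ) :
    Filter.Tendsto (fun n : ℕ =>
      (Module.finrank k (𝒜 (n + r)) : ℝ) / (Module.finrank k (𝒜 n) : ℝ))
      Filter.atTop (nhds 1) := by
  obtain ⟨-, hmul, hfin, hne, happ⟩ := hB
  obtain ⟨N, hN⟩ := eventually_atTop.1 hne
  set a : ℕ → ℕ := fun m => Module.finrank k (𝒜 m) with ha
  have mono : ∀ m m', m + N ≤ m' → a m ≤ a m' := by
    intro m m' h
    have := finrank_mono_add hmul hfin m (m' - m) (hN _ (by omega))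
    rwa [Nat.sub_add_cancel (by omega)] at this
  have powle : ∀ p n, (𝒜 p) ^ n ≤ 𝒜 (n * p) := by
    intro p n
    induction n with
    | zero =>
      rw [pow_zero, zero_mul, Submodule.one_le]
      exact SetLike.GradedOne.one_mem
    | succ n ih =>
      rw [pow_succ, Nat.succ_mul]
      exact (mul_le_mul' ih le_rfl).trans (hmul _ _)
  have main : ∀ x : ℝ, 0 < x → x ≤ 1 / 100 → ∀ᶠ m in atTop,
      (a (m + r) : ℝ) ≤ (1 + 100 * x) * a m ∧ (a m : ℝ) ≤ (1 + 100 * x) * a (m + r) := by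
    intro x hx hx1
    obtain ⟨p₀, hp₀⟩ := happ x hx
    set p := p₀ + N + r + 1 with hp
    have hl := hp₀ p (by omega)
    have hev := eventually_lt_of_lt_liminf hl
      (isBoundedUnder_of ⟨0, fun n => by positivity⟩)
    have := hfin p
    obtain ⟨d, hd⟩ := exists_macaulay (𝒜 p)
    have hst := eventually_step
      (h := fun n => Module.finrank k ((𝒜 p) ^ n : Submodule k A)) hd hx
    obtain ⟨n₁, hn₁⟩ := eventually_atTop.1 hev
    obtain ⟨n₂, hn₂⟩ := eventually_atTop.1 hst
    have big : ∀ n, n₁ ≤ n → n₂ ≤ n → (a ((n + 4) * p) : ℝ) ≤ (1 + 100 * x) * a (n * p) := by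
      intro n h1 h2
      have e1 := hn₁ (n + 4) (by omega)
      have e2 := hn₂ n h2
      have e3 : (Module.finrank k ((𝒜 p) ^ n : Submodule k A) : ℝ) ≤ a (n * p) := by
        have := hfin (n * p)
        exact_mod_cast Submodule.finrank_mono (powle p n)
      have e4 : (1 - x) * a ((n + 4) * p) ≤
          (Module.finrank k ((𝒜 p) ^ (n + 4) : Submodule k A) : ℝ) := by
        rcases Nat.eq_zero_or_pos (a ((n + 4) * p)) with h0 | h0
        · rw [h0]; simp
        · have h0' : (0 : ℝ) < a ((n + 4) * p) := by exact_mod_cast h0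
          exact ((lt_div_iff₀ h0').1 e1).le
      have e5 : (1 + x) ^ 4 ≤ (1 - x) * (1 + 100 * x) := by
        have : (1 - x) * (1 + 100 * x) - (1 + x) ^ 4 =
          x * (95 - 106 * x - 4 * x ^ 2 - x ^ 3) := by ring
        have h3 : x ^ 2 ≤ 1 := by nlinarith
        have h4 : x ^ 3 ≤ 1 := pow_le_one₀ hx.le (by linarith)
        have : 0 ≤ x * (95 - 106 * x - 4 * x ^ 2 - x ^ 3) :=
          mul_nonneg hx.le (by linarith)
        linarith
      have e6 : (1 - x) * a ((n + 4) * p) ≤ (1 - x) * ((1 + 100 * x) * a (n * p)) := by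
        calc _ ≤ _ := e4
          _ ≤ _ := e2
          _ ≤ (1 + x) ^ 4 * a (n * p) := by gcongr
          _ ≤ ((1 - x) * (1 + 100 * x)) * a (n * p) := by gcongr
          _ = _ := by ring
      exact le_of_mul_le_mul_left e6 (by linarith)
    filter_upwards [eventually_ge_atTop ((n₁ + n₂ + 1) * p)] with m hm
    have hppos : 0 < p := by omega
    have hq : n₁ + n₂ + 1 ≤ m / p := (Nat.le_div_iff_mul_le hppos).2 hm
    obtain ⟨n, hn⟩ : ∃ n, m / p = n + 1 := ⟨m / p - 1, by omega⟩
    have hb := big n (by omega) (by omega)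
    have hm1 := Nat.div_add_mod m p
    have hm2 := Nat.mod_lt m hppos
    rw [hn] at hm1
    have hm3 : m = n * p + p + m % p := by rw [← hm1]; simp; ring
    have hm4 : (n + 4) * p = n * p + 4 * p := by ring
    have l1 : (a (n * p) : ℝ) ≤ a m := by exact_mod_cast mono _ _ (by omega)
    have l2 : (a (n * p) : ℝ) ≤ a (m + r) := by exact_mod_cast mono _ _ (by omega)
    have u1 : (a m : ℝ) ≤ a ((n + 4) * p) := by exact_mod_cast mono _ _ (by omega)
    have u2 : (a (m + r) : ℝ) ≤ a ((n + 4) * p) := by exact_mod_cast mono _ _ (by omega)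
    constructor <;> nlinarith
  have apos : ∀ m, N ≤ m → (0 : ℝ) < a m := by
    intro m hm
    have := hfin m
    have : 0 < a m := Nat.pos_of_ne_zero fun h0 => hN m hm (Submodule.finrank_eq_zero.1 h0)
    exact_mod_cast this
  rw [Metric.tendsto_nhds]
  intro ε hε
  set x := min (1 / 100) (ε / 200) with hxdef
  have hx : 0 < x := by positivity
  have hxe : x ≤ ε / 200 := min_le_right _ _
  filter_upwards [main x hx (min_le_left _ _), eventually_ge_atTop N] with m hm hmN
  have p1 := apos m hmN
  have p2 := apos (m + r) (by omega)
  have q1 : (a (m + r) : ℝ) / a m ≤ 1 + 100 * x := (div_le_iff₀ p1).2 hm.1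
  have q2 : 1 - 100 * x ≤ (a (m + r) : ℝ) / a m := by
    rw [le_div_iff₀ p1]
    by_cases h : 1 - 100 * x ≤ 0
    · nlinarith
    · push Not at h
      have := mul_le_mul_of_nonneg_left hm.2 h.le
      nlinarith [mul_pos (mul_pos hx hx) p2]
  rw [Real.dist_eq, abs_lt]
  constructor <;> linarith
end
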